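/- arXiv:1511.08041 — 3 statements merged into one kernel-verified Lean document; each statement's English description precedes it below -/
import Mathlib

section
/- Let α > 0 be a non-integer, n ≥ 1, and let V be a real-valued measurable function on ℝⁿ. Then V belongs to the Kato class K_{2α}(ℝⁿ) if and only if lim_{t→0⁺} K_V(t) = 0. -/
open Real MeasureTheory Filter ENNReal
open scoped Classical

/-- The higher order Kato class `K_{2α}(ℝⁿ)`. -/
def katoClass (n : ℕ) (α : ℝ) (V : EuclideanSpace ℝ (Fin n) → ℝ) : Prop :=
  if 2 * α < n then
    Tendsto (fun δ : ℝ => ⨆ x : EuclideanSpace ℝ (Fin n),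
        ∫⁻ y in Metric.ball x δ, ENNReal.ofReal (‖x - y‖ ^ (2 * α - (n : ℝ)) * |V y|))
      (nhdsWithin 0 (Set.Ioi 0)) (nhds 0)
  else if 2 * α = (n : ℝ) then
    Tendsto (fun δ : ℝ => ⨆ x : EuclideanSpace ℝ (Fin n),
        ∫⁻ y in Metric.ball x δ, ENNReal.ofReal (Real.log (‖x - y‖ ^ (-(n : ℝ))) * |V y|))
      (nhdsWithin 0 (Set.Ioi 0)) (nhds 0)
  else
    (⨆ x : EuclideanSpace ℝ (Fin n), ∫⁻ y in Metric.ball x 1, ENNReal.ofReal |V y|) < ⊤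

/-- The comparison kernel `J(t,x)`. -/
noncomputable def Jfun (n : ℕ) (α : ℝ) (t : ℝ) (x : EuclideanSpace ℝ (Fin n)) : ℝ :=
  if 2 * α < n then min (‖x‖ ^ (2 * α - (n : ℝ))) (t ^ 2 * ‖x‖ ^ (-(n : ℝ) - 2 * α))
  else if 2 * α = (n : ℝ) then
    min (max 1 (Real.log (t * ‖x‖ ^ (-(n : ℝ))))) (t ^ 2 * ‖x‖ ^ (-2 * (n : ℝ)))
  else min (t ^ (1 - (n : ℝ) / (2 * α))) (t ^ 2 * ‖x‖ ^ (-(n : ℝ) - 2 * α))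

/-- `K_V(t) = sup_{x∈ℝⁿ} ∫_{ℝⁿ} J(t, x-y) |V(y)| dy`. -/
noncomputable def KV (n : ℕ) (α : ℝ) (V : EuclideanSpace ℝ (Fin n) → ℝ) (t : ℝ) : ℝ≥0∞ :=
  ⨆ x : EuclideanSpace ℝ (Fin n),
    ∫⁻ y, ENNReal.ofReal (Jfun n α t (x - y) * |V y|)

theorem kato_scale (n : ℕ) (p : ℝ) (r : ℝ) (hr : 0 < r) (x : EuclideanSpace ℝ (Fin n)) :
    ∫⁻ y, ENNReal.ofReal ((1 + ‖x - y‖ / r) ^ (-p)) =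
      ENNReal.ofReal (r ^ n) * ∫⁻ y : EuclideanSpace ℝ (Fin n), ENNReal.ofReal ((1 + ‖y‖) ^ (-p)) := by
  rw [lintegral_sub_left_eq_self (fun y : EuclideanSpace ℝ (Fin n) =>
    ENNReal.ofReal ((1 + ‖y‖ / r) ^ (-p))) x]
  have h := Measure.map_addHaar_smul (volume : Measure (EuclideanSpace ℝ (Fin n)))
    (inv_ne_zero hr.ne')
  have h2 : ∫⁻ y : EuclideanSpace ℝ (Fin n), ENNReal.ofReal ((1 + ‖y‖) ^ (-p))
      ∂(Measure.map (r⁻¹ • ·) volume) = ∫⁻ y : EuclideanSpace ℝ (Fin n),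
      ENNReal.ofReal ((1 + ‖y‖ / r) ^ (-p)) := by
    rw [lintegral_map (by fun_prop) (by fun_prop)]
    refine lintegral_congr fun y => ?_
    rw [norm_smul, norm_inv, Real.norm_of_nonneg hr.le, div_eq_inv_mul]
  rw [← h2, h, lintegral_smul_measure, finrank_euclideanSpace_fin, smul_eq_mul]
  congr 2
  rw [inv_pow, inv_inv, abs_of_pos (by positivity)]

theorem kato_avg (n : ℕ) (p : ℝ) (hp : (n : ℝ) < p) :
    ∃ C : ℝ≥0∞, C ≠ ⊤ ∧ ∀ r : ℝ, 0 < r → ∀ W : EuclideanSpace ℝ (Fin n) → ℝ≥0∞, Measurable W →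
      ∀ x, ∫⁻ y, ENNReal.ofReal ((1 + ‖x - y‖ / r) ^ (-p)) * W y ≤
        C * ⨆ z, ∫⁻ y in Metric.ball z r, W y := by
  have hp0 : 0 < p := lt_of_le_of_lt (Nat.cast_nonneg n) hp
  set I := ∫⁻ y : EuclideanSpace ℝ (Fin n), ENNReal.ofReal ((1 + ‖y‖) ^ (-p)) with hI
  have hIfin : I < ⊤ := finite_integral_one_add_norm (by simpa using hp)
  set v := volume (Metric.ball (0 : EuclideanSpace ℝ (Fin n)) 1) with hv
  have hv0 : v ≠ 0 := (Metric.measure_ball_pos _ _ one_pos).ne'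
  have hvt : v ≠ ⊤ := measure_ball_lt_top.ne
  have h2t : ENNReal.ofReal (2 ^ p) ≠ ⊤ := ENNReal.ofReal_ne_top
  refine ⟨ENNReal.ofReal (2 ^ p) * I / v,
    ENNReal.div_ne_top (ENNReal.mul_ne_top h2t hIfin.ne) hv0, ?_⟩
  intro r hr W hW x
  set M := ⨆ z, ∫⁻ y in Metric.ball z r, W y with hM
  set φ : EuclideanSpace ℝ (Fin n) → ℝ≥0∞ :=
    fun y => ENNReal.ofReal ((1 + ‖x - y‖ / r) ^ (-p)) with hφ
  have hφm : Measurable φ := by fun_prop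
  set R := ENNReal.ofReal (r ^ n) with hR
  have hR0 : R ≠ 0 := by rw [hR]; simp; positivity
  have hRt : R ≠ ⊤ := ENNReal.ofReal_ne_top
  have hball : ∀ y : EuclideanSpace ℝ (Fin n), volume (Metric.ball y r) = R * v := by
    intro y
    rw [Measure.addHaar_ball_of_pos _ _ hr, finrank_euclideanSpace_fin]
  have hpt : ∀ y, φ y * (R * v) ≤ ENNReal.ofReal (2 ^ p) * ∫⁻ z in Metric.ball y r, φ z := by
    intro y
    rw [← hball y, ← setLIntegral_const, ← lintegral_const_mul _ hφm]
    refine setLIntegral_mono (by fun_prop) fun z hz => ?_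
    rw [hφ]
    simp only
    rw [← ENNReal.ofReal_mul (by positivity)]
    apply ENNReal.ofReal_le_ofReal
    have h1 : ‖x - z‖ ≤ ‖x - y‖ + r := by
      have : ‖x - z‖ ≤ ‖x - y‖ + ‖y - z‖ := norm_sub_le_norm_sub_add_norm_sub x y z
      have h3 : ‖y - z‖ < r := by
        rw [← dist_eq_norm, dist_comm]; exact hz
      linarith
    have h2 : 1 + ‖x - z‖ / r ≤ 2 * (1 + ‖x - y‖ / r) := by
      have : ‖x - z‖ / r ≤ ‖x - y‖ / r + 1 := by
        rw [div_add_one hr.ne']; gcongr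
      have : 0 ≤ ‖x - y‖ / r := by positivity
      linarith
    calc (1 + ‖x - y‖ / r) ^ (-p) = 2 ^ p * (2 * (1 + ‖x - y‖ / r)) ^ (-p) := by
          rw [Real.mul_rpow (by norm_num) (by positivity), ← mul_assoc,
            ← Real.rpow_add (by norm_num)]
          simp
      _ ≤ 2 ^ p * (1 + ‖x - z‖ / r) ^ (-p) := by
          gcongr ?_ * ?_
          exact Real.rpow_le_rpow_of_nonpos (by positivity) h2 (by linarith)
  set S : Set (EuclideanSpace ℝ (Fin n) × EuclideanSpace ℝ (Fin n)) := {q | dist q.1 q.2 < r}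
  have hS : MeasurableSet S := by
    apply (isOpen_lt (by fun_prop) (by fun_prop)).measurableSet
  have key : (R * v) * ∫⁻ y, φ y * W y ≤ ENNReal.ofReal (2 ^ p) * (M * (R * I)) := by
    calc (R * v) * ∫⁻ y, φ y * W y = ∫⁻ y, (R * v) * (φ y * W y) := by
          rw [lintegral_const_mul _ (by fun_prop)]
      _ ≤ ∫⁻ y, ENNReal.ofReal (2 ^ p) *
            ∫⁻ z, S.indicator (fun q => φ q.2 * W q.1) (y, z) := by
          refine lintegral_mono fun y => ?_
          have h1 : ∫⁻ z, S.indicator (fun q => φ q.2 * W q.1) (y, z)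
              = (∫⁻ z in Metric.ball y r, φ z) * W y := by
            rw [← lintegral_mul_const _ hφm, ← lintegral_indicator measurableSet_ball]
            refine lintegral_congr fun z => ?_
            simp [Set.indicator, S, dist_comm]
          rw [h1, ← mul_assoc, ← mul_assoc]
          refine mul_le_mul' ?_ le_rfl
          rw [mul_comm]
          exact hpt y
      _ = ENNReal.ofReal (2 ^ p) * ∫⁻ y, ∫⁻ z, S.indicator (fun q => φ q.2 * W q.1) (y, z) := by
          rw [lintegral_const_mul' _ _ h2t]
      _ = ENNReal.ofReal (2 ^ p) * ∫⁻ z, ∫⁻ y, S.indicator (fun q => φ q.2 * W q.1) (y, z) := by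
          congr 1
          exact lintegral_lintegral_swap
            (f := fun y z => S.indicator (fun q => φ q.2 * W q.1) (y, z))
            (Measurable.indicator (by fun_prop) hS).aemeasurable
      _ ≤ ENNReal.ofReal (2 ^ p) * ∫⁻ z, M * φ z := by
          gcongr with z
          have h1 : ∫⁻ y, S.indicator (fun q => φ q.2 * W q.1) (y, z)
              = φ z * ∫⁻ y in Metric.ball z r, W y := by
            rw [← lintegral_const_mul _ hW, ← lintegral_indicator measurableSet_ball]
            refine lintegral_congr fun y => ?_
            simp [Set.indicator, S]
          rw [h1, mul_comm]
          gcongr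
          exact le_iSup (fun z => ∫⁻ y in Metric.ball z r, W y) z
      _ = ENNReal.ofReal (2 ^ p) * (M * (R * I)) := by
          rw [lintegral_const_mul _ hφm, hφ, kato_scale n p r hr x]
  have key2 : R * (v * ∫⁻ y, φ y * W y) ≤ R * (ENNReal.ofReal (2 ^ p) * I * M) := by
    calc _ = (R * v) * ∫⁻ y, φ y * W y := by ring
      _ ≤ _ := key
      _ = _ := by ring
  have key3 := (ENNReal.mul_le_mul_iff_right hR0 hRt).1 key2
  rw [mul_comm v] at key3
  have := (ENNReal.le_div_iff_mul_le (Or.inl hv0) (Or.inl hvt)).2 key3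
  refine this.trans (le_of_eq ?_)
  simp only [div_eq_mul_inv]; ring

/-- local quantity -/
noncomputable def katoF (n : ℕ) (V : EuclideanSpace ℝ (Fin n) → ℝ) (k : ℝ → ℝ) (r : ℝ) : ℝ≥0∞ :=
  ⨆ x : EuclideanSpace ℝ (Fin n), ∫⁻ y in Metric.ball x r, ENNReal.ofReal (k ‖x - y‖ * |V y|)

theorem kato_ae_ne (n : ℕ) (hn : 1 ≤ n) (x : EuclideanSpace ℝ (Fin n)) :
    ∀ᵐ y : EuclideanSpace ℝ (Fin n), y ≠ x := by
  have : Nonempty (Fin n) := ⟨⟨0, hn⟩⟩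
  have : Nontrivial (EuclideanSpace ℝ (Fin n)) := inferInstance
  exact measure_eq_zero_iff_ae_notMem.1 (measure_singleton x)

theorem kato_upper (n : ℕ) (hn : 1 ≤ n) (p : ℝ) (hp : (n : ℝ) < p) :
    ∃ C : ℝ≥0∞, C ≠ ⊤ ∧ ∀ (α : ℝ) (V : EuclideanSpace ℝ (Fin n) → ℝ) (_ : Measurable V)
      (k : ℝ → ℝ) (_ : Measurable k) (c r t : ℝ) (_ : 0 < r) (_ : 0 ≤ c)
      (_ : ∀ s, 0 < s → s < r → c ≤ k s)
      (_ : ∀ v : EuclideanSpace ℝ (Fin n), 0 < ‖v‖ → ‖v‖ < r → Jfun n α t v ≤ k ‖v‖)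
      (_ : ∀ v : EuclideanSpace ℝ (Fin n), r ≤ ‖v‖ → Jfun n α t v ≤ c * (r / ‖v‖) ^ p),
      KV n α V t ≤ C * katoF n V k r := by
  obtain ⟨C, hC, hA⟩ := kato_avg n p hp
  have hp0 : 0 < p := lt_of_le_of_lt (Nat.cast_nonneg n) hp
  refine ⟨1 + ENNReal.ofReal (2 ^ p) * C, by finiteness, ?_⟩
  intro α V hV k hk c r t hr hc hck hJ1 hJ2
  have hW : Measurable fun y => ENNReal.ofReal (c * |V y|) := by fun_prop
  have hM : (⨆ z, ∫⁻ y in Metric.ball z r, ENNReal.ofReal (c * |V y|)) ≤ katoF n V k r := by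
    refine iSup_mono fun z => ?_
    refine lintegral_mono_ae ?_
    filter_upwards [ae_restrict_of_ae (kato_ae_ne n hn z),
      ae_restrict_mem measurableSet_ball] with y hy hyr
    apply ENNReal.ofReal_le_ofReal
    gcongr
    apply hck
    · rw [norm_pos_iff, sub_ne_zero]; exact hy.symm
    · rw [← dist_eq_norm, dist_comm]; exact hyr
  refine iSup_le fun x => ?_
  have hpt : ∀ᵐ y : EuclideanSpace ℝ (Fin n), ENNReal.ofReal (Jfun n α t (x - y) * |V y|) ≤
      (Metric.ball x r).indicator (fun y => ENNReal.ofReal (k ‖x - y‖ * |V y|)) y +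
      ENNReal.ofReal (2 ^ p) *
        (ENNReal.ofReal ((1 + ‖x - y‖ / r) ^ (-p)) * ENNReal.ofReal (c * |V y|)) := by
    filter_upwards [kato_ae_ne n hn x] with y hy
    have hpos : 0 < ‖x - y‖ := by rw [norm_pos_iff, sub_ne_zero]; exact hy.symm
    by_cases h : ‖x - y‖ < r
    · refine le_add_right ?_
      rw [Set.indicator_of_mem (by rw [Metric.mem_ball, dist_comm, dist_eq_norm]; exact h)]
      apply ENNReal.ofReal_le_ofReal
      gcongr
      exact hJ1 _ hpos h
    · refine le_add_left ?_
      rw [← ENNReal.ofReal_mul (by positivity), ← ENNReal.ofReal_mul (by positivity)]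
      apply ENNReal.ofReal_le_ofReal
      push Not at h
      have h3 : (r / ‖x - y‖) ^ p ≤ 2 ^ p * (1 + ‖x - y‖ / r) ^ (-p) := by
        rw [Real.rpow_neg (by positivity), ← div_eq_mul_inv,
          ← Real.div_rpow (by norm_num) (by positivity)]
        apply Real.rpow_le_rpow (by positivity) _ hp0.le
        rw [div_le_div_iff₀ hpos (by positivity)]
        field_simp
        linarith
      calc Jfun n α t (x - y) * |V y| ≤ c * (r / ‖x - y‖) ^ p * |V y| := by
            gcongr; exact hJ2 _ h
        _ ≤ c * (2 ^ p * (1 + ‖x - y‖ / r) ^ (-p)) * |V y| := by gcongr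
        _ = _ := by ring
  calc _ ≤ _ := lintegral_mono_ae hpt
    _ = (∫⁻ y in Metric.ball x r, ENNReal.ofReal (k ‖x - y‖ * |V y|)) +
        ENNReal.ofReal (2 ^ p) * ∫⁻ y, (ENNReal.ofReal ((1 + ‖x - y‖ / r) ^ (-p)) *
          ENNReal.ofReal (c * |V y|)) := by
        rw [lintegral_add_right _ (by fun_prop), lintegral_indicator measurableSet_ball,
          lintegral_const_mul _ (by fun_prop)]
    _ ≤ katoF n V k r + ENNReal.ofReal (2 ^ p) * (C * katoF n V k r) := by
        gcongr
        · exact le_iSup (fun x => ∫⁻ y in Metric.ball x r, ENNReal.ofReal (k ‖x - y‖ * |V y|)) x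
        · exact (hA r hr _ hW x).trans (by gcongr)
    _ = _ := by ring

theorem kato_lower (n : ℕ) (hn : 1 ≤ n) (α : ℝ) (V : EuclideanSpace ℝ (Fin n) → ℝ)
    (k : ℝ → ℝ) (a r t : ℝ) (ha : 0 ≤ a)
    (h : ∀ v : EuclideanSpace ℝ (Fin n), 0 < ‖v‖ → ‖v‖ < r → k ‖v‖ ≤ a * Jfun n α t v) :
    katoF n V k r ≤ ENNReal.ofReal a * KV n α V t := by
  refine iSup_le fun x => ?_
  calc _ ≤ ∫⁻ y in Metric.ball x r, ENNReal.ofReal a *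
        ENNReal.ofReal (Jfun n α t (x - y) * |V y|) := by
        refine lintegral_mono_ae ?_
        filter_upwards [ae_restrict_of_ae (kato_ae_ne n hn x),
          ae_restrict_mem measurableSet_ball] with y hy hyr
        rw [← ENNReal.ofReal_mul ha, ← mul_assoc]
        apply ENNReal.ofReal_le_ofReal
        gcongr
        apply h
        · rw [norm_pos_iff, sub_ne_zero]; exact hy.symm
        · rw [← dist_eq_norm, dist_comm]; exact hyr
    _ ≤ ∫⁻ y, ENNReal.ofReal a * ENNReal.ofReal (Jfun n α t (x - y) * |V y|) :=
        setLIntegral_le_lintegral _ _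
    _ = ENNReal.ofReal a * ∫⁻ y, ENNReal.ofReal (Jfun n α t (x - y) * |V y|) :=
        lintegral_const_mul' _ _ ENNReal.ofReal_ne_top
    _ ≤ _ := by
        gcongr
        exact le_iSup (fun x => ∫⁻ y, ENNReal.ofReal (Jfun n α t (x - y) * |V y|)) x

theorem kato_tendsto_rpow (a : ℝ) (ha : 0 < a) :
    Tendsto (fun t : ℝ => t ^ a) (nhdsWithin 0 (Set.Ioi 0)) (nhdsWithin 0 (Set.Ioi 0)) := by
  refine tendsto_nhdsWithin_iff.2 ⟨?_, ?_⟩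
  · have h := (Real.continuousAt_rpow_const 0 a (Or.inr ha.le)).tendsto
    rw [Real.zero_rpow ha.ne'] at h
    exact h.mono_left nhdsWithin_le_nhds
  · filter_upwards [self_mem_nhdsWithin] with t ht
    exact Real.rpow_pos_of_pos ht a

theorem kato_transfer (f g : ℝ → ℝ≥0∞) (C : ℝ≥0∞) (hC : C ≠ ⊤) (a : ℝ) (ha : 0 < a)
    (hf : Tendsto f (nhdsWithin 0 (Set.Ioi 0)) (nhds 0))
    (h : ∀ᶠ t in nhdsWithin 0 (Set.Ioi 0), g t ≤ C * f (t ^ a)) :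
    Tendsto g (nhdsWithin 0 (Set.Ioi 0)) (nhds 0) := by
  have h1 : Tendsto (fun t => C * f (t ^ a)) (nhdsWithin 0 (Set.Ioi 0)) (nhds 0) := by
    have := ENNReal.Tendsto.const_mul (a := C) (hf.comp (kato_tendsto_rpow a ha)) (Or.inr hC)
    simpa using this
  exact tendsto_of_tendsto_of_tendsto_of_le_of_le' tendsto_const_nhds h1
    (Eventually.of_forall fun _ => zero_le) h

theorem kato_alg (n : ℕ) (α r s : ℝ) (hr : 0 < r) (hs : 0 < s) :
    (r ^ (2 * α)) ^ 2 * s ^ (-(n : ℝ) - 2 * α)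
      = r ^ (2 * α - (n : ℝ)) * (r / s) ^ ((n : ℝ) + 2 * α) := by
  rw [Real.div_rpow hr.le hs.le, ← mul_div_assoc, ← Real.rpow_add hr, div_eq_mul_inv,
    ← Real.rpow_neg hs.le, ← Real.rpow_natCast, ← Real.rpow_mul hr.le]
  congr 2 <;> push_cast <;> ring

theorem kato_case1 (n : ℕ) (hn : 1 ≤ n) (α : ℝ) (hα : 0 < α) (h : 2 * α < n)
    (V : EuclideanSpace ℝ (Fin n) → ℝ) (hV : Measurable V) :
    Tendsto (katoF n V fun s => s ^ (2 * α - (n : ℝ))) (nhdsWithin 0 (Set.Ioi 0)) (nhds 0) ↔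
      Tendsto (fun t : ℝ => KV n α V t) (nhdsWithin 0 (Set.Ioi 0)) (nhds 0) := by
  constructor
  · intro hF
    obtain ⟨C, hC, hU⟩ := kato_upper n hn ((n : ℝ) + 2 * α) (by linarith)
    refine kato_transfer _ _ C hC (2 * α)⁻¹ (by positivity) hF ?_
    filter_upwards [self_mem_nhdsWithin] with t ht
    have ht : 0 < t := ht
    set r := t ^ (2 * α)⁻¹ with hrdef
    have hr : 0 < r := by positivity
    have htr : t = r ^ (2 * α) := by
      rw [hrdef, ← Real.rpow_mul ht.le, inv_mul_cancel₀ (by positivity), Real.rpow_one]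
    refine hU α V hV _ (by fun_prop) (r ^ (2 * α - (n : ℝ))) r t hr (by positivity) ?_ ?_ ?_
    · intro s hs hsr
      exact Real.rpow_le_rpow_of_nonpos hs hsr.le (by linarith)
    · intro v hv hvr
      rw [Jfun, if_pos h]
      exact min_le_left _ _
    · intro v hv
      rw [Jfun, if_pos h, htr, kato_alg n α r _ hr (hr.trans_le hv)]
      exact min_le_right _ _
  · intro hK
    refine kato_transfer _ _ (ENNReal.ofReal 1) ENNReal.ofReal_ne_top (2 * α) (by positivity) hK ?_
    filter_upwards [self_mem_nhdsWithin] with r hr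
    have hr : 0 < r := hr
    refine kato_lower n hn α V _ 1 r _ zero_le_one ?_
    intro v hv hvr
    rw [Jfun, if_pos h, one_mul]
    refine le_min le_rfl ?_
    calc ‖v‖ ^ (2 * α - (n : ℝ)) = (‖v‖ ^ (2 * α)) ^ 2 * ‖v‖ ^ (-(n : ℝ) - 2 * α) := by
          rw [kato_alg n α _ _ hv hv, div_self hv.ne', Real.one_rpow, mul_one]
      _ ≤ _ := by gcongr

theorem kato_case2 (n : ℕ) (hn : 1 ≤ n) (α : ℝ) (h : 2 * α = n)
    (V : EuclideanSpace ℝ (Fin n) → ℝ) (hV : Measurable V) :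
    Tendsto (katoF n V fun s => Real.log (s ^ (-(n : ℝ)))) (nhdsWithin 0 (Set.Ioi 0)) (nhds 0) ↔
      Tendsto (fun t : ℝ => KV n α V t) (nhdsWithin 0 (Set.Ioi 0)) (nhds 0) := by
  have hn0 : (0 : ℝ) < n := by exact_mod_cast hn
  have hJ : ∀ t v, Jfun n α t v = min (max 1 (Real.log (t * ‖v‖ ^ (-(n : ℝ)))))
      (t ^ 2 * ‖v‖ ^ (-2 * (n : ℝ))) := by
    intro t v
    rw [Jfun, if_neg (by rw [h]; exact lt_irrefl _), if_pos h]
  constructor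
  · intro hF
    obtain ⟨C, hC, hU⟩ := kato_upper n hn (2 * (n : ℝ)) (by linarith)
    refine kato_transfer _ _ C hC (n : ℝ)⁻¹ (by positivity) hF ?_
    filter_upwards [self_mem_nhdsWithin,
      nhdsWithin_le_nhds (Iio_mem_nhds (Real.exp_pos (-1)))] with t ht hte
    have ht : 0 < t := ht
    have hte : t < Real.exp (-1) := hte
    have hlt : Real.log t < -1 := by
      rw [← Real.log_exp (-1)]; exact Real.log_lt_log ht hte
    set r := t ^ (n : ℝ)⁻¹ with hrdef
    have hr : 0 < r := by positivity
    have htr : t = r ^ (n : ℝ) := by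
      rw [hrdef, ← Real.rpow_mul ht.le, inv_mul_cancel₀ (by positivity), Real.rpow_one]
    have hlr : Real.log t = n * Real.log r := by rw [htr, Real.log_rpow hr]
    have hk : ∀ s, 0 < s → s < r → 1 ≤ Real.log (s ^ (-(n : ℝ))) := by
      intro s hs hsr
      rw [Real.log_rpow hs]
      have : Real.log s < Real.log r := Real.log_lt_log hs hsr
      nlinarith
    refine hU α V hV (fun s => Real.log (s ^ (-(n : ℝ)))) (by fun_prop) 1 r t hr (by positivity)
      hk ?_ ?_
    · intro v hv hvr
      rw [hJ]
      refine (min_le_left _ _).trans (max_le (hk _ hv hvr) ?_)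
      rw [Real.log_mul ht.ne' (by positivity)]
      linarith
    · intro v hv
      have hv0 : 0 < ‖v‖ := hr.trans_le hv
      rw [hJ]
      refine (min_le_right _ _).trans (le_of_eq ?_)
      rw [one_mul, Real.div_rpow hr.le hv0.le, div_eq_mul_inv, ← Real.rpow_neg hv0.le, htr,
        ← Real.rpow_natCast, ← Real.rpow_mul hr.le]
      congr 2 <;> push_cast <;> ring
  · intro hK
    refine kato_transfer _ _ (ENNReal.ofReal 2) ENNReal.ofReal_ne_top ((n : ℝ) / 2)
      (by positivity) hK ?_
    filter_upwards [self_mem_nhdsWithin] with r hr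
    have hr : 0 < r := hr
    refine kato_lower n hn α V _ 2 r _ zero_le_two ?_
    intro v hv hvr
    rw [hJ]
    set t := r ^ ((n : ℝ) / 2) with htdef
    have ht : 0 < t := by positivity
    have hlog : Real.log (‖v‖ ^ (-(n : ℝ))) ≤ 2 * Real.log (t * ‖v‖ ^ (-(n : ℝ))) := by
      rw [Real.log_mul ht.ne' (by positivity), Real.log_rpow hv, htdef, Real.log_rpow hr]
      have : Real.log ‖v‖ < Real.log r := Real.log_lt_log hv hvr
      nlinarith
    have h2 : t ^ 2 * ‖v‖ ^ (-2 * (n : ℝ)) = (t * ‖v‖ ^ (-(n : ℝ))) ^ 2 := by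
      rw [mul_pow, ← Real.rpow_natCast (‖v‖ ^ (-(n : ℝ))), ← Real.rpow_mul hv.le]
      congr 2; push_cast; ring
    rw [h2]
    set u := t * ‖v‖ ^ (-(n : ℝ)) with hu
    have hu0 : 0 < u := by positivity
    have h3 : Real.log u ≤ min (max 1 (Real.log u)) (u ^ 2) := by
      refine le_min (le_max_right _ _) ?_
      have := Real.log_le_sub_one_of_pos hu0
      nlinarith [sq_nonneg (u - 1)]
    linarith

theorem kato_const (n : ℕ) (V : EuclideanSpace ℝ (Fin n) → ℝ) (c r : ℝ) (hc : 0 ≤ c) :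
    katoF n V (fun _ => c) r = ENNReal.ofReal c *
      ⨆ x : EuclideanSpace ℝ (Fin n), ∫⁻ y in Metric.ball x r, ENNReal.ofReal |V y| := by
  rw [katoF, ENNReal.mul_iSup]
  congr 1
  ext x
  rw [← lintegral_const_mul' _ _ ENNReal.ofReal_ne_top]
  simp only [ENNReal.ofReal_mul hc]

theorem kato_case3 (n : ℕ) (hn : 1 ≤ n) (α : ℝ) (hα : 0 < α) (h : (n : ℝ) < 2 * α)
    (V : EuclideanSpace ℝ (Fin n) → ℝ) (hV : Measurable V) :
    (⨆ x : EuclideanSpace ℝ (Fin n), ∫⁻ y in Metric.ball x 1, ENNReal.ofReal |V y|) < ⊤ ↔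
      Tendsto (fun t : ℝ => KV n α V t) (nhdsWithin 0 (Set.Ioi 0)) (nhds 0) := by
  have hJ : ∀ r, 0 < r → ∀ v, 0 < ‖v‖ → Jfun n α (r ^ (2 * α)) v = min (r ^ (2 * α - (n : ℝ)))
      (r ^ (2 * α - (n : ℝ)) * (r / ‖v‖) ^ ((n : ℝ) + 2 * α)) := by
    intro r hr v hv
    rw [Jfun, if_neg (by linarith), if_neg (by linarith), kato_alg n α r _ hr hv,
      ← Real.rpow_mul hr.le]
    congr 2
    field_simp
  constructor
  · intro hM
    obtain ⟨C, hC, hU⟩ := kato_upper n hn ((n : ℝ) + 2 * α) (by linarith)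
    set M := ⨆ x : EuclideanSpace ℝ (Fin n), ∫⁻ y in Metric.ball x 1, ENNReal.ofReal |V y|
    have hf : Tendsto (fun r : ℝ => ENNReal.ofReal (r ^ (2 * α - (n : ℝ))))
        (nhdsWithin 0 (Set.Ioi 0)) (nhds 0) := by
      have h1 := (kato_tendsto_rpow (2 * α - n) (by linarith)).mono_right nhdsWithin_le_nhds
      simpa using ENNReal.tendsto_ofReal h1
    refine kato_transfer _ _ (C * M) (ENNReal.mul_ne_top hC hM.ne) (2 * α)⁻¹ (by positivity) hf ?_
    filter_upwards [self_mem_nhdsWithin, nhdsWithin_le_nhds (Iio_mem_nhds one_pos)] with t ht ht1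
    have ht : 0 < t := ht
    have ht1 : t < 1 := ht1
    set r := t ^ (2 * α)⁻¹ with hrdef
    have hr : 0 < r := by positivity
    have hr1 : r ≤ 1 := Real.rpow_le_one ht.le ht1.le (by positivity)
    have htr : t = r ^ (2 * α) := by
      rw [hrdef, ← Real.rpow_mul ht.le, inv_mul_cancel₀ (by positivity), Real.rpow_one]
    have := hU α V hV (fun _ => r ^ (2 * α - (n : ℝ))) measurable_const
      (r ^ (2 * α - (n : ℝ))) r t hr (by positivity) (fun _ _ _ => le_rfl) ?_ ?_
    · refine this.trans ?_
      rw [kato_const n V _ _ (by positivity), mul_assoc, mul_comm M]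
      gcongr
      refine iSup_mono fun x => ?_
      exact lintegral_mono_set (Metric.ball_subset_ball hr1)
    · intro v hv hvr
      rw [htr, hJ r hr v hv]
      exact min_le_left _ _
    · intro v hv
      rw [htr, hJ r hr v (hr.trans_le hv)]
      exact min_le_right _ _
  · intro hK
    obtain ⟨t, ht, hKt⟩ : ∃ t : ℝ, 0 < t ∧ KV n α V t < ⊤ := by
      have h1 : ∀ᶠ t in nhdsWithin (0 : ℝ) (Set.Ioi 0), KV n α V t < ⊤ :=
        hK.eventually (Iio_mem_nhds ENNReal.zero_lt_top)
      obtain ⟨t, h2, h3⟩ := (h1.and self_mem_nhdsWithin).exists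
      exact ⟨t, h3, h2⟩
    set r := t ^ (2 * α)⁻¹ with hrdef
    have hr : 0 < r := by positivity
    have htr : t = r ^ (2 * α) := by
      rw [hrdef, ← Real.rpow_mul ht.le, inv_mul_cancel₀ (by positivity), Real.rpow_one]
    have hc : 0 < r ^ (2 * α - (n : ℝ)) := by positivity
    have hL := kato_lower n hn α V (fun _ => r ^ (2 * α - (n : ℝ))) 1 r t zero_le_one ?_
    · rw [kato_const n V _ _ hc.le] at hL
      have hfin : (⨆ x : EuclideanSpace ℝ (Fin n),
          ∫⁻ y in Metric.ball x r, ENNReal.ofReal |V y|) ≠ ⊤ := by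
        intro htop
        rw [htop, ENNReal.mul_top (by simpa using hc)] at hL
        have : ENNReal.ofReal 1 * KV n α V t < ⊤ := ENNReal.mul_lt_top ENNReal.ofReal_lt_top hKt
        exact absurd hL (not_le.2 this)
      obtain ⟨C, hC, hA⟩ := kato_avg n ((n : ℝ) + 2 * α) (by linarith)
      set p := (n : ℝ) + 2 * α with hp
      have hp0 : 0 < p := by positivity
      refine lt_of_le_of_lt (b := ENNReal.ofReal ((1 + 1 / r) ^ p) * (C * ⨆ x : EuclideanSpace ℝ (Fin n),
          ∫⁻ y in Metric.ball x r, ENNReal.ofReal |V y|)) (iSup_le fun x => ?_) ?_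
      · refine le_trans ?_ (mul_le_mul' le_rfl (hA r hr (fun y => ENNReal.ofReal |V y|) (by fun_prop) x))
        rw [← lintegral_const_mul' _ _ ENNReal.ofReal_ne_top]
        refine le_trans ?_ (setLIntegral_le_lintegral (Metric.ball x 1) _)
        refine setLIntegral_mono (by fun_prop) fun y hy => ?_
        rw [← mul_assoc, ← ENNReal.ofReal_mul (by positivity)]
        refine le_mul_of_one_le_left' ?_
        rw [ENNReal.one_le_ofReal, Real.rpow_neg (by positivity), ← div_eq_mul_inv,
          one_le_div (by positivity)]
        have hy1 : ‖x - y‖ ≤ 1 := by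
          rw [← dist_eq_norm, dist_comm]; exact (Metric.mem_ball.1 hy).le
        gcongr
      · exact ENNReal.mul_lt_top ENNReal.ofReal_lt_top
          (ENNReal.mul_lt_top hC.lt_top hfin.lt_top)
    · intro v hv hvr
      rw [htr, hJ r hr v hv, one_mul]
      refine le_min le_rfl ?_
      refine le_mul_of_one_le_right hc.le ?_
      exact Real.one_le_rpow ((one_le_div hv).2 hvr.le) (by positivity)

/-- for non-integer `α > 0`, a real-valued measurable `V` belongs to the Kato
class `K_{2α}(ℝⁿ)` if and only if `K_V(t) → 0` as `t → 0⁺`. -/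
theorem katoClass_iff_KV_tendsto_zero (n : ℕ) (hn : 1 ≤ n) (α : ℝ) (hα : 0 < α)
    (hαnotint : ∀ k : ℕ, α ≠ k) (V : EuclideanSpace ℝ (Fin n) → ℝ) (hVmeas : Measurable V) :
    katoClass n α V ↔
      Tendsto (fun t : ℝ => KV n α V t) (nhdsWithin 0 (Set.Ioi 0)) (nhds 0) := by
  rw [katoClass]
  split_ifs with h1 h2
  · exact kato_case1 n hn α hα h1 V hVmeas
  · exact kato_case2 n hn α h2 V hVmeas
  · exact kato_case3 n hn α hα (lt_of_le_of_ne (not_lt.1 h1) (Ne.symm h2)) V hVmeas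
end

section
/- Let α > 0 and n ≥ 1. There exists a constant C₂ > 0, depending only on n and α, such that for every μ > 0 and every x ∈ ℝⁿ \ {0}: ∫₀^∞ e^{-μ t} I(t,x) dt ≤ C₂ J(μ^{-1}, x). -/
open Real MeasureTheory
open scoped Classical

/-- `I(t,x) = min(t·|x|^{-(n+2α)}, t^{-n/(2α)})`  (with the convention that at `x = 0` only the
second, finite, term is kept, since `|0|^{-(n+2α)} = +∞`). -/
noncomputable def Ifun (n : ℕ) (α : ℝ) (t : ℝ) (x : EuclideanSpace ℝ (Fin n)) : ℝ :=
  if x = 0 then t ^ (-(n : ℝ) / (2 * α))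
  else min (t * ‖x‖ ^ (-((n : ℝ) + 2 * α))) (t ^ (-(n : ℝ) / (2 * α)))

lemma aux_mono (f g : ℝ → ℝ) (c : ℝ) (hf : ∀ t, 0 < t → 0 ≤ f t) (hfg : ∀ t, 0 < t → f t ≤ g t)
    (hg : IntegrableOn g (Set.Ioi 0)) (hc : ∫ t in Set.Ioi (0:ℝ), g t ≤ c) :
    ∫ t in Set.Ioi (0:ℝ), f t ≤ c := by
  refine le_trans (integral_mono_of_nonneg ?_ hg ?_) hc
  · filter_upwards [ae_restrict_mem measurableSet_Ioi] with t ht using hf t ht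
  · filter_upwards [ae_restrict_mem measurableSet_Ioi] with t ht using hfg t ht

lemma aux_nonneg (b μ R t : ℝ) (hR : 0 < R) (ht : 0 < t) :
    0 ≤ rexp (-μ * t) * min (t * R ^ (-b-1)) (t ^ (-b)) := by positivity

lemma aux_gamma (a μ : ℝ) (ha : 0 < a) (hμ : 0 < μ) :
    IntegrableOn (fun t : ℝ => t ^ (a-1) * rexp (-(μ * t))) (Set.Ioi 0) ∧
    ∫ t in Set.Ioi (0:ℝ), t ^ (a-1) * rexp (-(μ * t)) = (1/μ) ^ a * Real.Gamma a := by
  have h := Real.integral_rpow_mul_exp_neg_mul_Ioi ha hμ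
  refine ⟨?_, h⟩
  apply Integrable.of_integral_ne_zero
  rw [h]
  have := Real.Gamma_pos_of_pos ha
  positivity

lemma lemA (b μ R : ℝ) (hμ : 0 < μ) (hR : 0 < R) :
    ∫ t in Set.Ioi (0:ℝ), rexp (-μ * t) * min (t * R ^ (-b-1)) (t ^ (-b))
      ≤ μ⁻¹ ^ 2 * R ^ (-b-1) := by
  obtain ⟨h1, h2⟩ := aux_gamma 2 μ two_pos hμ
  refine aux_mono _ (fun t => R ^ (-b-1) * (t ^ ((2:ℝ)-1) * rexp (-(μ * t)))) _
    (fun t ht => aux_nonneg b μ R t hR ht) ?_ (h1.const_mul _) ?_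
  · intro t ht
    have e : t ^ ((2:ℝ)-1) = t := by norm_num
    simp only [e]
    calc _ ≤ rexp (-μ * t) * (t * R ^ (-b-1)) := by gcongr; exact min_le_left _ _
      _ = _ := by rw [neg_mul]; ring
  · rw [integral_const_mul, h2, Real.Gamma_two]
    apply le_of_eq
    norm_num
    ring

lemma lemC (b μ R : ℝ) (hb : b < 1) (hμ : 0 < μ) (hR : 0 < R) :
    ∫ t in Set.Ioi (0:ℝ), rexp (-μ * t) * min (t * R ^ (-b-1)) (t ^ (-b))
      ≤ Real.Gamma (1-b) * μ⁻¹ ^ (1-b) := by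
  obtain ⟨h1, h2⟩ := aux_gamma (1-b) μ (by linarith) hμ
  refine aux_mono _ _ _ (fun t ht => aux_nonneg b μ R t hR ht) ?_ h1 ?_
  · intro t ht
    have e : (1 - b - 1) = -b := by ring
    simp only [e]
    calc _ ≤ rexp (-μ * t) * (t ^ (-b)) := by gcongr; exact min_le_right _ _
      _ = _ := by rw [neg_mul]; ring
  · rw [h2]
    apply le_of_eq
    rw [one_div]; ring

lemma aux_lin (c R : ℝ) (hR : 0 < R) :
    IntegrableOn ((Set.Ioc 0 R).indicator (fun t : ℝ => t * c)) (Set.Ioi 0) ∧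
    ∫ t in Set.Ioi (0:ℝ), (Set.Ioc 0 R).indicator (fun t : ℝ => t * c) t = R^2/2 * c := by
  constructor
  · refine ((integrable_indicator_iff measurableSet_Ioc).2 ?_).integrableOn
    exact (Continuous.integrableOn_Icc (by fun_prop)).mono_set Set.Ioc_subset_Icc_self
  · rw [setIntegral_indicator measurableSet_Ioc, Set.inter_eq_right.2 Set.Ioc_subset_Ioi_self,
      ← intervalIntegral.integral_of_le hR.le, intervalIntegral.integral_mul_const, integral_id]
    ring

lemma lemB (b μ R : ℝ) (hb : 1 < b) (hμ : 0 < μ) (hR : 0 < R) :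
    ∫ t in Set.Ioi (0:ℝ), rexp (-μ * t) * min (t * R ^ (-b-1)) (t ^ (-b))
      ≤ (1/2 + 1/(b-1)) * R ^ (1-b) := by
  obtain ⟨h1, h2⟩ := aux_lin (R ^ (-b-1)) R hR
  have h3 : Integrable ((Set.Ioi R).indicator (fun t : ℝ => t ^ (-b))) :=
    (integrable_indicator_iff measurableSet_Ioi).2
      (integrableOn_Ioi_rpow_of_lt (by linarith) hR)
  refine aux_mono _ (fun t => (Set.Ioc 0 R).indicator (fun t : ℝ => t * R ^ (-b-1)) t +
    (Set.Ioi R).indicator (fun t : ℝ => t ^ (-b)) t) _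
    (fun t ht => aux_nonneg b μ R t hR ht) ?_ (h1.add h3.integrableOn) ?_
  · intro t ht
    have he : rexp (-μ * t) ≤ 1 := Real.exp_le_one_iff.2 (by nlinarith [mul_pos hμ ht])
    have h0 : 0 ≤ min (t * R ^ (-b-1)) (t ^ (-b)) := by positivity
    refine (mul_le_of_le_one_left h0 he).trans ?_
    by_cases h : t ≤ R
    · simp [Set.indicator, ht, h, not_lt.2 h]
    · simp [Set.indicator, h, not_le.1 h]
  · rw [integral_add h1 h3.integrableOn, h2, setIntegral_indicator measurableSet_Ioi,
      Set.inter_eq_right.2 (Set.Ioi_subset_Ioi hR.le), integral_Ioi_rpow_of_lt (by linarith) hR]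
    apply le_of_eq
    have e1 : R ^ (1-b) = R^2 * R ^ (-b-1) := by
      rw [← Real.rpow_natCast, ← Real.rpow_add hR]; congr 1; push_cast; ring
    have e2 : -b+1 = -(b-1) := by ring
    have e3 : R ^ (-b+1) = R ^ (1-b) := by congr 1; ring
    have : b - 1 ≠ 0 := by linarith
    rw [e3, e2, neg_div_neg_eq, add_mul]
    congr 1
    · rw [e1]; ring
    · ring

lemma lemD (μ R : ℝ) (hμ : 0 < μ) (hR : 0 < R) :
    ∫ t in Set.Ioi (0:ℝ), rexp (-μ * t) * min (t * R ^ (-(1:ℝ)-1)) (t ^ (-(1:ℝ)))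
      ≤ 3 * max 1 (Real.log (μ⁻¹ * R⁻¹)) := by
  obtain ⟨h1, h2⟩ := aux_lin (R ^ (-(1:ℝ)-1)) R hR
  obtain ⟨h5, h6⟩ := aux_gamma 1 μ one_pos hμ
  set M := max R μ⁻¹ with hM
  have hRM : R ≤ M := le_max_left _ _
  have hMp : 0 < M := hR.trans_le hRM
  have hii : IntervalIntegrable (fun t : ℝ => t⁻¹) volume R M :=
    by
    refine ContinuousOn.intervalIntegrable_of_Icc hRM (ContinuousOn.inv₀ continuousOn_id ?_)
    exact fun t ht => (hR.trans_le ht.1).ne'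
  have h3 : Integrable ((Set.Ioc R M).indicator (fun t : ℝ => t⁻¹)) :=
    (integrable_indicator_iff measurableSet_Ioc).2
      ((intervalIntegrable_iff_integrableOn_Ioc_of_le hRM).1 hii)
  refine aux_mono _ (fun t => ((Set.Ioc 0 R).indicator (fun t : ℝ => t * R ^ (-(1:ℝ)-1)) t +
    (Set.Ioc R M).indicator (fun t : ℝ => t⁻¹) t) + μ * (t ^ ((1:ℝ)-1) * rexp (-(μ * t)))) _
    (fun t ht => aux_nonneg 1 μ R t hR ht) ?_ ((h1.add h3.integrableOn).add (h5.const_mul _)) ?_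
  · intro t ht
    have he : rexp (-μ * t) ≤ 1 := Real.exp_le_one_iff.2 (by nlinarith [mul_pos hμ ht])
    have h0 : 0 ≤ min (t * R ^ (-(1:ℝ)-1)) (t ^ (-(1:ℝ))) := by positivity
    have hl := (mul_le_of_le_one_left h0 he)
    have hp : 0 ≤ μ * (t ^ ((1:ℝ)-1) * rexp (-(μ * t))) := by positivity
    by_cases h : t ≤ R
    · have e1 : (Set.Ioc 0 R).indicator (fun t : ℝ => t * R ^ (-(1:ℝ)-1)) t = t * R ^ (-(1:ℝ)-1) :=
        Set.indicator_of_mem (show t ∈ Set.Ioc 0 R from ⟨ht, h⟩) _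
      have e2 : (Set.Ioc R M).indicator (fun t : ℝ => t⁻¹) t = 0 :=
        Set.indicator_of_notMem (fun h' => absurd h'.1 (not_lt.2 h)) _
      simp only [e1, e2]
      refine (hl.trans (min_le_left _ _)).trans ?_
      rw [add_zero]
      exact le_add_of_nonneg_right hp
    · have e1 : (Set.Ioc 0 R).indicator (fun t : ℝ => t * R ^ (-(1:ℝ)-1)) t = 0 :=
        Set.indicator_of_notMem (fun h' => h h'.2) _
      have hm := min_le_right (t * R ^ (-(1:ℝ)-1)) (t ^ (-(1:ℝ)))
      by_cases h' : t ≤ M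
      · have e2 : (Set.Ioc R M).indicator (fun t : ℝ => t⁻¹) t = t⁻¹ :=
          Set.indicator_of_mem (show t ∈ Set.Ioc R M from ⟨not_le.1 h, h'⟩) _
        simp only [e1, e2]
        refine (hl.trans hm).trans ?_
        rw [Real.rpow_neg_one, zero_add]
        exact le_add_of_nonneg_right hp
      · have e2 : (Set.Ioc R M).indicator (fun t : ℝ => t⁻¹) t = 0 :=
          Set.indicator_of_notMem (fun h'' => h' h''.2) _
        simp only [e1, e2]
        have : t⁻¹ ≤ μ := inv_le_of_inv_le₀ hμ ((le_max_right _ _).trans (not_le.1 h').le)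
        rw [Real.rpow_neg_one] at *
        rw [sub_self, Real.rpow_zero, one_mul, neg_mul, zero_add, zero_add, mul_comm]
        gcongr
        exact hm.trans this
  · have h13 : IntegrableOn (fun t => (Set.Ioc 0 R).indicator (fun t : ℝ => t * R ^ (-(1:ℝ)-1)) t +
      (Set.Ioc R M).indicator (fun t : ℝ => t⁻¹) t) (Set.Ioi 0) := h1.add h3.integrableOn
    rw [integral_add h13 (h5.const_mul _), integral_add h1 h3.integrableOn,
      h2, integral_const_mul, h6, setIntegral_indicator measurableSet_Ioc,
      Set.inter_eq_right.2 (Set.Ioc_subset_Ioi_self.trans (Set.Ioi_subset_Ioi hR.le)),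
      ← intervalIntegral.integral_of_le hRM, integral_inv_of_pos hR hMp]
    have e1 : R^2 / 2 * R ^ (-(1:ℝ)-1) = 1/2 := by
      have : R ^ (-(1:ℝ)-1) = (R^2)⁻¹ := by
        rw [← Real.rpow_natCast, ← Real.rpow_neg hR.le]; congr 1; norm_num
      rw [this]; field_simp
    have e2 : μ * ((1/μ)^(1:ℝ) * Real.Gamma 1) = 1 := by
      rw [Real.Gamma_one, Real.rpow_one]; field_simp
    rw [e1, e2]
    have e3 : Real.log (M / R) ≤ max 1 (Real.log (μ⁻¹ * R⁻¹)) := by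
      rcases max_choice R μ⁻¹ with h | h
      · rw [hM, h, div_self hR.ne', Real.log_one]; exact zero_le_one.trans (le_max_left _ _)
      · rw [hM, h, div_eq_mul_inv]; exact le_max_right _ _
    linarith [le_max_left 1 (Real.log (μ⁻¹ * R⁻¹))]

theorem laplace_transform_I_le_J (n : ℕ) (hn : 1 ≤ n) (α : ℝ) (hα : 0 < α) :
    ∃ C₂ > (0 : ℝ), ∀ μ : ℝ, 0 < μ → ∀ x : EuclideanSpace ℝ (Fin n), x ≠ 0 →
      ∫ t in Set.Ioi (0 : ℝ), Real.exp (-μ * t) * Ifun n α t x ≤ C₂ * Jfun n α μ⁻¹ x := by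
  set b : ℝ := n / (2 * α) with hb
  have hbn : 2 * α * b = n := by rw [hb]; field_simp
  have key : ∀ (C A B F : ℝ), 0 ≤ B → F ≤ C * A → F ≤ B → F ≤ (max C 1) * min A B ∨ A < 0 := by
    intro C A B F hB h1 h2
    by_cases hA : A < 0
    · exact Or.inr hA
    left
    rcases min_choice A B with h | h <;> rw [h]
    · exact h1.trans (mul_le_mul_of_nonneg_right (le_max_left _ _) (not_lt.1 hA))
    · exact h2.trans (le_mul_of_one_le_left hB (le_max_right _ _))
  have hI : ∀ μ : ℝ, ∀ x : EuclideanSpace ℝ (Fin n), x ≠ 0 → 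
      ∫ t in Set.Ioi (0 : ℝ), Real.exp (-μ * t) * Ifun n α t x =
      ∫ t in Set.Ioi (0:ℝ), rexp (-μ * t) * min (t * (‖x‖ ^ (2*α)) ^ (-b-1)) (t ^ (-b)) := by
    intro μ x hx
    have e : (‖x‖ ^ (2*α)) ^ (-b-1) = ‖x‖ ^ (-((n : ℝ) + 2 * α)) := by
      rw [← Real.rpow_mul (norm_nonneg _), ← hbn]; congr 1; ring
    rw [e]
    simp only [Ifun, hx, if_false, hb, neg_div]
  have hA : ∀ μ : ℝ, 0 < μ → ∀ x : EuclideanSpace ℝ (Fin n), x ≠ 0 → 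
      ∫ t in Set.Ioi (0 : ℝ), Real.exp (-μ * t) * Ifun n α t x ≤
        μ⁻¹ ^ 2 * ‖x‖ ^ (-(n:ℝ) - 2 * α) := by
    intro μ hμ x hx
    have hx' := norm_pos_iff.2 hx
    rw [hI μ x hx]
    refine (lemA b μ _ hμ (by positivity)).trans (le_of_eq ?_)
    rw [← Real.rpow_mul (norm_nonneg _), ← hbn]; congr 2; ring
  rcases lt_trichotomy (2*α) (n:ℝ) with h | h | h
  · have hb1 : 1 < b := by rw [hb, one_lt_div (by positivity)]; exact h
    refine ⟨max (1/2 + 1/(b-1)) 1, by positivity, fun μ hμ x hx => ?_⟩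
    have hx' := norm_pos_iff.2 hx
    rw [Jfun, if_pos h]
    refine (key _ _ _ _ (by positivity) ?_ (hA μ hμ x hx)).resolve_right (not_lt.2 (by positivity))
    rw [hI μ x hx]
    refine (lemB b μ _ hb1 hμ (by positivity)).trans (le_of_eq ?_)
    rw [← Real.rpow_mul (norm_nonneg _), ← hbn]; congr 2; ring
  · have hb1 : b = 1 := by rw [hb, h, div_self]; positivity
    refine ⟨max 3 1, by positivity, fun μ hμ x hx => ?_⟩
    have hx' := norm_pos_iff.2 hx
    rw [Jfun, if_neg h.not_lt, if_pos h]
    have e : (-2 * (n:ℝ)) = -(n:ℝ) - 2 * α := by rw [h]; ring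
    rw [e]
    refine (key _ _ _ _ (by positivity) ?_ (hA μ hμ x hx)).resolve_right (not_lt.2 (by positivity))
    rw [hI μ x hx, hb1]
    refine (lemD μ _ hμ (by positivity)).trans (le_of_eq ?_)
    rw [← Real.rpow_neg (norm_nonneg _), h]
  · have hb1 : b < 1 := by rw [hb, div_lt_one (by positivity)]; exact h
    refine ⟨max (Real.Gamma (1-b)) 1, by positivity, fun μ hμ x hx => ?_⟩
    have hx' := norm_pos_iff.2 hx
    rw [Jfun, if_neg h.not_gt, if_neg h.ne']
    refine (key _ _ _ _ (by positivity) ?_ (hA μ hμ x hx)).resolve_right (not_lt.2 (by positivity))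
    rw [hI μ x hx]
    exact lemC b μ _ hb1 hμ (by positivity)
end

section
/- Let α > 0 be a non-integer, n ≥ 1, and V ∈ K_{2α}(ℝⁿ). Then for every integer j ≥ 0, every μ > 0, and all x ≠ y in ℝⁿ, the Laplace transform of the j-th Duhamel iterate equals the j-th iterated resolvent kernel: ∫₀^∞ e^{-μ t} K_j(t,x,y) dt = R_j(μ,x,y), the integral being absolutely convergent. -/
open Real MeasureTheory Filter ENNReal
open scoped Classical

/-- The free heat kernel `K₀(t,x) = (2π)^{-n} ∫_{ℝⁿ} e^{i x·ξ} e^{-t|ξ|^{2α}} dξ`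
of the semigroup `e^{-t(-Δ)^α}`. -/
noncomputable def K0 (n : ℕ) (α : ℝ) (t : ℝ) (x : EuclideanSpace ℝ (Fin n)) : ℂ :=
  ((2 * Real.pi) ^ (-(n : ℝ)) : ℝ) •
    ∫ ξ : EuclideanSpace ℝ (Fin n),
      Complex.exp (Complex.I * ((inner ℝ x ξ : ℝ) : ℂ)) *
        Complex.exp (-(t : ℂ) * ((‖ξ‖ ^ (2 * α) : ℝ) : ℂ))

/-- The Duhamel iterates: `K₀(t,x,y) = K₀(t,x-y)` and
`K_j(t,x,y) = ∫_{ℝⁿ} ∫₀^t K_{j-1}(t-s,x,z) V(z) K₀(s,z,y) ds dz` for `j ≥ 1`. -/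
noncomputable def Kiter (n : ℕ) (α : ℝ) (V : EuclideanSpace ℝ (Fin n) → ℝ) :
    ℕ → ℝ → EuclideanSpace ℝ (Fin n) → EuclideanSpace ℝ (Fin n) → ℂ
  | 0, t, x, y => K0 n α t (x - y)
  | (j + 1), t, x, y =>
      ∫ z : EuclideanSpace ℝ (Fin n),
        ∫ s in Set.Ioo (0 : ℝ) t, Kiter n α V j (t - s) x z * (V z : ℂ) * K0 n α s (z - y)


/-- `R₀(μ,x,y) = ∫₀^∞ e^{-μt} K₀(t,x-y) dt`, the free resolvent kernel. -/
noncomputable def R0 (n : ℕ) (α : ℝ) (μ : ℝ) (x y : EuclideanSpace ℝ (Fin n)) : ℂ :=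
  ∫ t in Set.Ioi (0 : ℝ), (Real.exp (-μ * t) : ℂ) * K0 n α t (x - y)

/-- The iterated resolvent kernels:
`R_j(μ,x,y) = ∫_{ℝⁿ} R_{j-1}(μ,x,z) V(z) R₀(μ,z,y) dz` for `j ≥ 1`. -/
noncomputable def Riter (n : ℕ) (α : ℝ) (V : EuclideanSpace ℝ (Fin n) → ℝ) :
    ℕ → ℝ → EuclideanSpace ℝ (Fin n) → EuclideanSpace ℝ (Fin n) → ℂ
  | 0, μ, x, y => R0 n α μ x y
  | (j + 1), μ, x, y =>
      ∫ z : EuclideanSpace ℝ (Fin n), Riter n α V j μ x z * (V z : ℂ) * R0 n α μ z y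

lemma aux_norm_cexp_sub_one {w : ℂ} (hw : w.re ≤ 0) : ‖Complex.exp w - 1‖ ≤ 2 * ‖w‖ := by
  by_cases h : ‖w‖ ≤ 1
  · exact Complex.norm_exp_sub_one_le h
  · push Not at h
    have h1 : ‖Complex.exp w‖ ≤ 1 := by
      rw [Complex.norm_exp]; exact Real.exp_le_one_iff.2 hw
    calc _ ≤ ‖Complex.exp w‖ + ‖(1 : ℂ)‖ := norm_sub_le _ _
      _ ≤ 2 * ‖w‖ := by rw [norm_one]; linarith

lemma aux_fwdDiff_integrable {n : ℕ} (h : EuclideanSpace ℝ (Fin n))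
    {f : EuclideanSpace ℝ (Fin n) → ℂ} (hf : Integrable f) : Integrable (fwdDiff h f) :=
  (hf.comp_add_right h).sub hf

lemma aux_osc_integrable {n : ℕ} (x : EuclideanSpace ℝ (Fin n))
    {f : EuclideanSpace ℝ (Fin n) → ℂ} (hf : Integrable f) :
    Integrable (fun ξ => Complex.exp (Complex.I * ((inner ℝ x ξ : ℝ) : ℂ)) * f ξ) := by
  apply hf.bdd_mul (c := 1)
  · apply Continuous.aestronglyMeasurable
    fun_prop
  · refine Filter.Eventually.of_forall fun ξ => ?_
    rw [Complex.norm_exp]; simp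

lemma aux_fourier_diff_one {n : ℕ} (x : EuclideanSpace ℝ (Fin n)) (hx : x ≠ 0)
    {f : EuclideanSpace ℝ (Fin n) → ℂ} (hf : Integrable f) :
    ‖∫ ξ, Complex.exp (Complex.I * ((inner ℝ x ξ : ℝ) : ℂ)) * f ξ‖ ≤
     ‖∫ ξ, Complex.exp (Complex.I * ((inner ℝ x ξ : ℝ) : ℂ)) *
        (fwdDiff ((Real.pi / ‖x‖ ^ 2) • x) f) ξ‖ := by
  set h := (Real.pi / ‖x‖ ^ 2) • x with hh
  have hxn : ‖x‖ ≠ 0 := norm_ne_zero_iff.2 hx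
  have hin : inner ℝ x h = Real.pi := by
    rw [hh, inner_smul_right, real_inner_self_eq_norm_sq]; field_simp
  have e1 : ∫ ξ, Complex.exp (Complex.I * ((inner ℝ x ξ : ℝ) : ℂ)) * f (ξ + h) =
      - ∫ ξ, Complex.exp (Complex.I * ((inner ℝ x ξ : ℝ) : ℂ)) * f ξ := by
    rw [← integral_neg, ← integral_add_right_eq_self
      (fun ξ => -(Complex.exp (Complex.I * ((inner ℝ x ξ : ℝ) : ℂ)) * f ξ)) h]
    congr 1; ext ξ
    rw [inner_add_right, hin]
    push_cast
    rw [mul_add, Complex.exp_add, mul_comm Complex.I (Real.pi : ℂ), Complex.exp_pi_mul_I]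
    ring
  have e2 : ∫ ξ, Complex.exp (Complex.I * ((inner ℝ x ξ : ℝ) : ℂ)) * (fwdDiff h f) ξ =
      -2 * ∫ ξ, Complex.exp (Complex.I * ((inner ℝ x ξ : ℝ) : ℂ)) * f ξ := by
    simp only [fwdDiff, mul_sub]
    rw [integral_sub (aux_osc_integrable x (hf.comp_add_right h)) (aux_osc_integrable x hf), e1]
    ring
  rw [e2, norm_mul]
  have := norm_nonneg (∫ ξ, Complex.exp (Complex.I * ((inner ℝ x ξ : ℝ) : ℂ)) * f ξ)
  norm_num
  linarith

lemma aux_fourier_diff {n : ℕ} (x : EuclideanSpace ℝ (Fin n)) (hx : x ≠ 0) (m : ℕ) :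
    ∀ {f : EuclideanSpace ℝ (Fin n) → ℂ} (_ : Integrable f),
    ‖∫ ξ, Complex.exp (Complex.I * ((inner ℝ x ξ : ℝ) : ℂ)) * f ξ‖ ≤
     ∫ ξ, ‖((fwdDiff ((Real.pi / ‖x‖ ^ 2) • x))^[m] f) ξ‖ := by
  induction m with
  | zero =>
    intro f hf
    refine (norm_integral_le_integral_norm _).trans (le_of_eq ?_)
    congr 1; ext ξ
    rw [norm_mul, Complex.norm_exp]; simp
  | succ m ih =>
    intro f hf
    refine (aux_fourier_diff_one x hx hf).trans ?_
    simp only [Function.iterate_succ_apply]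
    exact ih (aux_fwdDiff_integrable _ hf)

lemma aux_holo_diff {ρ : ℝ} (hρ : 0 < ρ) {h : ℂ} (hh : ‖h‖ < ρ) (m : ℕ) :
    ∀ (F : ℂ → ℂ) (M : ℝ) (c : ℂ), DifferentiableOn ℂ F (Metric.ball c ((2 * m + 1) * ρ)) →
      (∀ z ∈ Metric.ball c ((2 * m + 1) * ρ), ‖F z‖ ≤ M) →
      ‖((fwdDiff h)^[m] F) c‖ ≤ M * (2 * ‖h‖ / ρ) ^ m := by
  induction m with
  | zero =>
    intro F M c hF hM
    simpa using hM c (by simpa using hρ)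
  | succ m ih =>
    intro F M c hF hM
    rw [Function.iterate_succ_apply]
    have hsub : ∀ z ∈ Metric.ball c ((2 * m + 1) * ρ), Metric.ball z ρ ⊆
        Metric.ball c ((2 * (m + 1 : ℕ) + 1) * ρ) := by
      intro z hz w hw
      rw [Metric.mem_ball] at *
      push_cast
      have := dist_triangle w z c
      nlinarith
    have hd : ∀ z ∈ Metric.ball c ((2 * m + 1) * ρ), z ∈ 
        Metric.ball c ((2 * (m + 1 : ℕ) + 1) * ρ) := fun z hz => hsub z hz (Metric.mem_ball_self hρ)
    have hzh : ∀ z, z + h ∈ Metric.ball z ρ := by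
      intro z; rw [Metric.mem_ball, dist_eq_norm]; simpa using hh
    have key := ih (fwdDiff h F) (M * (2 * ‖h‖ / ρ)) c ?_ ?_
    · rw [pow_succ']
      linarith
    · have h1 : DifferentiableOn ℂ (fun z => F (z + h)) (Metric.ball c ((2 * m + 1) * ρ)) := by
        refine DifferentiableOn.comp (t := Metric.ball c ((2 * (m + 1 : ℕ) + 1) * ρ)) hF
          (by fun_prop) ?_
        intro z hz
        exact hsub z hz (hzh z)
      exact h1.sub (hF.mono hd)
    · intro z hz
      have h0 : DifferentiableOn ℂ F (Metric.ball z ρ) := hF.mono (hsub z hz)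
      have := Complex.dist_le_div_mul_dist_of_mapsTo_ball (R₂ := 2 * M) h0 (fun w hw => ?_) (hzh z)
      · rw [dist_eq_norm, dist_eq_norm] at this
        simp only [fwdDiff]
        calc _ ≤ _ := this
          _ = _ := by rw [add_sub_cancel_left]; ring
      · rw [Metric.mem_closedBall, dist_eq_norm]
        refine (norm_sub_le _ _).trans ?_
        linarith [hM w (hsub z hz hw), hM z (hd z hz)]

lemma aux_diff_triv {G : Type*} [AddCommGroup G] (h : G) (m : ℕ) :
    ∀ (F : G → ℂ) (B : ℝ) (ξ : G), (∀ k ≤ m, ‖F (ξ + k • h)‖ ≤ B) →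
      ‖((fwdDiff h)^[m] F) ξ‖ ≤ 2 ^ m * B := by
  induction m with
  | zero => intro F B ξ hB; simpa using hB 0 le_rfl
  | succ m ih =>
    intro F B ξ hB
    rw [Function.iterate_succ_apply]
    have := ih (fwdDiff h F) (2 * B) ξ ?_
    · rw [pow_succ]; linarith
    · intro k hk
      simp only [fwdDiff]
      refine (norm_sub_le _ _).trans ?_
      have h1 := hB k (by omega)
      have h2 := hB (k + 1) (by omega)
      rw [add_smul, one_smul, ← add_assoc] at h2
      linarith

lemma aux_diff_line {G : Type*} [AddCommGroup G] (h ξ : G) (m : ℕ) (f : G → ℂ) (F : ℂ → ℂ)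
    (hF : ∀ s : ℕ, f (ξ + s • h) = F s) :
    ((fwdDiff h)^[m] f) ξ = ((fwdDiff (1 : ℂ))^[m] F) 0 := by
  rw [fwdDiff_iter_eq_sum_shift, fwdDiff_iter_eq_sum_shift]
  refine Finset.sum_congr rfl fun k _ => ?_
  rw [hF]; simp

lemma aux_diff_sub_const {G : Type*} [AddCommGroup G] (h : G) (m : ℕ) (f : G → ℂ) (c : ℂ) :
    ((fwdDiff h)^[m + 1] f) = ((fwdDiff h)^[m + 1] (fun ξ => f ξ - c)) := by
  rw [Function.iterate_succ_apply, Function.iterate_succ_apply]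
  congr 1
  ext ξ; simp [fwdDiff]

/-- the symbol -/
noncomputable def symb (n : ℕ) (α : ℝ) (t : ℂ) (ξ : EuclideanSpace ℝ (Fin n)) : ℂ :=
  Complex.exp (-t * ((‖ξ‖ ^ (2 * α) : ℝ) : ℂ))

lemma aux_cpow_near (α : ℝ) : ∃ δ : ℝ, 0 < δ ∧ δ ≤ 1 ∧ ∀ u : ℂ, ‖u - 1‖ < δ →
    ‖u ^ (α : ℂ) - 1‖ ≤ 1 / 2 := by
  have hc : ContinuousAt (fun u : ℂ => u ^ (α : ℂ)) 1 :=
    continuousAt_cpow_const (by simp [Complex.slitPlane])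
  rw [Metric.continuousAt_iff] at hc
  obtain ⟨δ, hδ, h⟩ := hc (1 / 2) (by norm_num)
  refine ⟨min δ 1, lt_min hδ one_pos, min_le_right _ _, fun u hu => ?_⟩
  have := h (x := u) (by rw [dist_eq_norm]; exact hu.trans_le (min_le_left _ _))
  rw [dist_eq_norm] at this
  simpa using this.le

lemma aux_symb_sub_one {n : ℕ} {α : ℝ} {t : ℂ} (ht : 0 ≤ t.re)
    (ξ : EuclideanSpace ℝ (Fin n)) :
    ‖symb n α t ξ - 1‖ ≤ 2 * (‖t‖ * ‖ξ‖ ^ (2 * α)) := by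
  have h0 : 0 ≤ ‖ξ‖ ^ (2 * α) := by positivity
  refine (aux_norm_cexp_sub_one ?_).trans (le_of_eq ?_)
  · rw [Complex.re_mul_ofReal, Complex.neg_re]; nlinarith
  · rw [norm_mul, norm_neg, Complex.norm_real, Real.norm_of_nonneg h0]

/-- far bound on differences via complexification along the line -/
lemma aux_far {n : ℕ} {α : ℝ} (m : ℕ) : ∃ K C : ℝ, 1 ≤ K ∧ 0 ≤ C ∧
    ∀ (t : ℂ), ‖t‖ ≤ 2 * t.re → ∀ h ξ : EuclideanSpace ℝ (Fin n), h ≠ 0 → K * ‖h‖ < ‖ξ‖ →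
    ‖((fwdDiff h)^[m + 1] (symb n α t)) ξ‖ ≤
      C * ‖t‖ * ‖ξ‖ ^ (2 * α) * (‖h‖ / ‖ξ‖) ^ (m + 1) := by
  obtain ⟨δ, hδ, hδ1, hcp⟩ := aux_cpow_near α
  set c := δ / 3 with hc
  have hcpos : 0 < c := by positivity
  have hc1 : c ≤ 1 := by rw [hc]; linarith
  set N : ℝ := 2 * (m + 1 : ℕ) + 1 with hN
  have hN1 : 1 ≤ N := by rw [hN]; push_cast; have : (0:ℝ) ≤ m := by positivity
                         linarith
  refine ⟨N / c, 3 * (2 * N / c) ^ (m + 1), ?_, by positivity, ?_⟩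
  · rw [le_div_iff₀ hcpos]; linarith
  intro t ht h ξ hh hK
  have hhp : 0 < ‖h‖ := norm_pos_iff.2 hh
  have hξ : 0 < ‖ξ‖ := lt_of_le_of_lt (by positivity) hK
  have htre : 0 ≤ t.re := by have := norm_nonneg t; linarith
  set q := ‖ξ‖ / ‖h‖ with hq
  have hqpos : 0 < q := by positivity
  have hKq : N / c < q := by rw [hq, lt_div_iff₀ hhp]; exact hK
  set p : ℝ := ‖ξ‖ ^ (2 * α) with hp
  have hppos : 0 < p := by positivity
  set u : ℂ → ℂ := fun ζ => 1 + 2 * ζ * ((inner ℝ ξ h / ‖ξ‖ ^ 2 : ℝ) : ℂ) +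
    ζ ^ 2 * ((‖h‖ ^ 2 / ‖ξ‖ ^ 2 : ℝ) : ℂ) with hu
  set F : ℂ → ℂ := fun ζ => Complex.exp (-t * (p * (u ζ) ^ (α : ℂ))) - 1 with hF
  set ρ : ℝ := c * q / N with hρ
  have hρpos : 0 < ρ := by positivity
  have hρ1 : 1 < ρ := by
    rw [hρ, lt_div_iff₀ (by linarith), one_mul]
    rw [div_lt_iff₀ hcpos] at hKq
    linarith
  have hball : ((2 * (m + 1 : ℕ) + 1 : ℝ)) * ρ = c * q := by
    rw [← hN, hρ]; field_simp
  have hub : ∀ z ∈ Metric.ball (0 : ℂ) (c * q), ‖u z - 1‖ < δ := by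
    intro z hz
    rw [Metric.mem_ball, dist_zero_right] at hz
    have e : u z - 1 = 2 * z * ((inner ℝ ξ h / ‖ξ‖ ^ 2 : ℝ) : ℂ) +
      z ^ 2 * ((‖h‖ ^ 2 / ‖ξ‖ ^ 2 : ℝ) : ℂ) := by rw [hu]; ring
    have h1 : |inner ℝ ξ h / ‖ξ‖ ^ 2| ≤ 1 / q := by
      rw [abs_div, abs_of_nonneg (by positivity : (0:ℝ) ≤ ‖ξ‖ ^ 2), hq,
        div_le_iff₀ (by positivity)]
      refine (abs_real_inner_le_norm ξ h).trans (le_of_eq ?_)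
      field_simp
    have h2 : |‖h‖ ^ 2 / ‖ξ‖ ^ 2| = 1 / q ^ 2 := by
      rw [abs_of_nonneg (by positivity), hq]; field_simp
    rw [e]
    refine (norm_add_le _ _).trans_lt ?_
    rw [norm_mul, norm_mul, norm_mul, norm_pow, Complex.norm_real, Complex.norm_real,
      Real.norm_eq_abs, Real.norm_eq_abs, h2]
    have hzc : ‖z‖ / q < c := by rw [div_lt_iff₀ hqpos]; exact hz
    have h3 : ‖(2:ℂ)‖ * ‖z‖ * |inner ℝ ξ h / ‖ξ‖ ^ 2| ≤ 2 * (‖z‖ / q) := by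
      calc _ ≤ ‖(2:ℂ)‖ * ‖z‖ * (1 / q) := by gcongr
        _ = _ := by simp; ring
    have h4 : ‖z‖ ^ 2 * (1 / q ^ 2) = (‖z‖ / q) ^ 2 := by field_simp
    have h5 : 0 ≤ ‖z‖ / q := by positivity
    rw [h4]
    have : (‖z‖ / q) ^ 2 ≤ ‖z‖ / q := by nlinarith
    have : 3 * c = δ := by rw [hc]; ring
    linarith
  have hline : ∀ s : ℕ, symb n α t (ξ + s • h) - 1 = F s := by
    intro s
    have e : u s = ((‖ξ + s • h‖ ^ 2 / ‖ξ‖ ^ 2 : ℝ) : ℂ) := by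
      rw [hu, ← Nat.cast_smul_eq_nsmul ℝ, norm_add_sq_real, inner_smul_right, norm_smul]
      simp only [Real.norm_natCast]
      have : (‖ξ‖ : ℂ) ≠ 0 := by exact_mod_cast hξ.ne'
      push_cast
      field_simp
    have e2 : p * (‖ξ + s • h‖ ^ 2 / ‖ξ‖ ^ 2) ^ α = ‖ξ + s • h‖ ^ (2 * α) := by
      rw [Real.div_rpow (by positivity) (by positivity), hp, ← Real.rpow_natCast,
        ← Real.rpow_natCast, ← Real.rpow_mul (by positivity), ← Real.rpow_mul (by positivity)]
      push_cast
      field_simp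
    simp only [symb, hF]
    rw [e, ← Complex.ofReal_cpow (by positivity), ← Complex.ofReal_mul, e2]
  have hmain := aux_holo_diff hρpos (h := 1) (by simpa using hρ1) (m + 1) F
    (3 * (‖t‖ * p)) 0 ?_ ?_
  · rw [aux_diff_sub_const h m _ 1, aux_diff_line h ξ (m + 1) _ F hline]
    refine hmain.trans (le_of_eq ?_)
    have : (2 * ‖(1:ℂ)‖ / ρ) = (2 * N / c) * (‖h‖ / ‖ξ‖) := by
      rw [hρ, hq]; simp; field_simp
    rw [this, mul_pow]; ring
  · rw [hball]
    have hud : DifferentiableOn ℂ (fun ζ => (u ζ) ^ (α : ℂ)) (Metric.ball 0 (c * q)) := by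
      refine DifferentiableOn.cpow_const (by rw [hu]; fun_prop) ?_
      intro z hz
      left
      have h1 := (hub z hz).trans_le hδ1
      have h2 := Complex.abs_re_le_norm (u z - 1)
      simp only [Complex.sub_re, Complex.one_re] at h2
      have := (abs_lt.1 (h2.trans_lt h1)).1
      linarith
    rw [hF]
    fun_prop
  · rw [hball]
    intro z hz
    have h1 := hcp _ (hub z hz)
    have hnorm : ‖u z ^ (α : ℂ)‖ ≤ 3 / 2 := by
      calc _ = ‖(u z ^ (α : ℂ) - 1) + 1‖ := by rw [sub_add_cancel]
        _ ≤ ‖u z ^ (α : ℂ) - 1‖ + ‖(1:ℂ)‖ := norm_add_le _ _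
        _ ≤ _ := by rw [norm_one]; linarith
    have hre : 0 ≤ (t * u z ^ (α : ℂ)).re := by
      have e : t * u z ^ (α : ℂ) = t + t * (u z ^ (α : ℂ) - 1) := by ring
      rw [e, Complex.add_re]
      have h2 := Complex.abs_re_le_norm (t * (u z ^ (α : ℂ) - 1))
      rw [norm_mul] at h2
      have h3 : ‖t‖ * ‖u z ^ (α : ℂ) - 1‖ ≤ ‖t‖ * (1 / 2) := by gcongr
      have := (abs_le.1 h2).1
      linarith
    refine (aux_norm_cexp_sub_one ?_).trans ?_
    · have e : -t * (p * u z ^ (α : ℂ)) = -((t * u z ^ (α : ℂ)) * (p : ℝ)) := by ring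
      rw [e, Complex.neg_re, Complex.re_mul_ofReal]
      nlinarith
    · rw [norm_mul, norm_mul, norm_neg, Complex.norm_real, Real.norm_of_nonneg hppos.le]
      have := norm_nonneg t
      calc _ ≤ 2 * (‖t‖ * (p * (3 / 2))) := by gcongr
        _ = _ := by ring

lemma aux_near {n : ℕ} {α : ℝ} (hα : 0 < α) (m : ℕ) {K : ℝ} (hK : 1 ≤ K)
    {t : ℂ} (ht : 0 ≤ t.re) (h ξ : EuclideanSpace ℝ (Fin n)) (hξ : ‖ξ‖ ≤ K * ‖h‖) :
    ‖((fwdDiff h)^[m + 1] (symb n α t)) ξ‖ ≤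
      2 ^ (m + 1) * (2 * (‖t‖ * ((K + (m + 1)) ^ (2 * α) * ‖h‖ ^ (2 * α)))) := by
  rw [aux_diff_sub_const h m _ 1]
  refine aux_diff_triv h (m + 1) _ _ ξ fun k hk => ?_
  refine (aux_symb_sub_one ht _).trans ?_
  rw [← Real.mul_rpow (by positivity) (by positivity)]
  gcongr
  refine (norm_add_le _ _).trans ?_
  rw [← Nat.cast_smul_eq_nsmul ℝ, norm_smul, Real.norm_natCast]
  have : (k : ℝ) ≤ m + 1 := by exact_mod_cast hk
  have := norm_nonneg h
  nlinarith

lemma aux_pt {n : ℕ} {α : ℝ} (hα : 0 < α) (m : ℕ) (hm : 2 * α < m + 1) : ∃ C : ℝ, 0 ≤ C ∧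
    ∀ (t : ℂ), ‖t‖ ≤ 2 * t.re → ∀ h ξ : EuclideanSpace ℝ (Fin n), h ≠ 0 →
    ‖((fwdDiff h)^[m + 1] (symb n α t)) ξ‖ ≤
      C * ‖t‖ * ‖h‖ ^ (2 * α) * (1 + ‖‖h‖⁻¹ • ξ‖) ^ (-((m + 1) - 2 * α)) := by
  obtain ⟨K, C, hK, hC, hfar⟩ := aux_far (n := n) (α := α) m
  set r : ℝ := (m + 1) - 2 * α with hr
  have hrpos : 0 < r := by linarith
  set C1 := 2 ^ (m + 1) * (2 * (K + (m + 1)) ^ (2 * α)) * (1 + K) ^ r with hC1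
  set C2 := C * 2 ^ r with hC2
  refine ⟨C1 + C2, by positivity, fun t ht h ξ hh => ?_⟩
  have hhp : 0 < ‖h‖ := norm_pos_iff.2 hh
  have htre : 0 ≤ t.re := by have := norm_nonneg t; linarith
  have hnq : ‖‖h‖⁻¹ • ξ‖ = ‖ξ‖ / ‖h‖ := by
    rw [norm_smul, norm_inv, norm_norm]; field_simp
  rw [hnq]
  have hC1p : 0 ≤ C1 := by positivity
  have hC2p : 0 ≤ C2 := by positivity
  rcases le_or_gt ‖ξ‖ (K * ‖h‖) with hξ | hξ
  · refine (aux_near hα m hK htre h ξ hξ).trans ?_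
    have hq : ‖ξ‖ / ‖h‖ ≤ K := by rw [div_le_iff₀ hhp]; exact hξ
    have h1 : (1 + K) ^ (-r) ≤ (1 + ‖ξ‖ / ‖h‖) ^ (-r) := by
      apply Real.rpow_le_rpow_of_nonpos (by positivity) (by linarith) (by linarith)
    have h2 : (1 + K) ^ r * (1 + K) ^ (-r) = 1 := by
      rw [← Real.rpow_add (by positivity)]; simp
    calc 2 ^ (m + 1) * (2 * (‖t‖ * ((K + (m + 1)) ^ (2 * α) * ‖h‖ ^ (2 * α))))
        = C1 * ‖t‖ * ‖h‖ ^ (2 * α) * (1 + K) ^ (-r) := by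
          rw [hC1]
          calc _ = 2 ^ (m + 1) * (2 * (‖t‖ * ((K + (m + 1)) ^ (2 * α) * ‖h‖ ^ (2 * α)))) *
              ((1 + K) ^ r * (1 + K) ^ (-r)) := by rw [h2, mul_one]
            _ = _ := by ring
      _ ≤ (C1 + C2) * ‖t‖ * ‖h‖ ^ (2 * α) * (1 + ‖ξ‖ / ‖h‖) ^ (-r) := by
          gcongr; linarith
  · refine (hfar t ht h ξ hh hξ).trans ?_
    have hξp : 0 < ‖ξ‖ := lt_of_le_of_lt (by positivity) hξ
    set q := ‖ξ‖ / ‖h‖ with hq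
    have hqp : 0 < q := by positivity
    have hq1 : 1 < q := by rw [hq, lt_div_iff₀ hhp]; nlinarith
    have e1 : ‖ξ‖ = q * ‖h‖ := by rw [hq]; field_simp
    have e2 : ‖ξ‖ ^ (2 * α) * (‖h‖ / ‖ξ‖) ^ (m + 1) = ‖h‖ ^ (2 * α) * q ^ (-r) := by
      have : ‖h‖ / ‖ξ‖ = q⁻¹ := by rw [hq]; field_simp
      rw [this, inv_pow, e1, Real.mul_rpow hqp.le hhp.le, hr, neg_sub, Real.rpow_sub hqp,
        ← Nat.cast_add_one, Real.rpow_natCast]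
      field_simp
    have h3 : q ^ (-r) ≤ 2 ^ r * (1 + q) ^ (-r) := by
      have : (2:ℝ) ^ r = (1 / 2) ^ (-r) := by
        rw [one_div, Real.inv_rpow (by norm_num), Real.rpow_neg (by norm_num), inv_inv]
      rw [this, ← Real.mul_rpow (by norm_num) (by positivity)]
      apply Real.rpow_le_rpow_of_nonpos (by positivity) (by linarith) (by linarith)
    calc C * ‖t‖ * ‖ξ‖ ^ (2 * α) * (‖h‖ / ‖ξ‖) ^ (m + 1)
        = C * ‖t‖ * (‖h‖ ^ (2 * α) * q ^ (-r)) := by rw [← e2]; ring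
      _ ≤ C * ‖t‖ * (‖h‖ ^ (2 * α) * (2 ^ r * (1 + q) ^ (-r))) := by gcongr
      _ = C2 * ‖t‖ * ‖h‖ ^ (2 * α) * (1 + q) ^ (-r) := by rw [hC2]; ring
      _ ≤ (C1 + C2) * ‖t‖ * ‖h‖ ^ (2 * α) * (1 + q) ^ (-r) := by gcongr; linarith

/-- complex-time kernel -/
noncomputable def Kc (n : ℕ) (α : ℝ) (t : ℂ) (x : EuclideanSpace ℝ (Fin n)) : ℂ :=
  ((2 * Real.pi) ^ (-(n : ℝ)) : ℝ) •
    ∫ ξ : EuclideanSpace ℝ (Fin n),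
      Complex.exp (Complex.I * ((inner ℝ x ξ : ℝ) : ℂ)) * symb n α t ξ

lemma K0_eq_Kc (n : ℕ) (α : ℝ) (t : ℝ) (x : EuclideanSpace ℝ (Fin n)) :
    K0 n α t x = Kc n α (t : ℂ) x := rfl

lemma continuous_symb (n : ℕ) {α : ℝ} (hα : 0 < α) :
    Continuous (fun p : ℂ × EuclideanSpace ℝ (Fin n) => symb n α p.1 p.2) := by
  unfold symb
  have : Continuous (fun p : ℂ × EuclideanSpace ℝ (Fin n) => ‖p.2‖ ^ (2 * α)) :=
    (by fun_prop : Continuous (fun p : ℂ × EuclideanSpace ℝ (Fin n) => ‖p.2‖)).rpow_const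
      (fun _ => Or.inr (by positivity))
  fun_prop

lemma norm_symb (n : ℕ) (α : ℝ) (t : ℂ) (ξ : EuclideanSpace ℝ (Fin n)) :
    ‖symb n α t ξ‖ = Real.exp (-t.re * ‖ξ‖ ^ (2 * α)) := by
  rw [symb, Complex.norm_exp, Complex.re_mul_ofReal, Complex.neg_re]

lemma integrable_exp_norm {n : ℕ} (hn : 1 ≤ n) {α : ℝ} (hα : 0 < α) {b : ℝ} (hb : 0 < b) :
    Integrable (fun ξ : EuclideanSpace ℝ (Fin n) => Real.exp (-b * ‖ξ‖ ^ (2 * α))) := by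
  have : Nonempty (Fin n) := ⟨⟨0, hn⟩⟩
  have : Nontrivial (EuclideanSpace ℝ (Fin n)) := inferInstance
  rw [MeasureTheory.integrable_fun_norm_addHaar (μ := volume) (f := fun r : ℝ => Real.exp (-b * r ^ (2 * α)))]
  have := integrableOn_rpow_mul_exp_neg_mul_rpow (p := 2 * α) (s := ((n - 1 : ℕ) : ℝ)) (b := b)
    (by have : (0:ℝ) ≤ ((n - 1 : ℕ) : ℝ) := by positivity
        linarith) (by positivity) hb
  simpa [smul_eq_mul, Real.rpow_natCast] using this

lemma integrable_symb {n : ℕ} (hn : 1 ≤ n) {α : ℝ} (hα : 0 < α) {t : ℂ} (ht : 0 < t.re) :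
    Integrable (symb n α t) := by
  refine (integrable_exp_norm hn hα ht).mono' ?_ (Eventually.of_forall fun ξ => ?_)
  · exact ((continuous_symb n hα).comp (Continuous.prodMk_right t)).aestronglyMeasurable
  · rw [norm_symb]

lemma Kc_bound_unif {n : ℕ} (hn : 1 ≤ n) {α : ℝ} (hα : 0 < α) : ∃ C : ℝ, 0 ≤ C ∧
    ∀ t : ℂ, 0 < t.re → ∀ x : EuclideanSpace ℝ (Fin n),
      ‖Kc n α t x‖ ≤ C * t.re ^ (-(n : ℝ) / (2 * α)) := by
  set I := ∫ ξ : EuclideanSpace ℝ (Fin n), Real.exp (-‖ξ‖ ^ (2 * α)) with hI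
  have hI0 : 0 ≤ I := integral_nonneg fun _ => (Real.exp_pos _).le
  refine ⟨(2 * Real.pi) ^ (-(n : ℝ)) * I, by positivity, fun t ht x => ?_⟩
  rw [Kc, norm_smul, Real.norm_of_nonneg (by positivity), mul_assoc]
  gcongr
  have e : ∫ ξ : EuclideanSpace ℝ (Fin n), Real.exp (-t.re * ‖ξ‖ ^ (2 * α)) =
      I * t.re ^ (-(n : ℝ) / (2 * α)) := by
    have := Measure.integral_comp_smul (volume : Measure (EuclideanSpace ℝ (Fin n)))
      (fun ξ => Real.exp (-‖ξ‖ ^ (2 * α))) (t.re ^ (1 / (2 * α)))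
    simp only [norm_smul] at this
    rw [finrank_euclideanSpace_fin] at this
    have e1 : ∀ ξ : EuclideanSpace ℝ (Fin n), -(‖t.re ^ (1 / (2 * α))‖ * ‖ξ‖) ^ (2 * α) =
        -t.re * ‖ξ‖ ^ (2 * α) := by
      intro ξ
      rw [Real.norm_of_nonneg (by positivity), Real.mul_rpow (by positivity) (by positivity),
        ← Real.rpow_mul ht.le, one_div, inv_mul_cancel₀ (by positivity), Real.rpow_one]
      ring
    simp only [e1] at this
    rw [this, abs_of_nonneg (by positivity), smul_eq_mul, mul_comm, ← hI, ← Real.rpow_natCast,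
      ← Real.rpow_mul ht.le, ← Real.rpow_neg ht.le]
    congr 2
    field_simp
  rw [← e]
  refine (norm_integral_le_integral_norm _).trans (le_of_eq ?_)
  congr 1; ext ξ
  rw [norm_mul, norm_symb, Complex.norm_exp]; simp

lemma Kc_bound_decay {n : ℕ} (hn : 1 ≤ n) {α : ℝ} (hα : 0 < α) : ∃ C : ℝ, 0 ≤ C ∧
    ∀ t : ℂ, 0 < t.re → ‖t‖ ≤ 2 * t.re → ∀ x : EuclideanSpace ℝ (Fin n), x ≠ 0 →
      ‖Kc n α t x‖ ≤ C * ‖t‖ * ‖x‖ ^ (-((n : ℝ) + 2 * α)) := by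
  obtain ⟨m, hm⟩ := exists_nat_gt ((n : ℝ) + 2 * α)
  obtain ⟨C, hC, hpt⟩ := aux_pt (n := n) hα m (by have : (0:ℝ) ≤ n := by positivity
                                                  linarith)
  set r : ℝ := (m + 1) - 2 * α with hr
  have hIntg : Integrable (fun ξ : EuclideanSpace ℝ (Fin n) => (1 + ‖ξ‖) ^ (-r)) := by
    apply integrable_one_add_norm
    rw [finrank_euclideanSpace_fin]; linarith
  set J := ∫ ξ : EuclideanSpace ℝ (Fin n), (1 + ‖ξ‖) ^ (-r) with hJ
  have hJ0 : 0 ≤ J := integral_nonneg fun _ => by positivity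
  refine ⟨(2 * Real.pi) ^ (-(n : ℝ)) * (C * J * Real.pi ^ ((n : ℝ) + 2 * α)),
    by positivity, fun t ht ht2 x hx => ?_⟩
  have hxp : 0 < ‖x‖ := norm_pos_iff.2 hx
  rw [Kc, norm_smul, Real.norm_of_nonneg (by positivity), mul_assoc, mul_assoc]
  gcongr
  refine (aux_fourier_diff x hx (m + 1) (integrable_symb hn hα ht)).trans ?_
  set h := (Real.pi / ‖x‖ ^ 2) • x with hh
  have hhn : ‖h‖ = Real.pi / ‖x‖ := by
    rw [hh, norm_smul, Real.norm_of_nonneg (by positivity)]; field_simp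
  have hhp : 0 < ‖h‖ := by rw [hhn]; positivity
  have hh0 : h ≠ 0 := norm_pos_iff.1 hhp
  have hIntg2 : Integrable (fun ξ : EuclideanSpace ℝ (Fin n) => (1 + ‖‖h‖⁻¹ • ξ‖) ^ (-r)) :=
    hIntg.comp_smul (by positivity)
  calc ∫ ξ, ‖((fwdDiff h)^[m + 1] (symb n α t)) ξ‖
      ≤ ∫ ξ : EuclideanSpace ℝ (Fin n),
        C * ‖t‖ * ‖h‖ ^ (2 * α) * (1 + ‖‖h‖⁻¹ • ξ‖) ^ (-r) := by
        apply integral_mono_of_nonneg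
        · exact Eventually.of_forall fun ξ => norm_nonneg _
        · exact hIntg2.const_mul _
        · exact Eventually.of_forall fun ξ => hpt t ht2 h ξ hh0
    _ = C * ‖t‖ * ‖h‖ ^ (2 * α) * (‖h‖ ^ n * J) := by
        rw [integral_const_mul]
        congr 1
        rw [Measure.integral_comp_smul (volume : Measure (EuclideanSpace ℝ (Fin n)))
          (fun ξ => (1 + ‖ξ‖) ^ (-r)), finrank_euclideanSpace_fin, abs_of_nonneg (by positivity),
          smul_eq_mul, inv_pow, inv_inv]
    _ = C * J * ‖t‖ * ‖h‖ ^ ((n : ℝ) + 2 * α) := by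
        rw [Real.rpow_add hhp, Real.rpow_natCast]; ring
    _ = _ := by
        rw [hhn, Real.div_rpow Real.pi_pos.le hxp.le, Real.rpow_neg hxp.le]
        field_simp

lemma stronglyMeasurable_Kc (n : ℕ) {α : ℝ} (hα : 0 < α) :
    StronglyMeasurable (fun p : ℂ × EuclideanSpace ℝ (Fin n) => Kc n α p.1 p.2) := by
  unfold Kc
  refine StronglyMeasurable.const_smul (f := fun p : ℂ × EuclideanSpace ℝ (Fin n) =>
    ∫ ξ : EuclideanSpace ℝ (Fin n),
      Complex.exp (Complex.I * ((inner ℝ p.2 ξ : ℝ) : ℂ)) * symb n α p.1 ξ) ?_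
    ((2 * Real.pi) ^ (-(n : ℝ)) : ℝ)
  apply StronglyMeasurable.integral_prod_right
    (f := fun (p : ℂ × EuclideanSpace ℝ (Fin n)) (ξ : EuclideanSpace ℝ (Fin n)) =>
      Complex.exp (Complex.I * ((inner ℝ p.2 ξ : ℝ) : ℂ)) * symb n α p.1 ξ)
  apply Continuous.stronglyMeasurable
  have h1 : Continuous (fun q : (ℂ × EuclideanSpace ℝ (Fin n)) × EuclideanSpace ℝ (Fin n) =>
      symb n α q.1.1 q.2) := (continuous_symb n hα).comp
      (f := fun q : (ℂ × EuclideanSpace ℝ (Fin n)) × EuclideanSpace ℝ (Fin n) => (q.1.1, q.2))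
      (by fun_prop)
  fun_prop

lemma stronglyMeasurable_K0 (n : ℕ) {α : ℝ} (hα : 0 < α) :
    StronglyMeasurable (fun p : ℝ × EuclideanSpace ℝ (Fin n) => K0 n α p.1 p.2) :=
  (stronglyMeasurable_Kc n hα).comp_measurable
    (g := fun p : ℝ × EuclideanSpace ℝ (Fin n) => ((p.1 : ℂ), p.2)) (by fun_prop)

/-- holomorphy of parametric integrals -/
lemma holo_integral {X : Type*} [MeasurableSpace X] {ν : Measure X} (F : ℂ → X → ℂ) {U : Set ℂ}
    (hU : IsOpen U) (hmeas : ∀ t ∈ U, AEStronglyMeasurable (F t) ν)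
    (hdiff : ∀ᵐ a ∂ν, DifferentiableOn ℂ (fun t => F t a) U)
    (hbound : ∀ t₀ ∈ U, ∃ R > 0, ∃ g : X → ℝ, Integrable g ν ∧
      ∀ᵐ a ∂ν, ∀ t ∈ Metric.ball t₀ R, ‖F t a‖ ≤ g a) :
    DifferentiableOn ℂ (fun t => ∫ a, F t a ∂ν) U := by
  intro t₀ ht₀
  obtain ⟨R, hR, g, hg, hb⟩ := hbound t₀ ht₀
  obtain ⟨R', hR', hRU⟩ := Metric.isOpen_iff.1 hU t₀ ht₀
  set r := min R R' / 2 with hr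
  have hrp : 0 < r := by positivity
  have hr1 : 2 * r ≤ R := by rw [hr]; linarith [min_le_left R R']
  have hr2 : 2 * r ≤ R' := by rw [hr]; linarith [min_le_right R R']
  have hsubU : Metric.ball t₀ (2 * r) ⊆ U := (Metric.ball_subset_ball hr2).trans hRU
  have hloc : ∀ t ∈ Metric.ball t₀ (r / 2), Metric.closedBall t r ⊆ Metric.ball t₀ (2 * r) := by
    intro t ht w hw
    rw [Metric.mem_ball] at *
    rw [Metric.mem_closedBall] at hw
    linarith [dist_triangle w t t₀]
  have hmem0 : t₀ ∈ Metric.ball t₀ (r / 2) := Metric.mem_ball_self (by positivity)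
  have hderivmeas : AEStronglyMeasurable (fun a => deriv (fun t => F t a) t₀) ν := by
    obtain ⟨u, hu⟩ : ∃ u : ℕ → ℂ, Tendsto u atTop (nhdsWithin t₀ {t₀}ᶜ) :=
      Filter.exists_seq_tendsto _
    have hu' : ∀ᶠ k in atTop, u k ∈ U :=
      (hu.mono_right nhdsWithin_le_nhds).eventually (hU.mem_nhds ht₀)
    obtain ⟨N, hN⟩ := eventually_atTop.1 hu'
    refine aestronglyMeasurable_of_tendsto_ae atTop
      (f := fun (k : ℕ) a => slope (fun t => F t a) t₀ (u (k + N))) ?_ ?_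
    · intro k
      simp only [slope, vsub_eq_sub]
      exact ((hmeas _ (hN _ (by omega))).sub (hmeas _ ht₀)).const_smul (u (k + N) - t₀)⁻¹
    · filter_upwards [hdiff] with a ha
      have h1 : HasDerivAt (fun t => F t a) (deriv (fun t => F t a) t₀) t₀ :=
        ((ha t₀ ht₀).differentiableAt (hU.mem_nhds ht₀)).hasDerivAt
      exact (hasDerivAt_iff_tendsto_slope.1 h1).comp (hu.comp (tendsto_add_atTop_nat N))
  have := hasDerivAt_integral_of_dominated_loc_of_deriv_le (μ := ν) (F := F) (x₀ := t₀)
    (s := Metric.ball t₀ (r / 2)) (bound := fun a => g a / r)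
    (F' := fun t a => deriv (fun t => F t a) t)
    (Metric.ball_mem_nhds _ (by positivity)) ?_ ?_ hderivmeas ?_ ?_ ?_
  · exact this.2.differentiableAt.differentiableWithinAt
  · filter_upwards [hU.mem_nhds ht₀] with t ht using hmeas t ht
  · refine hg.mono' (hmeas _ ht₀) ?_
    filter_upwards [hb] with a ha using ha t₀ (Metric.mem_ball_self hR)
  · filter_upwards [hb, hdiff] with a ha hd t ht
    refine Complex.norm_deriv_le_of_forall_mem_sphere_norm_le hrp ?_ ?_
    · exact (hd.mono ((hloc t ht).trans hsubU)).diffContOnCl_ball (c := t) (R := r) subset_rfl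
    · intro w hw
      exact ha w (Metric.ball_subset_ball hr1 (hloc t ht (Metric.sphere_subset_closedBall hw)))
  · exact hg.div_const r
  · filter_upwards [hdiff] with a hd t ht
    have htU : t ∈ U := hsubU (hloc t ht (Metric.mem_closedBall_self hrp.le))
    exact ((hd t htU).differentiableAt (hU.mem_nhds htU)).hasDerivAt

lemma Kc_holo {n : ℕ} (hn : 1 ≤ n) {α : ℝ} (hα : 0 < α) (x : EuclideanSpace ℝ (Fin n)) :
    DifferentiableOn ℂ (fun t => Kc n α t x) {t : ℂ | 0 < t.re} := by
  have hU : IsOpen {t : ℂ | 0 < t.re} := isOpen_lt continuous_const Complex.continuous_re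
  unfold Kc
  refine DifferentiableOn.const_smul (f := fun t : ℂ =>
    ∫ ξ : EuclideanSpace ℝ (Fin n),
      Complex.exp (Complex.I * ((inner ℝ x ξ : ℝ) : ℂ)) * symb n α t ξ) ?_
    ((2 * Real.pi) ^ (-(n : ℝ)) : ℝ)
  apply holo_integral _ hU
  · intro t ht
    exact (aux_osc_integrable x (integrable_symb hn hα ht)).aestronglyMeasurable
  · refine Eventually.of_forall fun ξ => ?_
    unfold symb
    fun_prop
  · intro t₀ ht₀
    have ht₀' : 0 < t₀.re := ht₀
    refine ⟨t₀.re / 2, by positivity, _, integrable_exp_norm hn hα (b := t₀.re / 2) (by positivity),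
      Eventually.of_forall fun ξ t ht => ?_⟩
    rw [norm_mul, norm_symb, Complex.norm_exp]
    simp only [Complex.mul_re, Complex.I_re, Complex.I_im, Complex.ofReal_im, zero_mul, mul_zero,
      sub_self, Real.exp_zero, one_mul]
    rw [Metric.mem_ball, dist_eq_norm] at ht
    have h1 := (abs_lt.1 ((Complex.abs_re_le_norm _).trans_lt ht)).1
    rw [Complex.sub_re] at h1
    have : 0 ≤ ‖ξ‖ ^ (2 * α) := by positivity
    apply Real.exp_le_exp.2
    nlinarith

/-- pointwise majorant -/
noncomputable def mEN (n : ℕ) (α : ℝ) (t : ℝ) (x : EuclideanSpace ℝ (Fin n)) : ℝ≥0∞ :=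
  min (ENNReal.ofReal t * (ENNReal.ofReal ‖x‖ ^ ((n : ℝ) + 2 * α))⁻¹)
    (ENNReal.ofReal (t ^ (-(n : ℝ) / (2 * α))))

/-- resolvent majorant -/
noncomputable def gEN (n : ℕ) (α : ℝ) (μ : ℝ) (x : EuclideanSpace ℝ (Fin n)) : ℝ≥0∞ :=
  ∫⁻ t in Set.Ioi (0 : ℝ), ENNReal.ofReal (Real.exp (-μ * t)) * mEN n α t x

lemma ofReal_rpow_neg {r p : ℝ} (hr : 0 < r) :
    (ENNReal.ofReal r ^ p)⁻¹ = ENNReal.ofReal (r ^ (-p)) := by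
  rw [ENNReal.ofReal_rpow_of_pos hr, ← ENNReal.ofReal_inv_of_pos (by positivity),
    Real.rpow_neg hr.le]

lemma K0_le_mEN {n : ℕ} (hn : 1 ≤ n) {α : ℝ} (hα : 0 < α) : ∃ C : ℝ≥0∞, C ≠ ⊤ ∧
    ∀ t : ℝ, 0 < t → ∀ x : EuclideanSpace ℝ (Fin n), ‖K0 n α t x‖ₑ ≤ C * mEN n α t x := by
  obtain ⟨C1, hC1, h1⟩ := Kc_bound_unif hn hα
  obtain ⟨C2, hC2, h2⟩ := Kc_bound_decay hn hα
  refine ⟨ENNReal.ofReal (C1 + C2 + 1), ENNReal.ofReal_ne_top, fun t ht x => ?_⟩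
  rw [mEN, mul_min_of_nonneg, ← ofReal_norm, K0_eq_Kc]
  swap
  · exact zero_le
  apply le_min
  · rcases eq_or_ne x 0 with rfl | hx
    · have hp : 0 < (n : ℝ) + 2 * α := by positivity
      simp only [norm_zero, ENNReal.ofReal_zero, ENNReal.zero_rpow_of_pos hp, ENNReal.inv_zero]
      rw [ENNReal.mul_top (by simpa using ht), ENNReal.mul_top]
      · exact le_top
      · simp; linarith
    · rw [ofReal_rpow_neg (norm_pos_iff.2 hx), ← ENNReal.ofReal_mul ht.le,
        ← ENNReal.ofReal_mul (by positivity)]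
      apply ENNReal.ofReal_le_ofReal
      have := h2 (t : ℂ) (by simpa using ht) (by simp [abs_of_pos ht]; linarith) x hx
      simp only [Complex.norm_real, Real.norm_of_nonneg ht.le] at this
      refine this.trans ?_
      rw [mul_assoc]
      gcongr
      linarith
  · rw [← ENNReal.ofReal_mul (by positivity)]
    apply ENNReal.ofReal_le_ofReal
    have := h1 (t : ℂ) (by simpa using ht) x
    simp only [Complex.ofReal_re] at this
    refine this.trans ?_
    gcongr
    linarith

lemma mEN_doubling {n : ℕ} {α : ℝ} (hα : 0 < α) (t : ℝ) {x y : EuclideanSpace ℝ (Fin n)}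
    (h : ‖y‖ ≤ 2 * ‖x‖) : mEN n α t x ≤ 2 ^ ((n : ℝ) + 2 * α) * mEN n α t y := by
  have hp : 0 < (n : ℝ) + 2 * α := by positivity
  rw [mEN, mEN, mul_min_of_nonneg _ _ zero_le]
  have hone : (1 : ℝ≥0∞) ≤ 2 ^ ((n : ℝ) + 2 * α) := ENNReal.one_le_rpow (by norm_num) hp
  apply min_le_min
  · rw [mul_left_comm]
    gcongr
    have h2 : ENNReal.ofReal ‖y‖ ≤ 2 * ENNReal.ofReal ‖x‖ := by
      have := ENNReal.ofReal_le_ofReal h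
      rwa [ENNReal.ofReal_mul (by norm_num), ENNReal.ofReal_ofNat] at this
    have h3 : ENNReal.ofReal ‖y‖ ^ ((n : ℝ) + 2 * α) ≤
        2 ^ ((n : ℝ) + 2 * α) * ENNReal.ofReal ‖x‖ ^ ((n : ℝ) + 2 * α) := by
      rw [← ENNReal.mul_rpow_of_nonneg _ _ hp.le]
      gcongr
    have h0 : (2 : ℝ≥0∞) ^ ((n : ℝ) + 2 * α) ≠ 0 := (zero_lt_one.trans_le hone).ne'
    have ht : (2 : ℝ≥0∞) ^ ((n : ℝ) + 2 * α) ≠ ⊤ := ENNReal.rpow_ne_top_of_nonneg hp.le (by simp)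
    calc (ENNReal.ofReal ‖x‖ ^ ((n : ℝ) + 2 * α))⁻¹
        = 2 ^ ((n : ℝ) + 2 * α) *
          (2 ^ ((n : ℝ) + 2 * α) * ENNReal.ofReal ‖x‖ ^ ((n : ℝ) + 2 * α))⁻¹ := by
          rw [ENNReal.mul_inv (Or.inl h0) (Or.inl ht), ← mul_assoc, ENNReal.mul_inv_cancel h0 ht,
            one_mul]
      _ ≤ _ := by gcongr
  · calc _ = 1 * ENNReal.ofReal (t ^ (-(n : ℝ) / (2 * α))) := (one_mul _).symm
      _ ≤ _ := by gcongr

lemma measurable_mEN (n : ℕ) (α : ℝ) :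
    Measurable (fun p : ℝ × EuclideanSpace ℝ (Fin n) => mEN n α p.1 p.2) := by
  unfold mEN
  fun_prop

lemma measurable_gEN (n : ℕ) (α μ : ℝ) : Measurable (gEN n α μ) := by
  unfold gEN
  apply Measurable.lintegral_prod_right'
    (f := fun p : EuclideanSpace ℝ (Fin n) × ℝ =>
      ENNReal.ofReal (Real.exp (-μ * p.2)) * mEN n α p.2 p.1)
  have : Measurable (fun p : EuclideanSpace ℝ (Fin n) × ℝ => mEN n α p.2 p.1) :=
    (measurable_mEN n α).comp measurable_swap
  fun_prop

lemma gEN_doubling {n : ℕ} {α : ℝ} (hα : 0 < α) (μ : ℝ) {x y : EuclideanSpace ℝ (Fin n)}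
    (h : ‖y‖ ≤ 2 * ‖x‖) : gEN n α μ x ≤ 2 ^ ((n : ℝ) + 2 * α) * gEN n α μ y := by
  have hp : 0 < (n : ℝ) + 2 * α := by positivity
  have ht : (2 : ℝ≥0∞) ^ ((n : ℝ) + 2 * α) ≠ ⊤ := ENNReal.rpow_ne_top_of_nonneg hp.le (by simp)
  rw [gEN, gEN, ← lintegral_const_mul' _ _ ht]
  apply lintegral_mono
  intro t
  simp only
  rw [mul_left_comm]
  gcongr
  exact mEN_doubling hα t h

lemma gEN_threeG {n : ℕ} {α : ℝ} (hα : 0 < α) (μ : ℝ) (x y z : EuclideanSpace ℝ (Fin n)) :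
    gEN n α μ (x - z) * gEN n α μ (z - y) ≤ 2 ^ ((n : ℝ) + 2 * α) * gEN n α μ (x - y) *
      (gEN n α μ (x - z) + gEN n α μ (z - y)) := by
  have htri : ‖x - y‖ ≤ ‖x - z‖ + ‖z - y‖ := by
    calc ‖x - y‖ = ‖(x - z) + (z - y)‖ := by congr 1; abel
      _ ≤ _ := norm_add_le _ _
  rcases le_total ‖x - z‖ ‖z - y‖ with h | h
  · have := gEN_doubling hα μ (n := n) (x := z - y) (y := x - y) (by linarith)
    calc _ ≤ gEN n α μ (x - z) * (2 ^ ((n : ℝ) + 2 * α) * gEN n α μ (x - y)) := by gcongr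
      _ = 2 ^ ((n : ℝ) + 2 * α) * gEN n α μ (x - y) * gEN n α μ (x - z) := by ring
      _ ≤ _ := by gcongr; exact le_self_add
  · have := gEN_doubling hα μ (n := n) (x := x - z) (y := x - y) (by linarith)
    calc _ ≤ (2 ^ ((n : ℝ) + 2 * α) * gEN n α μ (x - y)) * gEN n α μ (z - y) := by gcongr
      _ ≤ _ := by gcongr; exact le_add_self

lemma gEN_decay (n : ℕ) (α : ℝ) {μ : ℝ} (hμ : 0 < μ) : ∃ C : ℝ≥0∞, C ≠ ⊤ ∧
    ∀ x : EuclideanSpace ℝ (Fin n), x ≠ 0 →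
      gEN n α μ x ≤ C * ENNReal.ofReal (‖x‖ ^ (-((n : ℝ) + 2 * α))) := by
  have hIntg : IntegrableOn (fun t : ℝ => Real.exp (-μ * t) * t) (Set.Ioi 0) := by
    have := integrableOn_rpow_mul_exp_neg_mul_rpow (p := 1) (s := 1) (b := μ) (by norm_num)
      one_pos hμ
    simpa [mul_comm] using this
  refine ⟨∫⁻ t in Set.Ioi (0 : ℝ), ENNReal.ofReal (Real.exp (-μ * t) * t), ?_, fun x hx => ?_⟩
  · exact hIntg.lintegral_lt_top.ne
  · rw [gEN, ← lintegral_mul_const' _ _ ENNReal.ofReal_ne_top]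
    apply lintegral_mono
    intro t
    simp only
    rw [ENNReal.ofReal_mul (Real.exp_pos _).le, mul_assoc, ← ofReal_rpow_neg (norm_pos_iff.2 hx)]
    gcongr
    exact min_le_left _ _

lemma gEN_ne_top (n : ℕ) (α : ℝ) {μ : ℝ} (hμ : 0 < μ) {x : EuclideanSpace ℝ (Fin n)}
    (hx : x ≠ 0) : gEN n α μ x ≠ ⊤ := by
  obtain ⟨C, hC, h⟩ := gEN_decay n α hμ
  exact ne_top_of_le_ne_top (ENNReal.mul_ne_top hC ENNReal.ofReal_ne_top) (h x hx)

/-- splitting at time `T` -/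
lemma gEN_split (n : ℕ) {α μ : ℝ} (hμ : 0 < μ) {x : EuclideanSpace ℝ (Fin n)}
    (hx : x ≠ 0) {T : ℝ} (hT : T = ‖x‖ ^ (2 * α)) :
    gEN n α μ x ≤ ENNReal.ofReal (‖x‖ ^ (2 * α - (n : ℝ))) +
      ∫⁻ t in Set.Ioi T, ENNReal.ofReal (Real.exp (-μ * t) * t ^ (-(n : ℝ) / (2 * α))) := by
  have hxp := norm_pos_iff.2 hx
  have hTp : 0 < T := by rw [hT]; positivity
  rw [gEN, ← Set.Ioc_union_Ioi_eq_Ioi hTp.le]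
  refine (lintegral_union_le _ _ _).trans ?_
  gcongr
  · calc ∫⁻ t in Set.Ioc 0 T, ENNReal.ofReal (Real.exp (-μ * t)) * mEN n α t x
        ≤ ∫⁻ t in Set.Ioc 0 T, ENNReal.ofReal (T * ‖x‖ ^ (-((n : ℝ) + 2 * α))) := by
          apply setLIntegral_mono' measurableSet_Ioc
          intro t ht
          rw [ENNReal.ofReal_mul hTp.le]
          calc _ ≤ 1 * (ENNReal.ofReal t * (ENNReal.ofReal ‖x‖ ^ ((n : ℝ) + 2 * α))⁻¹) := by
                gcongr
                · rw [ENNReal.ofReal_le_one]; apply Real.exp_le_one_iff.2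
                  have := ht.1
                  nlinarith
                · exact min_le_left _ _
            _ ≤ _ := by
                rw [one_mul, ofReal_rpow_neg hxp]
                gcongr
                exact ht.2
      _ = ENNReal.ofReal (‖x‖ ^ (2 * α - (n : ℝ))) := by
          rw [setLIntegral_const, Real.volume_Ioc, sub_zero, ← ENNReal.ofReal_mul (by positivity)]
          congr 1
          rw [hT, ← Real.rpow_add hxp, ← Real.rpow_add hxp]
          congr 1; ring
  · rw [ENNReal.ofReal_mul (Real.exp_pos _).le]
    gcongr
    exact min_le_right _ _

lemma gEN_local_lt {n : ℕ} {α : ℝ} (hα : 0 < α) (h : 2 * α < n) {μ : ℝ} (hμ : 0 < μ) :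
    ∃ C : ℝ, 0 ≤ C ∧ ∀ x : EuclideanSpace ℝ (Fin n), x ≠ 0 →
      gEN n α μ x ≤ ENNReal.ofReal (C * ‖x‖ ^ (2 * α - (n : ℝ))) := by
  set s : ℝ := -(n : ℝ) / (2 * α) with hs
  have hs1 : s < -1 := by rw [hs, div_lt_iff₀ (by positivity)]; linarith
  refine ⟨1 + -1 / (s + 1), ?_, fun x hx => ?_⟩
  · have : 0 ≤ -1 / (s + 1) := div_nonneg_of_nonpos (by norm_num) (by linarith)
    linarith
  have hxp := norm_pos_iff.2 hx
  set T := ‖x‖ ^ (2 * α) with hT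
  have hTp : 0 < T := by positivity
  refine (gEN_split n hμ hx hT).trans ?_
  have e : ∫⁻ t in Set.Ioi T, ENNReal.ofReal (Real.exp (-μ * t) * t ^ s) ≤
      ENNReal.ofReal (-1 / (s + 1) * ‖x‖ ^ (2 * α - (n : ℝ))) := by
    calc _ ≤ ∫⁻ t in Set.Ioi T, ENNReal.ofReal (t ^ s) := by
          apply setLIntegral_mono' measurableSet_Ioi
          intro t ht
          have htp : 0 < t := hTp.trans ht
          apply ENNReal.ofReal_le_ofReal
          have : Real.exp (-μ * t) ≤ 1 := Real.exp_le_one_iff.2 (by nlinarith)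
          have : 0 ≤ t ^ s := by positivity
          nlinarith
      _ = ENNReal.ofReal (∫ t in Set.Ioi T, t ^ s) := by
          rw [ofReal_integral_eq_lintegral_ofReal (integrableOn_Ioi_rpow_of_lt hs1 hTp)]
          exact (ae_restrict_iff' measurableSet_Ioi).2 (Eventually.of_forall fun t ht =>
            Real.rpow_nonneg (hTp.trans ht).le _)
      _ = _ := by
          rw [integral_Ioi_rpow_of_lt hs1 hTp]
          congr 1
          rw [hT, ← Real.rpow_mul hxp.le]
          have : 2 * α * (s + 1) = 2 * α - n := by rw [hs]; field_simp; ring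
          rw [this]; ring
  refine (add_le_add_right e _).trans ?_
  rw [← ENNReal.ofReal_add (by positivity)]
  · apply ENNReal.ofReal_le_ofReal; linarith
  · have : 0 ≤ -1 / (s + 1) := div_nonneg_of_nonpos (by norm_num) (by linarith)
    positivity

lemma gEN_local_eq {n : ℕ} {α : ℝ} (hα : 0 < α) (h : 2 * α = n) {μ : ℝ} (hμ : 0 < μ) :
    ∃ C : ℝ, 0 ≤ C ∧ ∀ x : EuclideanSpace ℝ (Fin n), x ≠ 0 → ‖x‖ ≤ 1 →
      gEN n α μ x ≤ ENNReal.ofReal (C + Real.log (‖x‖ ^ (-(n : ℝ)))) := by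
  have hIntg : IntegrableOn (fun t : ℝ => Real.exp (-μ * t)) (Set.Ioi 1) :=
    integrableOn_exp_mul_Ioi (by linarith) 1
  set A := ∫ t in Set.Ioi (1:ℝ), Real.exp (-μ * t) with hA
  have hA0 : 0 ≤ A := setIntegral_nonneg measurableSet_Ioi fun t _ => (Real.exp_pos _).le
  refine ⟨1 + A, by positivity, fun x hx hx1 => ?_⟩
  have hxp := norm_pos_iff.2 hx
  set T := ‖x‖ ^ (2 * α) with hT
  have hTp : 0 < T := by positivity
  have hT1 : T ≤ 1 := Real.rpow_le_one hxp.le hx1 (by positivity)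
  have hlog : Real.log (‖x‖ ^ (-(n : ℝ))) = Real.log (1 / T) := by
    rw [hT, h, Real.rpow_neg hxp.le, one_div]
  have hlog0 : 0 ≤ Real.log (1 / T) := Real.log_nonneg (by rw [le_div_iff₀ hTp]; linarith)
  refine (gEN_split n hμ hx hT).trans ?_
  have hs : -(n : ℝ) / (2 * α) = -1 := by rw [← h]; field_simp
  rw [hs, hlog, h, sub_self, Real.rpow_zero, ← Set.Ioc_union_Ioi_eq_Ioi hT1, add_assoc,
    ENNReal.ofReal_add zero_le_one (by positivity)]
  gcongr
  refine (lintegral_union_le _ _ _).trans ?_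
  rw [add_comm, ENNReal.ofReal_add hA0 hlog0]
  gcongr
  · rw [hA, ofReal_integral_eq_lintegral_ofReal hIntg
      (Eventually.of_forall fun t => (Real.exp_pos _).le)]
    apply setLIntegral_mono' measurableSet_Ioi
    intro t ht
    have ht1 : 1 < t := ht
    apply ENNReal.ofReal_le_ofReal
    have h1 : t ^ (-1 : ℝ) ≤ 1 := Real.rpow_le_one_of_one_le_of_nonpos ht1.le (by norm_num)
    have := Real.exp_pos (-μ * t)
    nlinarith
  · have e : Real.log (1 / T) = ∫ t in T..1, t⁻¹ := by
      rw [integral_inv_of_pos hTp one_pos]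
    have hii : IntervalIntegrable (fun t : ℝ => t⁻¹) volume T 1 := by
      apply intervalIntegral.intervalIntegrable_inv
      · intro t ht
        rw [Set.uIcc_of_le hT1] at ht
        exact (hTp.trans_le ht.1).ne'
      · fun_prop
    rw [e, intervalIntegral.integral_of_le hT1,
      ofReal_integral_eq_lintegral_ofReal ((intervalIntegrable_iff_integrableOn_Ioc_of_le hT1).1 hii)]
    · apply setLIntegral_mono' measurableSet_Ioc
      intro t ht
      have htp : 0 < t := hTp.trans ht.1
      apply ENNReal.ofReal_le_ofReal
      rw [Real.rpow_neg_one]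
      have : Real.exp (-μ * t) ≤ 1 := Real.exp_le_one_iff.2 (by nlinarith)
      have : 0 ≤ t⁻¹ := by positivity
      nlinarith
    · exact (ae_restrict_iff' measurableSet_Ioc).2 (Eventually.of_forall fun t ht =>
        inv_nonneg.2 (hTp.trans ht.1).le)

lemma gEN_local_gt {n : ℕ} {α : ℝ} (hα : 0 < α) (h : (n : ℝ) < 2 * α) {μ : ℝ} (hμ : 0 < μ) :
    ∃ C : ℝ≥0∞, C ≠ ⊤ ∧ ∀ x : EuclideanSpace ℝ (Fin n), gEN n α μ x ≤ C := by
  set s : ℝ := -(n : ℝ) / (2 * α) with hs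
  have hs1 : -1 < s := by rw [hs, lt_div_iff₀ (by positivity)]; linarith
  have hIntg : IntegrableOn (fun t : ℝ => Real.exp (-μ * t) * t ^ s) (Set.Ioi 0) := by
    have := integrableOn_rpow_mul_exp_neg_mul_rpow (p := 1) (s := s) (b := μ) hs1
      one_pos hμ
    simpa [mul_comm] using this
  refine ⟨_, hIntg.lintegral_lt_top.ne, fun x => ?_⟩
  rw [gEN]
  apply lintegral_mono
  intro t
  simp only
  rw [ENNReal.ofReal_mul (Real.exp_pos _).le]
  gcongr
  exact min_le_right _ _

lemma kato_local {n : ℕ} (hn : 1 ≤ n) {α : ℝ} (hα : 0 < α) {V : EuclideanSpace ℝ (Fin n) → ℝ}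
    (hV : katoClass n α V) {μ : ℝ} (hμ : 0 < μ) :
    ∃ δ : ℝ, 0 < δ ∧ δ ≤ 1 ∧ ∃ A : ℝ≥0∞, A ≠ ⊤ ∧
      (∀ x, ∫⁻ y in Metric.ball x δ, gEN n α μ (x - y) * ‖V y‖ₑ ≤ A) ∧
      (∀ x, ∫⁻ y in Metric.ball x δ, ‖V y‖ₑ ≤ A) := by
  have : Nonempty (Fin n) := ⟨⟨0, hn⟩⟩
  have : Nontrivial (EuclideanSpace ℝ (Fin n)) := inferInstance
  have hne : ∀ x : EuclideanSpace ℝ (Fin n), ∀ δ : ℝ,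
      ∀ᵐ y ∂(volume.restrict (Metric.ball x δ)), x - y ≠ 0 := by
    intro x δ
    apply ae_restrict_of_ae
    have : ∀ᵐ y ∂(volume : Measure (EuclideanSpace ℝ (Fin n))), y ∈ ({x} : Set _)ᶜ :=
      compl_mem_ae_iff.2 (measure_singleton x)
    filter_upwards [this] with y hy h0
    exact hy (sub_eq_zero.1 h0).symm
  have key : ∀ (w : EuclideanSpace ℝ (Fin n) → ℝ) (δ C : ℝ) (A : ℝ≥0∞), 0 ≤ C →
      A ≠ ⊤ → 0 < δ → δ ≤ 1 →
      (∀ x, x ≠ 0 → ‖x‖ < δ → gEN n α μ x ≤ ENNReal.ofReal (C * w x)) →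
      (∀ x, x ≠ 0 → ‖x‖ < δ → 1 ≤ w x) →
      (⨆ x : EuclideanSpace ℝ (Fin n),
        ∫⁻ y in Metric.ball x δ, ENNReal.ofReal (w (x - y) * |V y|)) ≤ A →
      ∃ δ : ℝ, 0 < δ ∧ δ ≤ 1 ∧ ∃ A : ℝ≥0∞, A ≠ ⊤ ∧
      (∀ x, ∫⁻ y in Metric.ball x δ, gEN n α μ (x - y) * ‖V y‖ₑ ≤ A) ∧
      (∀ x, ∫⁻ y in Metric.ball x δ, ‖V y‖ₑ ≤ A) := by
    intro w δ C A hC hA hδ hδ1 h1 h2 h3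
    refine ⟨δ, hδ, hδ1, ENNReal.ofReal (C + 1) * A,
      ENNReal.mul_ne_top ENNReal.ofReal_ne_top hA, fun x => ?_, fun x => ?_⟩
    · refine le_trans ?_ (mul_le_mul_right ((le_iSup _ x).trans h3) _)
      rw [← lintegral_const_mul' _ _ ENNReal.ofReal_ne_top]
      apply lintegral_mono_ae
      filter_upwards [hne x δ, ae_restrict_mem measurableSet_ball] with y hy hyb
      have hyn : ‖x - y‖ < δ := by rwa [Metric.mem_ball, dist_comm, dist_eq_norm] at hyb
      have hw := h2 _ hy hyn
      rw [Real.enorm_eq_ofReal_abs, ENNReal.ofReal_mul (by linarith), ← mul_assoc]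
      gcongr
      refine (h1 _ hy hyn).trans ?_
      rw [← ENNReal.ofReal_mul (by linarith)]
      apply ENNReal.ofReal_le_ofReal
      nlinarith
    · have : (1 : ℝ≥0∞) * A ≤ ENNReal.ofReal (C + 1) * A := by
        gcongr
        rw [ENNReal.one_le_ofReal]; linarith
      refine le_trans ?_ this
      rw [one_mul]
      refine le_trans ?_ ((le_iSup _ x).trans h3)
      apply lintegral_mono_ae
      filter_upwards [hne x δ, ae_restrict_mem measurableSet_ball] with y hy hyb
      have hyn : ‖x - y‖ < δ := by rwa [Metric.mem_ball, dist_comm, dist_eq_norm] at hyb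
      have hw := h2 _ hy hyn
      rw [Real.enorm_eq_ofReal_abs]
      apply ENNReal.ofReal_le_ofReal
      have := abs_nonneg (V y)
      nlinarith
  have pick : ∀ (w : EuclideanSpace ℝ (Fin n) → ℝ),
      Tendsto (fun δ : ℝ => ⨆ x : EuclideanSpace ℝ (Fin n),
        ∫⁻ y in Metric.ball x δ, ENNReal.ofReal (w (x - y) * |V y|))
      (nhdsWithin 0 (Set.Ioi 0)) (nhds 0) → ∃ δ : ℝ, 0 < δ ∧ δ ≤ Real.exp (-1) ∧
      (⨆ x : EuclideanSpace ℝ (Fin n),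
        ∫⁻ y in Metric.ball x δ, ENNReal.ofReal (w (x - y) * |V y|)) ≤ 1 := by
    intro w hw
    have h1 := hw.eventually (gt_mem_nhds one_pos)
    have h2 : ∀ᶠ δ : ℝ in nhdsWithin 0 (Set.Ioi 0), δ < Real.exp (-1) :=
      nhdsWithin_le_nhds (gt_mem_nhds (Real.exp_pos _))
    obtain ⟨δ, ⟨h1, h2⟩, h3⟩ := ((h1.and h2).and self_mem_nhdsWithin).exists
    exact ⟨δ, h3, h2.le, h1.le⟩
  have hexp1 : Real.exp (-1) ≤ 1 := Real.exp_le_one_iff.2 (by norm_num)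
  unfold katoClass at hV
  split_ifs at hV with hc1 hc2
  · obtain ⟨δ, hδ, hδ1, hδ2⟩ := pick (fun x => ‖x‖ ^ (2 * α - (n : ℝ))) hV
    obtain ⟨C, hC, hg⟩ := gEN_local_lt hα hc1 hμ
    refine key _ δ C 1 hC (by simp) hδ (hδ1.trans hexp1) (fun x hx _ => hg x hx) ?_ hδ2
    intro x hx hxδ
    exact Real.one_le_rpow_of_pos_of_le_one_of_nonpos (norm_pos_iff.2 hx)
      (by linarith) (by linarith)
  · obtain ⟨δ, hδ, hδ1, hδ2⟩ := pick (fun x => Real.log (‖x‖ ^ (-(n : ℝ)))) hV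
    obtain ⟨C, hC, hg⟩ := gEN_local_eq hα hc2 hμ
    have hlog : ∀ x : EuclideanSpace ℝ (Fin n), x ≠ 0 → ‖x‖ < δ →
        1 ≤ Real.log (‖x‖ ^ (-(n : ℝ))) := by
      intro x hx hxδ
      have hxp := norm_pos_iff.2 hx
      rw [Real.log_rpow hxp]
      have h1 : Real.log ‖x‖ ≤ -1 := by
        rw [Real.log_le_iff_le_exp hxp]; linarith
      have : (1 : ℝ) ≤ n := by exact_mod_cast hn
      nlinarith
    refine key _ δ (C + 1) 1 (by positivity) (by simp) hδ (hδ1.trans hexp1) ?_ hlog hδ2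
    intro x hx hxδ
    refine (hg x hx (by linarith)).trans (ENNReal.ofReal_le_ofReal ?_)
    have := hlog x hx hxδ
    nlinarith
  · have hc3 : (n : ℝ) < 2 * α := lt_of_le_of_ne (not_lt.1 hc1) (Ne.symm hc2)
    obtain ⟨C, hC, hg⟩ := gEN_local_gt hα hc3 hμ
    refine key (fun _ => 1) 1 C.toReal _ (by positivity) hV.ne one_pos le_rfl ?_ ?_ ?_
    · intro x _ _
      rw [mul_one, ENNReal.ofReal_toReal hC]; exact hg x
    · intro x _ _; exact le_rfl
    · simp only [one_mul]; exact le_rfl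

lemma weight_integral {n : ℕ} {p : ℝ} (hp : (n : ℝ) < p) {V : EuclideanSpace ℝ (Fin n) → ℝ}
    (hVm : Measurable V) {δ : ℝ} (hδ : 0 < δ) (hδ1 : δ ≤ 1) {A : ℝ≥0∞} (hA : A ≠ ⊤)
    (hloc : ∀ x, ∫⁻ y in Metric.ball x δ, ‖V y‖ₑ ≤ A) :
    ∃ B : ℝ≥0∞, B ≠ ⊤ ∧ ∀ x : EuclideanSpace ℝ (Fin n),
      ∫⁻ y, ENNReal.ofReal ((1 + ‖x - y‖) ^ (-p)) * ‖V y‖ₑ ≤ B := by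
  have hp0 : 0 < p := lt_of_le_of_lt (by positivity) hp
  set v := volume (Metric.ball (0 : EuclideanSpace ℝ (Fin n)) δ) with hv
  have hv0 : v ≠ 0 := (Metric.measure_ball_pos _ _ hδ).ne'
  have hvt : v ≠ ⊤ := measure_ball_lt_top.ne
  have hIntg : Integrable (fun ξ : EuclideanSpace ℝ (Fin n) => (1 + ‖ξ‖) ^ (-p)) := by
    apply integrable_one_add_norm
    rwa [finrank_euclideanSpace_fin]
  set J := ∫⁻ ξ : EuclideanSpace ℝ (Fin n), ENNReal.ofReal ((1 + ‖ξ‖) ^ (-p)) with hJ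
  have hJt : J ≠ ⊤ := hIntg.lintegral_lt_top.ne
  set D := ENNReal.ofReal (2 ^ p) with hD
  have hDt : D ≠ ⊤ := ENNReal.ofReal_ne_top
  refine ⟨v⁻¹ * (D * (J * A)), ENNReal.mul_ne_top (ENNReal.inv_ne_top.2 hv0)
    (ENNReal.mul_ne_top hDt (ENNReal.mul_ne_top hJt hA)), fun x => ?_⟩
  have hpt : ∀ y z : EuclideanSpace ℝ (Fin n), dist z y < δ →
      ENNReal.ofReal ((1 + ‖x - y‖) ^ (-p)) ≤ D * ENNReal.ofReal ((1 + ‖x - z‖) ^ (-p)) := by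
    intro y z hyz
    rw [hD, ← ENNReal.ofReal_mul (by positivity)]
    apply ENNReal.ofReal_le_ofReal
    have : (2:ℝ) ^ p = (1 / 2) ^ (-p) := by
      rw [one_div, Real.inv_rpow (by norm_num), Real.rpow_neg (by norm_num), inv_inv]
    rw [this, ← Real.mul_rpow (by norm_num) (by positivity)]
    apply Real.rpow_le_rpow_of_nonpos (by positivity) _ (by linarith)
    have h1 : ‖x - z‖ ≤ ‖x - y‖ + ‖z - y‖ := by
      calc ‖x - z‖ = ‖(x - y) - (z - y)‖ := by congr 1; abel
        _ ≤ _ := norm_sub_le _ _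
    rw [dist_eq_norm] at hyz
    have := norm_nonneg (x - y)
    linarith
  set S : Set (EuclideanSpace ℝ (Fin n) × EuclideanSpace ℝ (Fin n)) :=
    {q | dist q.2 q.1 < δ} with hS
  have hSm : MeasurableSet S := measurableSet_lt (by fun_prop) measurable_const
  have hmain : v * ∫⁻ y, ENNReal.ofReal ((1 + ‖x - y‖) ^ (-p)) * ‖V y‖ₑ ≤ D * (J * A) := by
    calc v * ∫⁻ y, ENNReal.ofReal ((1 + ‖x - y‖) ^ (-p)) * ‖V y‖ₑ
        = ∫⁻ y, ∫⁻ z, S.indicator (fun q => ENNReal.ofReal ((1 + ‖x - q.1‖) ^ (-p)) * ‖V q.1‖ₑ)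
            (y, z) := by
          rw [← lintegral_const_mul' _ _ hvt]
          congr 1; ext y
          have : ∀ z, S.indicator (fun q => ENNReal.ofReal ((1 + ‖x - q.1‖) ^ (-p)) * ‖V q.1‖ₑ)
            (y, z) = (Metric.ball y δ).indicator
              (fun _ => ENNReal.ofReal ((1 + ‖x - y‖) ^ (-p)) * ‖V y‖ₑ) z := by
            intro z
            simp only [Set.indicator, hS, Set.mem_ofPred_eq, Metric.mem_ball]
          simp only [this]
          rw [lintegral_indicator_const measurableSet_ball, mul_comm, hv,
            Measure.addHaar_ball_center volume y]
      _ ≤ ∫⁻ y, ∫⁻ z, S.indicator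
            (fun q => D * ENNReal.ofReal ((1 + ‖x - q.2‖) ^ (-p)) * ‖V q.1‖ₑ) (y, z) := by
          apply lintegral_mono; intro y
          apply lintegral_mono; intro z
          simp only [Set.indicator]
          split_ifs with h
          · gcongr
            exact hpt y z h
          · exact le_rfl
      _ = ∫⁻ z, ∫⁻ y, S.indicator
            (fun q => D * ENNReal.ofReal ((1 + ‖x - q.2‖) ^ (-p)) * ‖V q.1‖ₑ) (y, z) := by
          apply lintegral_lintegral_swap
          apply Measurable.aemeasurable
          apply Measurable.indicator _ hSm
          fun_prop
      _ = ∫⁻ z, D * ENNReal.ofReal ((1 + ‖x - z‖) ^ (-p)) *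
            ∫⁻ y in Metric.ball z δ, ‖V y‖ₑ := by
          congr 1; ext z
          rw [← lintegral_const_mul' _ _ (ENNReal.mul_ne_top hDt ENNReal.ofReal_ne_top),
            ← lintegral_indicator measurableSet_ball]
          congr 1; ext y
          simp only [Set.indicator, hS, Set.mem_ofPred_eq, Metric.mem_ball, dist_comm]
      _ ≤ ∫⁻ z, D * (ENNReal.ofReal ((1 + ‖x - z‖) ^ (-p)) * A) := by
          apply lintegral_mono; intro z
          simp only
          rw [mul_assoc]
          gcongr
          exact hloc z
      _ = D * (J * A) := by
          rw [lintegral_const_mul' _ _ hDt, lintegral_mul_const' _ _ hA, hJ,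
            lintegral_sub_left_eq_self (fun ξ => ENNReal.ofReal ((1 + ‖ξ‖) ^ (-p))) x]
  calc _ = v⁻¹ * (v * ∫⁻ y, ENNReal.ofReal ((1 + ‖x - y‖) ^ (-p)) * ‖V y‖ₑ) := by
        rw [← mul_assoc, ENNReal.inv_mul_cancel hv0 hvt, one_mul]
    _ ≤ _ := by gcongr

lemma kato_global {n : ℕ} (hn : 1 ≤ n) {α : ℝ} (hα : 0 < α) {V : EuclideanSpace ℝ (Fin n) → ℝ}
    (hVm : Measurable V) (hV : katoClass n α V) {μ : ℝ} (hμ : 0 < μ) :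
    ∃ A : ℝ≥0∞, A ≠ ⊤ ∧ (∀ x, ∫⁻ y, gEN n α μ (x - y) * ‖V y‖ₑ ≤ A) := by
  obtain ⟨δ, hδ, hδ1, A, hA, hA1, hA2⟩ := kato_local hn hα hV hμ
  obtain ⟨B, hB, hw⟩ := weight_integral (p := n + 2 * α) (by linarith) hVm hδ hδ1 hA hA2
  obtain ⟨C, hC, hg⟩ := gEN_decay n α hμ
  set p := (n : ℝ) + 2 * α with hp
  have hpp : 0 < p := by positivity
  set D := ENNReal.ofReal ((δ / 2) ^ (-p)) with hD
  have hDt : D ≠ ⊤ := ENNReal.ofReal_ne_top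
  refine ⟨A + C * D * B, ENNReal.add_ne_top.2 ⟨hA, ENNReal.mul_ne_top (ENNReal.mul_ne_top hC hDt) hB⟩,
    fun x => ?_⟩
  rw [← lintegral_add_compl _ (measurableSet_ball (x := x) (ε := δ))]
  gcongr
  · exact hA1 x
  · calc _ ≤ ∫⁻ y in (Metric.ball x δ)ᶜ,
          C * D * (ENNReal.ofReal ((1 + ‖x - y‖) ^ (-p)) * ‖V y‖ₑ) := by
          apply setLIntegral_mono' measurableSet_ball.compl
          intro y hy
          have hyn : δ ≤ ‖x - y‖ := by
            rwa [Set.mem_compl_iff, Metric.mem_ball, dist_comm, dist_eq_norm, not_lt] at hy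
          have hy0 : x - y ≠ 0 := norm_pos_iff.1 (hδ.trans_le hyn)
          rw [← mul_assoc]
          gcongr
          refine (hg _ hy0).trans ?_
          rw [mul_assoc, hD, ← ENNReal.ofReal_mul (by positivity),
            ← Real.mul_rpow (by positivity) (by positivity)]
          gcongr C * ENNReal.ofReal ?_
          apply Real.rpow_le_rpow_of_nonpos (by positivity) _ (by linarith)
          nlinarith
      _ ≤ ∫⁻ y, C * D * (ENNReal.ofReal ((1 + ‖x - y‖) ^ (-p)) * ‖V y‖ₑ) :=
          setLIntegral_le_lintegral _ _
      _ = C * D * ∫⁻ y, (ENNReal.ofReal ((1 + ‖x - y‖) ^ (-p)) * ‖V y‖ₑ) :=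
          lintegral_const_mul' _ _ (ENNReal.mul_ne_top hC hDt)
      _ ≤ _ := by gcongr; exact hw x

/-- Laplace transform of a convolution, extended nonnegative version -/
lemma lap_conv_lintegral {f g : ℝ → ℝ≥0∞} (hf : Measurable f) (hg : Measurable g) (μ : ℝ) :
    ∫⁻ t in Set.Ioi (0 : ℝ), ENNReal.ofReal (Real.exp (-μ * t)) *
        ∫⁻ s in Set.Ioo (0 : ℝ) t, f (t - s) * g s =
      (∫⁻ t in Set.Ioi (0 : ℝ), ENNReal.ofReal (Real.exp (-μ * t)) * f t) *
        ∫⁻ t in Set.Ioi (0 : ℝ), ENNReal.ofReal (Real.exp (-μ * t)) * g t := by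
  have hE : Measurable (fun t : ℝ => ENNReal.ofReal (Real.exp (-μ * t))) := by fun_prop
  set F : ℝ → ℝ≥0∞ := (Set.Ioi (0 : ℝ)).indicator
    (fun t => ENNReal.ofReal (Real.exp (-μ * t)) * f t) with hF
  set G : ℝ → ℝ≥0∞ := (Set.Ioi (0 : ℝ)).indicator
    (fun t => ENNReal.ofReal (Real.exp (-μ * t)) * g t) with hG
  have hFm : Measurable F := (hE.mul hf).indicator measurableSet_Ioi
  have hGm : Measurable G := (hE.mul hg).indicator measurableSet_Ioi
  have h1 : ∀ t : ℝ, (Set.Ioi (0 : ℝ)).indicator (fun t => ENNReal.ofReal (Real.exp (-μ * t)) *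
        ∫⁻ s in Set.Ioo (0 : ℝ) t, f (t - s) * g s) t = ∫⁻ s, F (t - s) * G s := by
    intro t
    by_cases ht : 0 < t
    · rw [Set.indicator_of_mem (Set.mem_Ioi.2 ht), ← lintegral_const_mul _ (by fun_prop),
        ← lintegral_indicator measurableSet_Ioo]
      refine lintegral_congr fun s => ?_
      by_cases hs : s ∈ Set.Ioo 0 t
      · rw [Set.indicator_of_mem hs, hF, hG, Set.indicator_of_mem (Set.mem_Ioi.2 hs.1),
          Set.indicator_of_mem (Set.mem_Ioi.2 (sub_pos.2 hs.2))]
        have : Real.exp (-μ * t) = Real.exp (-μ * (t - s)) * Real.exp (-μ * s) := by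
          rw [← Real.exp_add]; congr 1; ring
        rw [this, ENNReal.ofReal_mul (Real.exp_pos _).le]
        ring
      · rw [Set.indicator_of_notMem hs]
        by_cases h0 : 0 < s
        · have : ¬ (0 < t - s) := fun h => hs ⟨h0, by linarith⟩
          rw [hF, Set.indicator_of_notMem (by simpa using this), zero_mul]
        · rw [hG, Set.indicator_of_notMem (by simpa using h0), mul_zero]
    · rw [Set.indicator_of_notMem (by simpa using ht)]
      symm
      rw [lintegral_eq_zero_iff (by fun_prop)]
      refine Filter.Eventually.of_forall fun s => ?_
      by_cases h0 : 0 < s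
      · have : ¬ (0 < t - s) := fun h => ht (by linarith)
        simp only [hF]
        rw [Set.indicator_of_notMem (by simpa using this), zero_mul]; rfl
      · simp only [hG]
        rw [Set.indicator_of_notMem (by simpa using h0), mul_zero]; rfl
  rw [← lintegral_indicator measurableSet_Ioi, lintegral_congr h1,
    ← lintegral_indicator measurableSet_Ioi, ← lintegral_indicator measurableSet_Ioi,
    lintegral_lintegral_swap (by fun_prop)]
  have h2 : ∀ s : ℝ, ∫⁻ t, F (t - s) * G s = (∫⁻ t, F t) * G s := by
    intro s
    rw [lintegral_mul_const _ (by fun_prop), lintegral_sub_right_eq_self]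
  rw [lintegral_congr h2, lintegral_const_mul _ hGm]

/-- Laplace transform of a convolution -/
lemma lap_conv {f g : ℝ → ℂ} (v : ℂ) (μ : ℝ)
    (hf : IntegrableOn (fun t : ℝ => (Real.exp (-μ * t) : ℂ) * f t) (Set.Ioi 0))
    (hg : IntegrableOn (fun t : ℝ => (Real.exp (-μ * t) : ℂ) * g t) (Set.Ioi 0)) :
    ∫ t in Set.Ioi (0 : ℝ), (Real.exp (-μ * t) : ℂ) *
        ∫ s in Set.Ioo (0 : ℝ) t, f (t - s) * v * g s =
      (∫ t in Set.Ioi (0 : ℝ), (Real.exp (-μ * t) : ℂ) * f t) * v *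
        ∫ t in Set.Ioi (0 : ℝ), (Real.exp (-μ * t) : ℂ) * g t := by
  have h := integral_posConvolution hg hf (ContinuousLinearMap.mul ℝ ℂ)
  simp only [ContinuousLinearMap.mul_apply'] at h
  have h3 : ∀ a b : ℂ, a * v * b = v * (b * a) := by intros; ring
  rw [h3, ← h, ← integral_const_mul]
  refine setIntegral_congr_fun measurableSet_Ioi fun t ht => ?_
  rw [intervalIntegral.integral_of_le (le_of_lt ht), integral_Ioc_eq_integral_Ioo,
    ← integral_const_mul, ← integral_const_mul]
  refine setIntegral_congr_fun measurableSet_Ioo fun s hs => ?_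
  have : Real.exp (-μ * t) = Real.exp (-μ * s) * Real.exp (-μ * (t - s)) := by
    rw [← Real.exp_add]; congr 1; ring
  rw [this]
  push_cast
  ring

lemma Kiter_conv_measurable {n : ℕ} {α : ℝ} (hα : 0 < α) {V : EuclideanSpace ℝ (Fin n) → ℝ}
    (hV : Measurable V) {f : ℝ → EuclideanSpace ℝ (Fin n) → ℂ}
    (hf : StronglyMeasurable (fun p : ℝ × EuclideanSpace ℝ (Fin n) => f p.1 p.2)) :
    StronglyMeasurable (fun p : (ℝ × EuclideanSpace ℝ (Fin n)) × EuclideanSpace ℝ (Fin n) =>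
      ∫ s in Set.Ioo (0 : ℝ) p.1.1, f (p.1.1 - s) p.2 * (V p.2 : ℂ) * K0 n α s (p.2 - p.1.2)) := by
  have h0 : ∀ p : (ℝ × EuclideanSpace ℝ (Fin n)) × EuclideanSpace ℝ (Fin n),
      ∫ s in Set.Ioo (0 : ℝ) p.1.1, f (p.1.1 - s) p.2 * (V p.2 : ℂ) * K0 n α s (p.2 - p.1.2) =
      ∫ s, (if 0 < s ∧ s < p.1.1 then
        f (p.1.1 - s) p.2 * (V p.2 : ℂ) * K0 n α s (p.2 - p.1.2) else 0) := by
    intro p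
    rw [← integral_indicator measurableSet_Ioo]
    simp only [Set.indicator_apply, Set.mem_Ioo]
  simp_rw [h0]
  refine StronglyMeasurable.integral_prod_right (f := fun
    (p : (ℝ × EuclideanSpace ℝ (Fin n)) × EuclideanSpace ℝ (Fin n)) (s : ℝ) =>
      (if 0 < s ∧ s < p.1.1 then
        f (p.1.1 - s) p.2 * (V p.2 : ℂ) * K0 n α s (p.2 - p.1.2) else 0)) ?_
  refine StronglyMeasurable.ite ?_ ?_ stronglyMeasurable_const
  · exact (measurableSet_lt measurable_const measurable_snd).inter
      (measurableSet_lt measurable_snd measurable_fst.fst.fst)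
  · refine (StronglyMeasurable.mul ?_ ?_).mul ?_
    · exact hf.comp_measurable (g := fun q : ((ℝ × EuclideanSpace ℝ (Fin n)) ×
        EuclideanSpace ℝ (Fin n)) × ℝ => (q.1.1.1 - q.2, q.1.2)) (by fun_prop)
    · exact (Complex.measurable_ofReal.comp (hV.comp (by fun_prop))).stronglyMeasurable
    · exact (stronglyMeasurable_K0 n hα).comp_measurable
        (g := fun q : ((ℝ × EuclideanSpace ℝ (Fin n)) ×
        EuclideanSpace ℝ (Fin n)) × ℝ => (q.2, q.1.2 - q.1.1.2)) (by fun_prop)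

lemma Kiter_measurable {n : ℕ} {α : ℝ} (hα : 0 < α) {V : EuclideanSpace ℝ (Fin n) → ℝ}
    (hV : Measurable V) (j : ℕ) (x : EuclideanSpace ℝ (Fin n)) :
    StronglyMeasurable (fun p : ℝ × EuclideanSpace ℝ (Fin n) => Kiter n α V j p.1 x p.2) := by
  induction j with
  | zero =>
    exact (stronglyMeasurable_K0 n hα).comp_measurable
      (g := fun q : ℝ × EuclideanSpace ℝ (Fin n) => (q.1, x - q.2)) (by fun_prop)
  | succ j ih =>
    have := Kiter_conv_measurable hα hV (f := fun t z => Kiter n α V j t x z) ih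
    exact StronglyMeasurable.integral_prod_right (f := fun
      (p : ℝ × EuclideanSpace ℝ (Fin n)) z =>
      ∫ s in Set.Ioo (0 : ℝ) p.1, Kiter n α V j (p.1 - s) x z * (V z : ℂ) * K0 n α s (z - p.2)) this

lemma gEN_neg_comm (n : ℕ) (α μ : ℝ) (x y : EuclideanSpace ℝ (Fin n)) :
    gEN n α μ (x - y) = gEN n α μ (y - x) := by
  simp only [gEN, mEN, norm_sub_rev x y]

lemma K0_lap_bound {n : ℕ} (hn : 1 ≤ n) {α : ℝ} (hα : 0 < α) (μ : ℝ) :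
    ∃ C : ℝ≥0∞, C ≠ ⊤ ∧ ∀ x : EuclideanSpace ℝ (Fin n),
      ∫⁻ t in Set.Ioi (0 : ℝ), ENNReal.ofReal (Real.exp (-μ * t)) * ‖K0 n α t x‖ₑ ≤
        C * gEN n α μ x := by
  obtain ⟨C, hC, h⟩ := K0_le_mEN (n := n) hn hα
  refine ⟨C, hC, fun x => ?_⟩
  rw [gEN, ← lintegral_const_mul' _ _ hC]
  refine setLIntegral_mono' measurableSet_Ioi fun t ht => ?_
  calc _ ≤ ENNReal.ofReal (Real.exp (-μ * t)) * (C * mEN n α t x) := by gcongr; exact h t ht x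
    _ = _ := by ring

lemma gEN_V_conv {n : ℕ} (hn : 1 ≤ n) {α : ℝ} (hα : 0 < α) {V : EuclideanSpace ℝ (Fin n) → ℝ}
    (hVm : Measurable V) (hV : katoClass n α V) {μ : ℝ} (hμ : 0 < μ) :
    ∃ A : ℝ≥0∞, A ≠ ⊤ ∧ ∀ x y : EuclideanSpace ℝ (Fin n),
      ∫⁻ z, gEN n α μ (x - z) * ‖V z‖ₑ * gEN n α μ (z - y) ≤ A * gEN n α μ (x - y) := by
  obtain ⟨A, hA, h⟩ := kato_global hn hα hVm hV hμ
  refine ⟨2 ^ ((n : ℝ) + 2 * α) * (A + A), by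
    refine ENNReal.mul_ne_top (ENNReal.rpow_ne_top_of_nonneg (by positivity) (by simp)) (by simp [hA]),
    fun x y => ?_⟩
  have hg := measurable_gEN n α μ
  have hm : ∀ w : EuclideanSpace ℝ (Fin n), Measurable fun z => gEN n α μ (w - z) * ‖V z‖ₑ := by
    intro w; exact (hg.comp (by fun_prop)).mul hVm.enorm
  calc ∫⁻ z, gEN n α μ (x - z) * ‖V z‖ₑ * gEN n α μ (z - y)
      ≤ ∫⁻ z, (2 ^ ((n : ℝ) + 2 * α) * gEN n α μ (x - y)) *
        (gEN n α μ (x - z) * ‖V z‖ₑ + gEN n α μ (y - z) * ‖V z‖ₑ) := by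
        refine lintegral_mono fun z => ?_
        have := gEN_threeG hα μ x y z
        calc gEN n α μ (x - z) * ‖V z‖ₑ * gEN n α μ (z - y)
            = (gEN n α μ (x - z) * gEN n α μ (z - y)) * ‖V z‖ₑ := by ring
          _ ≤ (2 ^ ((n : ℝ) + 2 * α) * gEN n α μ (x - y) *
            (gEN n α μ (x - z) + gEN n α μ (z - y))) * ‖V z‖ₑ := by gcongr
          _ = _ := by rw [gEN_neg_comm n α μ z y]; ring
    _ = (2 ^ ((n : ℝ) + 2 * α) * gEN n α μ (x - y)) *
        ((∫⁻ z, gEN n α μ (x - z) * ‖V z‖ₑ) + ∫⁻ z, gEN n α μ (y - z) * ‖V z‖ₑ) := by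
        rw [lintegral_const_mul (f := fun z => gEN n α μ (x - z) * ‖V z‖ₑ + gEN n α μ (y - z) * ‖V z‖ₑ) _
          ((hm x).add (hm y)), lintegral_add_left (hm x)]
    _ ≤ (2 ^ ((n : ℝ) + 2 * α) * gEN n α μ (x - y)) * (A + A) := by
        gcongr
        · exact h x
        · exact h y
    _ = _ := by ring

/-- the bound on the full double integral -/
lemma conv_double_bound {n : ℕ} {α : ℝ} (hα : 0 < α)
    {V : EuclideanSpace ℝ (Fin n) → ℝ} (hVm : Measurable V) (μ : ℝ)
    {f : ℝ → EuclideanSpace ℝ (Fin n) → ℂ}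
    (hf : StronglyMeasurable (fun p : ℝ × EuclideanSpace ℝ (Fin n) => f p.1 p.2))
    (y : EuclideanSpace ℝ (Fin n)) :
    ∫⁻ t in Set.Ioi (0 : ℝ), ∫⁻ z, ‖(Real.exp (-μ * t) : ℂ) *
      ∫ s in Set.Ioo (0 : ℝ) t, f (t - s) z * (V z : ℂ) * K0 n α s (z - y)‖ₑ ≤
    ∫⁻ z, (∫⁻ t in Set.Ioi (0 : ℝ), ENNReal.ofReal (Real.exp (-μ * t)) * ‖f t z‖ₑ) * ‖V z‖ₑ *
      (∫⁻ t in Set.Ioi (0 : ℝ), ENNReal.ofReal (Real.exp (-μ * t)) * ‖K0 n α t (z - y)‖ₑ) := by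
  have hmeas := (Kiter_conv_measurable hα hVm hf).comp_measurable
    (g := fun q : ℝ × EuclideanSpace ℝ (Fin n) => ((q.1, y), q.2)) (by fun_prop)
  have hmeas2 : Measurable (fun q : ℝ × EuclideanSpace ℝ (Fin n) =>
      ‖(Real.exp (-μ * q.1) : ℂ) *
      ∫ s in Set.Ioo (0 : ℝ) q.1, f (q.1 - s) q.2 * (V q.2 : ℂ) * K0 n α s (q.2 - y)‖ₑ) := by
    refine Measurable.enorm (Measurable.mul (by fun_prop) hmeas.measurable)
  rw [lintegral_lintegral_swap hmeas2.aemeasurable]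
  refine lintegral_mono fun z => ?_
  have hfz : Measurable (fun t => ‖f t z‖ₑ) :=
    (hf.measurable.comp (measurable_id.prodMk measurable_const)).enorm
  have hKz : Measurable (fun t => ‖K0 n α t (z - y)‖ₑ) :=
    ((stronglyMeasurable_K0 n hα).measurable.comp (measurable_id.prodMk measurable_const)).enorm
  have h := lap_conv_lintegral (hfz.mul_const ‖V z‖ₑ) hKz μ
  have h4 : (∫⁻ t in Set.Ioi (0 : ℝ), ENNReal.ofReal (Real.exp (-μ * t)) * ‖f t z‖ₑ) * ‖V z‖ₑ =
      ∫⁻ t in Set.Ioi (0 : ℝ), ENNReal.ofReal (Real.exp (-μ * t)) * (‖f t z‖ₑ * ‖V z‖ₑ) := by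
    rw [← lintegral_mul_const _ (by fun_prop)]
    refine lintegral_congr fun t => ?_
    ring
  rw [h4, ← h]
  refine lintegral_mono fun t => ?_
  rw [enorm_mul]
  have h5 : ‖(Real.exp (-μ * t) : ℂ)‖ₑ = ENNReal.ofReal (Real.exp (-μ * t)) := by
    rw [← ofReal_norm, Complex.norm_real, Real.norm_of_nonneg (Real.exp_pos _).le]
  rw [h5]
  gcongr
  refine (enorm_integral_le_lintegral_enorm _).trans (le_of_eq ?_)
  refine lintegral_congr fun s => ?_
  rw [enorm_mul, enorm_mul]
  congr 2
  rw [← ofReal_norm, ← ofReal_norm, Complex.norm_real]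

lemma enorm_cexp_mul (μ t : ℝ) (a : ℂ) :
    ‖(Real.exp (-μ * t) : ℂ) * a‖ₑ = ENNReal.ofReal (Real.exp (-μ * t)) * ‖a‖ₑ := by
  rw [enorm_mul, ← ofReal_norm (Real.exp (-μ * t) : ℂ), Complex.norm_real,
    Real.norm_of_nonneg (Real.exp_pos _).le]

lemma Kiter_lap_bound {n : ℕ} (hn : 1 ≤ n) {α : ℝ} (hα : 0 < α)
    {V : EuclideanSpace ℝ (Fin n) → ℝ} (hVm : Measurable V) (hV : katoClass n α V)
    {μ : ℝ} (hμ : 0 < μ) (j : ℕ) :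
    ∃ C : ℝ≥0∞, C ≠ ⊤ ∧ ∀ x y : EuclideanSpace ℝ (Fin n),
      ∫⁻ t in Set.Ioi (0 : ℝ), ENNReal.ofReal (Real.exp (-μ * t)) * ‖Kiter n α V j t x y‖ₑ ≤
        C * gEN n α μ (x - y) := by
  induction j with
  | zero =>
    obtain ⟨C, hC, h⟩ := K0_lap_bound (n := n) hn hα μ
    exact ⟨C, hC, fun x y => h (x - y)⟩
  | succ j ih =>
    obtain ⟨C, hC, h⟩ := ih
    obtain ⟨C0, hC0, h0⟩ := K0_lap_bound (n := n) hn hα μ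
    obtain ⟨A, hA, hA'⟩ := gEN_V_conv hn hα hVm hV hμ
    refine ⟨C * C0 * A, ENNReal.mul_ne_top (ENNReal.mul_ne_top hC hC0) hA, fun x y => ?_⟩
    calc _ ≤ ∫⁻ t in Set.Ioi (0 : ℝ), ∫⁻ z, ‖(Real.exp (-μ * t) : ℂ) *
          ∫ s in Set.Ioo (0 : ℝ) t, Kiter n α V j (t - s) x z * (V z : ℂ) * K0 n α s (z - y)‖ₑ := by
          refine lintegral_mono fun t => ?_
          rw [← enorm_cexp_mul, Kiter, ← integral_const_mul]
          exact enorm_integral_le_lintegral_enorm _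
      _ ≤ _ := conv_double_bound hα hVm μ
          (f := fun t z => Kiter n α V j t x z) (Kiter_measurable hα hVm j x) y
      _ ≤ ∫⁻ z, (C * C0) * (gEN n α μ (x - z) * ‖V z‖ₑ * gEN n α μ (z - y)) := by
          refine lintegral_mono fun z => ?_
          calc _ ≤ (C * gEN n α μ (x - z)) * ‖V z‖ₑ * (C0 * gEN n α μ (z - y)) := by
                gcongr
                · exact h x z
                · exact h0 (z - y)
            _ = _ := by ring
      _ ≤ (C * C0) * (A * gEN n α μ (x - y)) := by
          rw [lintegral_const_mul' _ _ (ENNReal.mul_ne_top hC hC0)]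
          gcongr
          exact hA' x y
      _ = _ := by ring

lemma Kiter_lap_integrable {n : ℕ} (hn : 1 ≤ n) {α : ℝ} (hα : 0 < α)
    {V : EuclideanSpace ℝ (Fin n) → ℝ} (hVm : Measurable V) (hV : katoClass n α V)
    {μ : ℝ} (hμ : 0 < μ) (j : ℕ) {x y : EuclideanSpace ℝ (Fin n)} (hxy : x ≠ y) :
    IntegrableOn (fun t : ℝ => (Real.exp (-μ * t) : ℂ) * Kiter n α V j t x y) (Set.Ioi (0 : ℝ)) := by
  obtain ⟨C, hC, h⟩ := Kiter_lap_bound hn hα hVm hV hμ j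
  refine ⟨?_, ?_⟩
  · refine Measurable.aestronglyMeasurable ?_
    refine Measurable.mul (by fun_prop) ?_
    exact (Kiter_measurable hα hVm j x).measurable.comp (measurable_id.prodMk measurable_const)
  · rw [hasFiniteIntegral_iff_enorm]
    simp_rw [enorm_cexp_mul]
    exact lt_of_le_of_lt (h x y)
      (ENNReal.mul_ne_top hC (gEN_ne_top n α hμ (sub_ne_zero.2 hxy))).lt_top

lemma K0_lap_integrable {n : ℕ} (hn : 1 ≤ n) {α : ℝ} (hα : 0 < α)
    {μ : ℝ} (hμ : 0 < μ) {x : EuclideanSpace ℝ (Fin n)} (hx : x ≠ 0) :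
    IntegrableOn (fun t : ℝ => (Real.exp (-μ * t) : ℂ) * K0 n α t x) (Set.Ioi (0 : ℝ)) := by
  obtain ⟨C, hC, h⟩ := K0_lap_bound (n := n) hn hα μ
  refine ⟨?_, ?_⟩
  · refine Measurable.aestronglyMeasurable ?_
    refine Measurable.mul (by fun_prop) ?_
    exact Measurable.comp (g := fun p : ℝ × EuclideanSpace ℝ (Fin n) => K0 n α p.1 p.2)
      (f := fun t : ℝ => (t, x)) (stronglyMeasurable_K0 n hα).measurable (by fun_prop)
  · rw [hasFiniteIntegral_iff_enorm]
    simp_rw [enorm_cexp_mul]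
    exact lt_of_le_of_lt (h x)
      (ENNReal.mul_ne_top hC (gEN_ne_top n α hμ hx)).lt_top

lemma ae_ne_pt {n : ℕ} (hn : 1 ≤ n) (x : EuclideanSpace ℝ (Fin n)) :
    ∀ᵐ z : EuclideanSpace ℝ (Fin n), z ≠ x := by
  have : Nonempty (Fin n) := ⟨⟨0, hn⟩⟩
  exact Measure.ae_ne volume x

lemma lap_eq_measurable {n : ℕ} (hn : 1 ≤ n) {α : ℝ} (hα : 0 < α)
    {V : EuclideanSpace ℝ (Fin n) → ℝ} (hVm : Measurable V) (hV : katoClass n α V)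
    {μ : ℝ} (hμ : 0 < μ) (j : ℕ) : ∀ {x y : EuclideanSpace ℝ (Fin n)}, x ≠ y →
    ∫ t in Set.Ioi (0 : ℝ), (Real.exp (-μ * t) : ℂ) * Kiter n α V j t x y =
      Riter n α V j μ x y := by
  induction j with
  | zero => intro x y _; rfl
  | succ j ih =>
    intro x y hxy
    have hm := Kiter_measurable hα hVm j x
    have hIntg : Integrable (Function.uncurry fun (t : ℝ) (z : EuclideanSpace ℝ (Fin n)) =>
        (Real.exp (-μ * t) : ℂ) *
          ∫ s in Set.Ioo (0 : ℝ) t, Kiter n α V j (t - s) x z * (V z : ℂ) * K0 n α s (z - y))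
        ((volume.restrict (Set.Ioi (0 : ℝ))).prod volume) := by
      have hmeas := (Kiter_conv_measurable hα hVm
        (f := fun t z => Kiter n α V j t x z) hm).comp_measurable
        (g := fun q : ℝ × EuclideanSpace ℝ (Fin n) => ((q.1, y), q.2)) (by fun_prop)
      have hmm : Measurable (Function.uncurry fun (t : ℝ) (z : EuclideanSpace ℝ (Fin n)) =>
        (Real.exp (-μ * t) : ℂ) *
          ∫ s in Set.Ioo (0 : ℝ) t, Kiter n α V j (t - s) x z * (V z : ℂ) * K0 n α s (z - y)) := by
        exact Measurable.mul (f := fun q : ℝ × EuclideanSpace ℝ (Fin n) =>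
          (Real.exp (-μ * q.1) : ℂ)) (by fun_prop) hmeas.measurable
      refine ⟨hmm.aestronglyMeasurable, ?_⟩
      rw [hasFiniteIntegral_iff_enorm, lintegral_prod _ hmm.enorm.aemeasurable]
      simp only [Function.uncurry]
      refine lt_of_le_of_lt (conv_double_bound hα hVm μ
        (f := fun t z => Kiter n α V j t x z) hm y) ?_
      obtain ⟨C, hC, h⟩ := Kiter_lap_bound hn hα hVm hV hμ j
      obtain ⟨C0, hC0, h0⟩ := K0_lap_bound (n := n) hn hα μ
      obtain ⟨A, hA, hA'⟩ := gEN_V_conv hn hα hVm hV hμ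
      calc _ ≤ ∫⁻ z, (C * C0) * (gEN n α μ (x - z) * ‖V z‖ₑ * gEN n α μ (z - y)) := by
            refine lintegral_mono fun z => ?_
            calc _ ≤ (C * gEN n α μ (x - z)) * ‖V z‖ₑ * (C0 * gEN n α μ (z - y)) := by
                  gcongr
                  · exact h x z
                  · exact h0 (z - y)
              _ = _ := by ring
        _ ≤ (C * C0) * (A * gEN n α μ (x - y)) := by
            rw [lintegral_const_mul' _ _ (ENNReal.mul_ne_top hC hC0)]
            gcongr
            exact hA' x y
        _ < ⊤ := (ENNReal.mul_ne_top (ENNReal.mul_ne_top hC hC0) (ENNReal.mul_ne_top hA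
            (gEN_ne_top n α hμ (sub_ne_zero.2 hxy)))).lt_top
    simp_rw [Kiter, ← integral_const_mul]
    rw [integral_integral_swap (by simpa only [integral_const_mul] using hIntg), Riter]
    refine integral_congr_ae ?_
    filter_upwards [ae_ne_pt hn x, ae_ne_pt hn y] with z hzx hzy
    have h1 := Kiter_lap_integrable hn hα hVm hV hμ j (Ne.symm hzx)
    have h2 := K0_lap_integrable hn hα hμ (sub_ne_zero.2 hzy)
    rw [← ih (Ne.symm hzx), R0, ← lap_conv (V z : ℂ) μ h1 h2]
    simp_rw [integral_const_mul]

lemma katoClass_congr {n : ℕ} {α : ℝ} {V W : EuclideanSpace ℝ (Fin n) → ℝ} (h : V =ᵐ[volume] W)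
    (hV : katoClass n α V) : katoClass n α W := by
  have key : ∀ (k : EuclideanSpace ℝ (Fin n) → EuclideanSpace ℝ (Fin n) → ℝ) x δ,
      ∫⁻ y in Metric.ball x δ, ENNReal.ofReal (k x y * |W y|) =
      ∫⁻ y in Metric.ball x δ, ENNReal.ofReal (k x y * |V y|) := by
    intro k x δ
    refine lintegral_congr_ae (ae_restrict_of_ae ?_)
    filter_upwards [h] with y hy
    rw [hy]
  have key1 : ∀ (x : EuclideanSpace ℝ (Fin n)) δ,
      ∫⁻ y in Metric.ball x δ, ENNReal.ofReal (|W y|) =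
      ∫⁻ y in Metric.ball x δ, ENNReal.ofReal (|V y|) := by
    intro x δ
    simpa using key (fun _ _ => 1) x δ
  have e1 := fun x δ => key (fun x y => ‖x - y‖ ^ (2 * α - (n : ℝ))) x δ
  have e2 := fun x δ => key (fun x y => Real.log (‖x - y‖ ^ (-(n : ℝ)))) x δ
  unfold katoClass at *
  simp only [e1, e2, key1]
  exact hV

lemma Kiter_congr {n : ℕ} {α : ℝ} {V W : EuclideanSpace ℝ (Fin n) → ℝ} (h : V =ᵐ[volume] W)
    (j : ℕ) : Kiter n α V j = Kiter n α W j := by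
  induction j with
  | zero => ext; rfl
  | succ j ih =>
    ext t x y
    simp only [Kiter, ih]
    refine integral_congr_ae ?_
    filter_upwards [h] with z hz
    rw [hz]

lemma Riter_congr {n : ℕ} {α : ℝ} {V W : EuclideanSpace ℝ (Fin n) → ℝ} (h : V =ᵐ[volume] W)
    (j : ℕ) : Riter n α V j = Riter n α W j := by
  induction j with
  | zero => ext; rfl
  | succ j ih =>
    ext t x y
    simp only [Riter, ih]
    refine integral_congr_ae ?_
    filter_upwards [h] with z hz
    rw [hz]

/-- the theorem for a.e. measurable potentials -/
lemma main_aemeasurable {n : ℕ} (hn : 1 ≤ n) {α : ℝ} (hα : 0 < α)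
    {V : EuclideanSpace ℝ (Fin n) → ℝ} (hVm : AEMeasurable V) (hV : katoClass n α V)
    {μ : ℝ} (hμ : 0 < μ) (j : ℕ) {x y : EuclideanSpace ℝ (Fin n)} (hxy : x ≠ y) :
    IntegrableOn (fun t : ℝ => (Real.exp (-μ * t) : ℂ) * Kiter n α V j t x y)
          (Set.Ioi (0 : ℝ)) ∧
        ∫ t in Set.Ioi (0 : ℝ), (Real.exp (-μ * t) : ℂ) * Kiter n α V j t x y =
          Riter n α V j μ x y := by
  obtain ⟨W, hW, hVW⟩ := hVm
  rw [Kiter_congr hVW, Riter_congr hVW]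
  have hkW := katoClass_congr hVW hV
  exact ⟨Kiter_lap_integrable hn hα hW hkW hμ j hxy, lap_eq_measurable hn hα hW hkW hμ j hxy⟩

lemma K0_scaling {n : ℕ} {α : ℝ} (t : ℝ) (x : EuclideanSpace ℝ (Fin n)) {r : ℝ}
    (hr : 0 < r) : K0 n α (r ^ (2 * α) * t) (r • x) = ((r ^ n)⁻¹ : ℝ) • K0 n α t x := by
  unfold K0
  rw [smul_comm]
  congr 1
  have h := Measure.integral_comp_smul (volume : Measure (EuclideanSpace ℝ (Fin n)))
    (fun ξ : EuclideanSpace ℝ (Fin n) =>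
      Complex.exp (Complex.I * ((inner ℝ x ξ : ℝ) : ℂ)) *
        Complex.exp (-(t : ℂ) * ((‖ξ‖ ^ (2 * α) : ℝ) : ℂ))) r
  rw [finrank_euclideanSpace_fin, abs_of_pos (by positivity)] at h
  rw [← h]
  congr 1
  ext ξ
  rw [inner_smul_left, inner_smul_right, norm_smul, Real.norm_of_nonneg hr.le,
    Real.mul_rpow hr.le (norm_nonneg _)]
  simp only [RCLike.conj_to_real]
  push_cast
  ring_nf

lemma K0_one_zero_ne {n : ℕ} (hn : 1 ≤ n) {α : ℝ} (hα : 0 < α) : K0 n α 1 0 ≠ 0 := by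
  unfold K0
  refine smul_ne_zero (by positivity) ?_
  have h : ∀ ξ : EuclideanSpace ℝ (Fin n),
      Complex.exp (Complex.I * ((inner ℝ (0 : EuclideanSpace ℝ (Fin n)) ξ : ℝ) : ℂ)) *
        Complex.exp (-((1 : ℝ) : ℂ) * ((‖ξ‖ ^ (2 * α) : ℝ) : ℂ)) =
      ((Real.exp (-1 * ‖ξ‖ ^ (2 * α)) : ℝ) : ℂ) := by
    intro ξ
    simp
  simp_rw [h]
  rw [integral_complex_ofReal, Complex.ofReal_ne_zero]
  refine ne_of_gt ?_
  refine integral_exp_pos (f := fun ξ : EuclideanSpace ℝ (Fin n) => -1 * ‖ξ‖ ^ (2 * α)) ?_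
  exact integrable_exp_norm hn hα one_pos

lemma K0_continuous_space {n : ℕ} (hn : 1 ≤ n) {α : ℝ} (hα : 0 < α) :
    Continuous (fun x : EuclideanSpace ℝ (Fin n) => K0 n α 1 x) := by
  unfold K0
  refine Continuous.const_smul (g := fun x : EuclideanSpace ℝ (Fin n) =>
    ∫ ξ : EuclideanSpace ℝ (Fin n),
      Complex.exp (Complex.I * ((inner ℝ x ξ : ℝ) : ℂ)) *
        Complex.exp (-((1 : ℝ) : ℂ) * ((‖ξ‖ ^ (2 * α) : ℝ) : ℂ))) ?_
    ((2 * Real.pi) ^ (-(n : ℝ)) : ℝ)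
  have hc : Continuous fun ξ : EuclideanSpace ℝ (Fin n) =>
      Complex.exp (-((1 : ℝ) : ℂ) * ((‖ξ‖ ^ (2 * α) : ℝ) : ℂ)) :=
    (continuous_symb n hα).comp (Continuous.prodMk_right ((1 : ℝ) : ℂ))
  refine continuous_of_dominated (bound := fun ξ => Real.exp (-1 * ‖ξ‖ ^ (2 * α))) ?_ ?_
    (integrable_exp_norm hn hα one_pos) ?_
  · intro x
    refine Continuous.aestronglyMeasurable ?_
    exact Continuous.mul (by fun_prop) hc
  · intro x
    refine Eventually.of_forall fun ξ => ?_
    rw [norm_mul, mul_comm Complex.I, Complex.norm_exp_ofReal_mul_I, one_mul]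
    exact le_of_eq (norm_symb n α ((1 : ℝ) : ℂ) ξ)
  · refine Eventually.of_forall fun ξ => ?_
    fun_prop

lemma K0_exists_ne {n : ℕ} (hn : 1 ≤ n) {α : ℝ} (hα : 0 < α) (w : EuclideanSpace ℝ (Fin n)) :
    ∃ t : ℝ, 0 < t ∧ K0 n α t w ≠ 0 := by
  have hc : Continuous fun r : ℝ => K0 n α 1 (r • w) :=
    (K0_continuous_space hn hα).comp (by fun_prop)
  have h0 : ∀ᶠ r : ℝ in nhds 0, K0 n α 1 (r • w) ≠ 0 := by
    refine hc.continuousAt.eventually_ne ?_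
    rw [zero_smul]
    exact K0_one_zero_ne hn hα
  have h1 : ∀ᶠ r : ℝ in nhdsWithin 0 (Set.Ioi 0), K0 n α 1 (r • w) ≠ 0 ∧ 0 < r :=
    (h0.filter_mono nhdsWithin_le_nhds).and self_mem_nhdsWithin
  obtain ⟨r, hr, hr0⟩ := h1.exists
  refine ⟨r ^ (-(2 * α)), by positivity, fun h => hr ?_⟩
  have := K0_scaling (α := α) (r ^ (-(2 * α))) w hr0
  rw [← Real.rpow_add hr0, add_neg_cancel, Real.rpow_zero, h, smul_zero] at this
  exact this

/-- complex resolvent kernel -/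
noncomputable def Rc (n : ℕ) (α : ℝ) (μ : ℂ) (w : EuclideanSpace ℝ (Fin n)) : ℂ :=
  ∫ t in Set.Ioi (0 : ℝ), Complex.exp (-μ * t) * K0 n α t w

lemma R0_eq_Rc (n : ℕ) (α μ : ℝ) (x y : EuclideanSpace ℝ (Fin n)) :
    R0 n α μ x y = Rc n α (μ : ℂ) (x - y) := by
  unfold R0 Rc
  push_cast
  rfl

lemma measurable_K0_time (n : ℕ) {α : ℝ} (hα : 0 < α) (w : EuclideanSpace ℝ (Fin n)) :
    Measurable (fun t : ℝ => K0 n α t w) :=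
  Measurable.comp (g := fun p : ℝ × EuclideanSpace ℝ (Fin n) => K0 n α p.1 p.2)
      (f := fun t : ℝ => (t, w)) (stronglyMeasurable_K0 n hα).measurable (by fun_prop)

lemma K0_lap_integrable_complex {n : ℕ} (hn : 1 ≤ n) {α : ℝ} (hα : 0 < α)
    {μ : ℂ} (hμ : 0 < μ.re) {x : EuclideanSpace ℝ (Fin n)} (hx : x ≠ 0) :
    IntegrableOn (fun t : ℝ => Complex.exp (-μ * t) * K0 n α t x) (Set.Ioi (0 : ℝ)) := by
  have h := K0_lap_integrable hn hα hμ hx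
  refine Integrable.mono h ?_ ?_
  · have := measurable_K0_time n hα x
    exact Measurable.aestronglyMeasurable (by fun_prop)
  · refine Eventually.of_forall fun t => ?_
    rw [norm_mul, norm_mul, Complex.norm_exp, Complex.norm_real,
      Real.norm_of_nonneg (Real.exp_pos _).le, Complex.re_mul_ofReal, Complex.neg_re]

lemma Rc_holo {n : ℕ} (hn : 1 ≤ n) {α : ℝ} (hα : 0 < α) {w : EuclideanSpace ℝ (Fin n)}
    (hw : w ≠ 0) : DifferentiableOn ℂ (fun μ => Rc n α μ w) {t : ℂ | 0 < t.re} := by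
  have hU : IsOpen {t : ℂ | 0 < t.re} := isOpen_lt continuous_const Complex.continuous_re
  unfold Rc
  refine holo_integral (fun (μ : ℂ) (t : ℝ) => Complex.exp (-μ * t) * K0 n α t w) hU ?_ ?_ ?_
  · intro μ hμ
    exact (K0_lap_integrable_complex hn hα hμ hw).1
  · refine Eventually.of_forall fun t => ?_
    fun_prop
  · intro μ₀ hμ₀
    have hμ₀' : 0 < μ₀.re := hμ₀
    refine ⟨μ₀.re / 2, by positivity, _, (K0_lap_integrable hn hα (half_pos hμ₀') hw).norm, ?_⟩
    filter_upwards [ae_restrict_mem measurableSet_Ioi] with t ht μ hμ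
    have ht' : 0 < t := ht
    have h1 : |(μ - μ₀).re| ≤ ‖μ - μ₀‖ := Complex.abs_re_le_norm _
    have h2 : ‖μ - μ₀‖ < μ₀.re / 2 := by simpa [dist_eq_norm] using hμ
    have h3 := (abs_le.1 h1).1
    rw [Complex.sub_re] at h3
    rw [norm_mul, norm_mul, Complex.norm_exp, Complex.norm_real,
      Real.norm_of_nonneg (Real.exp_pos _).le, Complex.re_mul_ofReal, Complex.neg_re]
    gcongr
    linarith

lemma Kc_continuousAt_time {n : ℕ} (hn : 1 ≤ n) {α : ℝ} (hα : 0 < α)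
    (w : EuclideanSpace ℝ (Fin n)) {t : ℝ} (ht : 0 < t) :
    ContinuousAt (fun t : ℝ => K0 n α t w) t := by
  have hU : IsOpen {t : ℂ | 0 < t.re} := isOpen_lt continuous_const Complex.continuous_re
  have h := ((Kc_holo hn hα w).differentiableAt
    (hU.mem_nhds (show (t : ℂ) ∈ {t : ℂ | 0 < t.re} by simpa using ht))).continuousAt
  exact ContinuousAt.comp (f := fun t : ℝ => (t : ℂ)) (g := fun t => Kc n α t w) h
    Complex.continuous_ofReal.continuousAt

lemma Rc_exists_ne {n : ℕ} (hn : 1 ≤ n) {α : ℝ} (hα : 0 < α) {w : EuclideanSpace ℝ (Fin n)}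
    (hw : w ≠ 0) : ∃ μ : ℂ, 0 < μ.re ∧ Rc n α μ w ≠ 0 := by
  by_contra! hcon
  set f : ℝ → ℂ := (Set.Ioi (0 : ℝ)).indicator
    (fun t : ℝ => (Real.exp (-1 * t) : ℂ) * K0 n α t w) with hf
  have hfi : Integrable f :=
    (integrable_indicator_iff measurableSet_Ioi).2 (K0_lap_integrable hn hα one_pos hw)
  have hFf : FourierTransform.fourier f = 0 := by
    ext τ
    rw [Real.fourier_real_eq_integral_exp_smul, Pi.zero_apply,
      ← hcon (1 + 2 * π * τ * Complex.I) (by simp), Rc, ← integral_indicator measurableSet_Ioi]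
    congr 1
    ext t
    by_cases ht : t ∈ Set.Ioi (0 : ℝ)
    · rw [hf, Set.indicator_of_mem ht, Set.indicator_of_mem ht, smul_eq_mul, ← mul_assoc]
      push_cast
      rw [← Complex.exp_add]
      congr 2
      ring
    · rw [hf, Set.indicator_of_notMem ht, Set.indicator_of_notMem ht, smul_zero]
  obtain ⟨t, ht, hne⟩ := K0_exists_ne hn hα w
  have hloc : f =ᶠ[nhds t] (fun t : ℝ => (Real.exp (-1 * t) : ℂ) * K0 n α t w) := by
    filter_upwards [Ioi_mem_nhds ht] with s hs
    rw [hf, Set.indicator_of_mem hs]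
  have hca : ContinuousAt f t := by
    refine ContinuousAt.congr ?_ hloc.symm
    exact ContinuousAt.mul (by fun_prop) (Kc_continuousAt_time hn hα w ht)
  have h := hfi.fourierInv_fourier_eq (by rw [hFf]; exact integrable_zero _ _ _) hca
  rw [hFf, hloc.eq_of_nhds, Real.fourierInv_eq] at h
  simp at h
  exact hne h

lemma holo_real_zero_null {U : Set ℂ} (hU : IsOpen U) (hUc : Convex ℝ U) {F : ℂ → ℂ}
    (hF : DifferentiableOn ℂ F U) (hne : ∃ z ∈ U, F z ≠ 0) (hS : ∀ t : ℝ, 0 < t → (t : ℂ) ∈ U) :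
    ∀ᵐ t : ℝ ∂(volume.restrict (Set.Ioi 0)), F (t : ℂ) ≠ 0 := by
  rw [ae_restrict_iff' measurableSet_Ioi, ae_iff]
  have hset : {a : ℝ | ¬ (a ∈ Set.Ioi (0 : ℝ) → F (a : ℂ) ≠ 0)} =
      {a : ℝ | 0 < a ∧ F (a : ℂ) = 0} := by
    ext a; simp
  rw [hset]
  refine measure_null_of_locally_null _ fun t ht => ?_
  have han := hF.analyticOnNhd hU
  obtain ⟨z, hz, hFz⟩ := hne
  rcases (han (t : ℂ) (hS t ht.1)).eventually_eq_zero_or_eventually_ne_zero with h | h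
  · exact absurd (han.eqOn_zero_of_preconnected_of_eventuallyEq_zero hUc.isPreconnected
      (hS t ht.1) h hz) hFz
  · refine ⟨{t}, ?_, by simp⟩
    rw [eventually_nhdsWithin_iff] at h
    have h' := (Complex.continuous_ofReal.tendsto t).eventually h
    rw [mem_nhdsWithin_iff_eventually]
    filter_upwards [h'] with s hs hs2
    by_contra hst
    exact hs (by simpa using hst) hs2.2

lemma Rc_ae_mu {n : ℕ} (hn : 1 ≤ n) {α : ℝ} (hα : 0 < α) {w : EuclideanSpace ℝ (Fin n)}
    (hw : w ≠ 0) : ∀ᵐ μ : ℝ ∂(volume.restrict (Set.Ioi 0)), Rc n α (μ : ℂ) w ≠ 0 := by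
  have hU : IsOpen {t : ℂ | 0 < t.re} := isOpen_lt continuous_const Complex.continuous_re
  refine holo_real_zero_null hU (convex_halfSpace_re_gt 0) (Rc_holo hn hα hw) ?_ ?_
  · exact Rc_exists_ne hn hα hw
  · intro t ht; simpa using ht

lemma Rc_scaling {n : ℕ} {α : ℝ} (μ : ℝ) (w : EuclideanSpace ℝ (Fin n)) {r : ℝ} (hr : 0 < r) :
    Rc n α (μ : ℂ) (r • w) = ((r ^ (2 * α)) * (r ^ n)⁻¹ : ℝ) •
      Rc n α ((r ^ (2 * α) * μ : ℝ) : ℂ) w := by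
  unfold Rc
  have hp : 0 < r ^ (2 * α) := by positivity
  have h := integral_comp_mul_left_Ioi' (fun t : ℝ =>
    Complex.exp (-(μ : ℂ) * t) * K0 n α t (r • w)) 0 hp
  rw [mul_zero] at h
  rw [← h, mul_smul]
  congr 1
  rw [← integral_smul]
  congr 1
  ext t
  rw [K0_scaling t w hr, mul_smul_comm]
  push_cast
  ring_nf

lemma measurable_Rc (n : ℕ) {α : ℝ} (hα : 0 < α) :
    Measurable (fun p : ℝ × EuclideanSpace ℝ (Fin n) => Rc n α (p.1 : ℂ) p.2) := by
  unfold Rc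
  refine StronglyMeasurable.measurable ?_
  refine StronglyMeasurable.integral_prod_right (f := fun
    (p : ℝ × EuclideanSpace ℝ (Fin n)) (t : ℝ) =>
      Complex.exp (-(p.1 : ℂ) * t) * K0 n α t p.2) ?_
  refine StronglyMeasurable.mul (Measurable.stronglyMeasurable (by fun_prop)) ?_
  exact (stronglyMeasurable_K0 n hα).comp_measurable
    (g := fun q : (ℝ × EuclideanSpace ℝ (Fin n)) × ℝ => (q.2, q.1.2)) (by fun_prop)

lemma Rc_ae_space {n : ℕ} (hn : 1 ≤ n) {α : ℝ} (hα : 0 < α) {μ : ℝ} (hμ : 0 < μ) :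
    ∀ᵐ w : EuclideanSpace ℝ (Fin n), Rc n α (μ : ℂ) w ≠ 0 := by
  have h1 : ∀ᵐ w : EuclideanSpace ℝ (Fin n), ∀ᵐ μ : ℝ ∂(volume.restrict (Set.Ioi 0)),
      Rc n α (μ : ℂ) w ≠ 0 := by
    filter_upwards [ae_ne_pt hn 0] with w hw
    exact Rc_ae_mu hn hα hw
  have hm : MeasurableSet {p : EuclideanSpace ℝ (Fin n) × ℝ | Rc n α (p.2 : ℂ) p.1 ≠ 0} := by
    have : Measurable fun p : EuclideanSpace ℝ (Fin n) × ℝ => Rc n α (p.2 : ℂ) p.1 :=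
      (measurable_Rc n hα).comp measurable_swap
    exact this (measurableSet_singleton 0).compl
  have h2 := (Measure.ae_ae_comm hm).1 h1
  have h3 := h2.and (ae_restrict_mem measurableSet_Ioi)
  have : (ae (volume.restrict (Set.Ioi (0 : ℝ)))).NeBot := by
    rw [ae_neBot]
    intro h
    have := congrArg (fun m => m Set.univ) h
    simp at this
  obtain ⟨ν, hν, hν0⟩ := h3.exists
  have hν0' : 0 < ν := hν0
  set r : ℝ := (ν / μ) ^ (1 / (2 * α)) with hr
  have hrp : 0 < r := by positivity
  have hrr : r ^ (2 * α) * μ = ν := by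
    rw [hr, ← Real.rpow_mul (by positivity), one_div_mul_cancel (by positivity), Real.rpow_one]
    field_simp
  have h4 : ∀ᵐ w : EuclideanSpace ℝ (Fin n), Rc n α (μ : ℂ) (r • w) ≠ 0 := by
    filter_upwards [hν] with w hw
    rw [Rc_scaling μ w hrp, hrr]
    exact smul_ne_zero (by positivity) hw
  have hq := Measure.quasiMeasurePreserving_smul
    (volume : Measure (EuclideanSpace ℝ (Fin n))) (r := r⁻¹) (by positivity)
  filter_upwards [hq.ae h4] with w hw
  rwa [smul_inv_smul₀ hrp.ne'] at hw

/-- complex-time convolution of two kernels -/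
noncomputable def Hc (n : ℕ) (α : ℝ) (a b : EuclideanSpace ℝ (Fin n)) (t : ℂ) : ℂ :=
  ∫ θ in Set.Ioo (0 : ℝ) 1, t * (Kc n α (t * ((1 - θ : ℝ) : ℂ)) a * Kc n α (t * (θ : ℂ)) b)

lemma Hc_real (n : ℕ) (α : ℝ) (a b : EuclideanSpace ℝ (Fin n)) {t : ℝ} (ht : 0 < t) :
    ∫ s in Set.Ioo (0 : ℝ) t, K0 n α (t - s) a * K0 n α s b = Hc n α a b (t : ℂ) := by
  unfold Hc
  rw [← integral_Ioc_eq_integral_Ioo, ← integral_Ioc_eq_integral_Ioo,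
    ← intervalIntegral.integral_of_le ht.le, ← intervalIntegral.integral_of_le zero_le_one]
  have h := intervalIntegral.smul_integral_comp_mul_left (a := 0) (b := 1)
    (fun s : ℝ => K0 n α (t - s) a * K0 n α s b) t
  rw [mul_zero, mul_one] at h
  rw [← h, intervalIntegral.integral_const_mul, Complex.real_smul]
  congr 1
  refine intervalIntegral.integral_congr fun θ _ => ?_
  simp only [K0_eq_Kc]
  congr 2
  · push_cast
    ring
  · push_cast
    rfl

lemma isOpen_sector : IsOpen {t : ℂ | ‖t‖ < 2 * t.re} :=
  isOpen_lt continuous_norm (by fun_prop)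

lemma convex_sector : Convex ℝ {t : ℂ | ‖t‖ < 2 * t.re} := by
  intro u hu v hv p q hp hq hpq
  have hu' : ‖u‖ < 2 * u.re := hu
  have hv' : ‖v‖ < 2 * v.re := hv
  show ‖p • u + q • v‖ < 2 * (p • u + q • v).re
  have h1 : ‖p • u + q • v‖ ≤ p * ‖u‖ + q * ‖v‖ := by
    refine (norm_add_le _ _).trans ?_
    rw [norm_smul, norm_smul, Real.norm_of_nonneg hp, Real.norm_of_nonneg hq]
  have h2 : (p • u + q • v).re = p * u.re + q * v.re := by simp
  rw [h2]
  refine lt_of_le_of_lt h1 ?_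
  rcases eq_or_lt_of_le hp with rfl | hp'
  · have : q = 1 := by linarith
    subst this
    linarith
  · nlinarith [mul_lt_mul_of_pos_left hu' hp', mul_le_mul_of_nonneg_left hv'.le hq]

lemma sector_re_pos {t : ℂ} (ht : ‖t‖ < 2 * t.re) : 0 < t.re := by
  have := norm_nonneg t
  linarith

lemma Hc_holo {n : ℕ} (hn : 1 ≤ n) {α : ℝ} (hα : 0 < α) {a b : EuclideanSpace ℝ (Fin n)}
    (ha : a ≠ 0) (hb : b ≠ 0) : DifferentiableOn ℂ (Hc n α a b) {t : ℂ | ‖t‖ < 2 * t.re} := by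
  obtain ⟨C, hC, hCb⟩ := Kc_bound_decay (n := n) hn hα
  unfold Hc
  refine holo_integral (fun (t : ℂ) (θ : ℝ) =>
    t * (Kc n α (t * ((1 - θ : ℝ) : ℂ)) a * Kc n α (t * (θ : ℂ)) b)) isOpen_sector ?_ ?_ ?_
  · intro t _
    refine Measurable.aestronglyMeasurable ?_
    refine Measurable.const_mul ?_ t
    refine Measurable.mul ?_ ?_
    · exact Measurable.comp (g := fun p : ℂ × EuclideanSpace ℝ (Fin n) => Kc n α p.1 p.2)
        (f := fun θ : ℝ => (t * ((1 - θ : ℝ) : ℂ), a))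
        (stronglyMeasurable_Kc n hα).measurable (by fun_prop)
    · exact Measurable.comp (g := fun p : ℂ × EuclideanSpace ℝ (Fin n) => Kc n α p.1 p.2)
        (f := fun θ : ℝ => (t * (θ : ℂ), b))
        (stronglyMeasurable_Kc n hα).measurable (by fun_prop)
  · filter_upwards [ae_restrict_mem measurableSet_Ioo] with θ hθ
    have hd : ∀ (w : EuclideanSpace ℝ (Fin n)) (c : ℝ), 0 < c →
        DifferentiableOn ℂ (fun t : ℂ => Kc n α (t * (c : ℂ)) w) {t : ℂ | ‖t‖ < 2 * t.re} := by
      intro w c hc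
      refine DifferentiableOn.comp (g := fun t => Kc n α t w) (f := fun t : ℂ => t * (c : ℂ))
        (Kc_holo hn hα w) (by fun_prop) ?_
      intro t ht
      show 0 < (t * (c : ℂ)).re
      rw [Complex.re_mul_ofReal]
      exact mul_pos (sector_re_pos ht) hc
    exact differentiableOn_id.mul ((hd a (1 - θ) (by linarith [hθ.2])).mul (hd b θ hθ.1))
  · intro t₀ ht₀
    obtain ⟨R, hR, hRU⟩ := Metric.isOpen_iff.1 isOpen_sector t₀ ht₀
    set M : ℝ := ‖t₀‖ + R with hM
    have hM0 : 0 ≤ M := by positivity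
    refine ⟨R, hR, fun _ => M * ((C * M * ‖a‖ ^ (-((n : ℝ) + 2 * α))) *
      (C * M * ‖b‖ ^ (-((n : ℝ) + 2 * α)))), integrable_const _, ?_⟩
    filter_upwards [ae_restrict_mem measurableSet_Ioo] with θ hθ t ht
    have htS : ‖t‖ < 2 * t.re := hRU ht
    have htM : ‖t‖ ≤ M := by
      have h1 : ‖t - t₀‖ < R := by simpa [dist_eq_norm] using ht
      have h2 : ‖t‖ ≤ ‖t - t₀‖ + ‖t₀‖ := by simpa using norm_add_le (t - t₀) t₀
      linarith
    have hd : ∀ (w : EuclideanSpace ℝ (Fin n)) (c : ℝ), w ≠ 0 → 0 < c → c ≤ 1 →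
        ‖Kc n α (t * (c : ℂ)) w‖ ≤ C * M * ‖w‖ ^ (-((n : ℝ) + 2 * α)) := by
      intro w c hw hc hc1
      have hn1 : ‖t * (c : ℂ)‖ = ‖t‖ * c := by
        rw [norm_mul, Complex.norm_real, Real.norm_of_nonneg hc.le]
      have hre : (t * (c : ℂ)).re = t.re * c := Complex.re_mul_ofReal _ _
      refine (hCb _ (by rw [hre]; exact mul_pos (sector_re_pos htS) hc)
        (by rw [hn1, hre]; nlinarith) w hw).trans ?_
      gcongr
      rw [hn1]
      calc ‖t‖ * c ≤ ‖t‖ * 1 := by gcongr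
        _ ≤ M := by linarith
    rw [norm_mul, norm_mul]
    gcongr
    · exact hd a (1 - θ) ha (by linarith [hθ.2]) (by linarith [hθ.1])
    · exact hd b θ hb hθ.1 hθ.2.le

lemma H_ae_time {n : ℕ} (hn : 1 ≤ n) {α : ℝ} (hα : 0 < α) {a b : EuclideanSpace ℝ (Fin n)}
    (ha : a ≠ 0) (hb : b ≠ 0) : ∀ᵐ t : ℝ ∂(volume.restrict (Set.Ioi 0)),
      ∫ s in Set.Ioo (0 : ℝ) t, K0 n α (t - s) a * K0 n α s b ≠ 0 := by
  have hS : ∀ t : ℝ, 0 < t → (t : ℂ) ∈ {t : ℂ | ‖t‖ < 2 * t.re} := by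
    intro t ht
    show ‖(t : ℂ)‖ < 2 * (t : ℂ).re
    rw [Complex.norm_real, Real.norm_of_nonneg ht.le, Complex.ofReal_re]
    linarith
  have key := holo_real_zero_null isOpen_sector convex_sector (Hc_holo hn hα ha hb) ?_ hS
  · filter_upwards [key, ae_restrict_mem measurableSet_Ioi] with t h ht
    rwa [Hc_real n α a b ht]
  · by_contra! hcon
    have h3 := ((Rc_ae_mu hn hα ha).and (Rc_ae_mu hn hα hb)).and (ae_restrict_mem measurableSet_Ioi)
    have : (ae (volume.restrict (Set.Ioi (0 : ℝ)))).NeBot := by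
      rw [ae_neBot]
      intro h
      have := congrArg (fun m => m Set.univ) h
      simp at this
    obtain ⟨ν, ⟨hνa, hνb⟩, hν0⟩ := h3.exists
    have hconv := lap_conv (f := fun t => K0 n α t a) (g := fun t => K0 n α t b) 1 ν
      (K0_lap_integrable hn hα hν0 ha) (K0_lap_integrable hn hα hν0 hb)
    have hz : ∫ t in Set.Ioi (0 : ℝ), (Real.exp (-ν * t) : ℂ) *
        ∫ s in Set.Ioo (0 : ℝ) t, K0 n α (t - s) a * 1 * K0 n α s b = 0 := by
      rw [setIntegral_congr_fun (g := fun _ => (0 : ℂ)) measurableSet_Ioi]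
      · simp
      · intro t ht
        simp only [mul_one]
        rw [Hc_real n α a b ht, hcon _ (hS t ht), mul_zero]
    rw [hz] at hconv
    have e1 : ∀ w : EuclideanSpace ℝ (Fin n),
        ∫ t in Set.Ioi (0 : ℝ), (Real.exp (-ν * t) : ℂ) * K0 n α t w = Rc n α (ν : ℂ) w := by
      intro w
      unfold Rc
      push_cast
      rfl
    rw [e1, e1, mul_one] at hconv
    exact mul_ne_zero hνa hνb hconv.symm

lemma H_ae_space {n : ℕ} (hn : 1 ≤ n) {α : ℝ} (hα : 0 < α) (x y : EuclideanSpace ℝ (Fin n)) :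
    ∀ᵐ t : ℝ ∂(volume.restrict (Set.Ioi 0)), ∀ᵐ z : EuclideanSpace ℝ (Fin n),
      ∫ s in Set.Ioo (0 : ℝ) t, K0 n α (t - s) (x - z) * K0 n α s (z - y) ≠ 0 := by
  have h1 : ∀ᵐ z : EuclideanSpace ℝ (Fin n), ∀ᵐ t : ℝ ∂(volume.restrict (Set.Ioi 0)),
      ∫ s in Set.Ioo (0 : ℝ) t, K0 n α (t - s) (x - z) * K0 n α s (z - y) ≠ 0 := by
    filter_upwards [ae_ne_pt hn x, ae_ne_pt hn y] with z hx hy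
    exact H_ae_time hn hα (sub_ne_zero.2 (Ne.symm hx)) (sub_ne_zero.2 hy)
  refine (Measure.ae_ae_comm ?_).1 h1
  have hm := (Kiter_conv_measurable hα (V := fun _ => 1) measurable_const
    (f := fun t z => K0 n α t (x - z)) ((stronglyMeasurable_K0 n hα).comp_measurable
      (g := fun q : ℝ × EuclideanSpace ℝ (Fin n) => (q.1, x - q.2)) (by fun_prop))).comp_measurable
    (g := fun q : EuclideanSpace ℝ (Fin n) × ℝ => ((q.2, y), q.1)) (by fun_prop)
  have hm2 := hm.measurable (measurableSet_singleton (0 : ℂ)).compl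
  convert hm2 using 1
  ext q
  simp

lemma H_measurable {n : ℕ} {α : ℝ} (hα : 0 < α) (x y : EuclideanSpace ℝ (Fin n)) (t : ℝ) :
    Measurable (fun z : EuclideanSpace ℝ (Fin n) =>
      ∫ s in Set.Ioo (0 : ℝ) t, K0 n α (t - s) (x - z) * K0 n α s (z - y)) := by
  have hm := (Kiter_conv_measurable hα (V := fun _ => 1) measurable_const
    (f := fun t z => K0 n α t (x - z)) ((stronglyMeasurable_K0 n hα).comp_measurable
      (g := fun q : ℝ × EuclideanSpace ℝ (Fin n) => (q.1, x - q.2)) (by fun_prop))).comp_measurable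
    (g := fun z : EuclideanSpace ℝ (Fin n) => ((t, y), z)) (by fun_prop)
  convert hm.measurable using 1
  ext z
  simp

/-- a non-measurable potential multiplied by an a.e. nonzero measurable function has zero
Bochner integral -/
lemma integral_nonmeas {n : ℕ} {V : EuclideanSpace ℝ (Fin n) → ℝ} (hV : ¬ AEMeasurable V)
    {h : EuclideanSpace ℝ (Fin n) → ℂ} (hm : Measurable h) (hne : ∀ᵐ z, h z ≠ 0) :
    ∫ z, h z * (V z : ℂ) = 0 := by
  refine integral_non_aestronglyMeasurable fun hcon => hV ?_
  have h1 : AEMeasurable (fun z => ((h z * (V z : ℂ)) / h z).re) :=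
    Complex.measurable_re.comp_aemeasurable (hcon.aemeasurable.div hm.aemeasurable)
  refine h1.congr ?_
  filter_upwards [hne] with z hz
  rw [mul_div_cancel_left₀ _ hz, Complex.ofReal_re]

lemma Kiter_one_zero {n : ℕ} (hn : 1 ≤ n) {α : ℝ} (hα : 0 < α)
    {V : EuclideanSpace ℝ (Fin n) → ℝ} (hV : ¬ AEMeasurable V) (x y : EuclideanSpace ℝ (Fin n)) :
    ∀ᵐ t : ℝ ∂(volume.restrict (Set.Ioi 0)), Kiter n α V 1 t x y = 0 := by
  filter_upwards [H_ae_space hn hα x y] with t ht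
  simp only [Kiter]
  rw [← integral_nonmeas hV (H_measurable hα x y t) ht]
  congr 1
  ext z
  rw [← integral_mul_const]
  congr 1
  ext s
  ring

lemma Riter_one_zero {n : ℕ} (hn : 1 ≤ n) {α : ℝ} (hα : 0 < α)
    {V : EuclideanSpace ℝ (Fin n) → ℝ} (hV : ¬ AEMeasurable V) {μ : ℝ} (hμ : 0 < μ)
    (x y : EuclideanSpace ℝ (Fin n)) : Riter n α V 1 μ x y = 0 := by
  simp only [Riter, R0_eq_Rc]
  have hm := measurable_Rc n hα
  have h := Rc_ae_space hn hα hμ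
  have hq1 : Measure.QuasiMeasurePreserving (fun z : EuclideanSpace ℝ (Fin n) => x - z)
      volume volume := (Measure.measurePreserving_sub_left volume x).quasiMeasurePreserving
  have hq2 : Measure.QuasiMeasurePreserving (fun z : EuclideanSpace ℝ (Fin n) => z - y)
      volume volume := (measurePreserving_sub_right volume y).quasiMeasurePreserving
  rw [← integral_nonmeas hV (h := fun z => Rc n α (μ : ℂ) (x - z) * Rc n α (μ : ℂ) (z - y)) ?_ ?_]
  · congr 1
    ext z
    ring
  · refine Measurable.mul ?_ ?_
    · exact hm.comp (f := fun z : EuclideanSpace ℝ (Fin n) => (μ, x - z)) (by fun_prop)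
    · exact hm.comp (f := fun z : EuclideanSpace ℝ (Fin n) => (μ, z - y)) (by fun_prop)
  · filter_upwards [hq1.ae h, hq2.ae h] with z h1 h2
    exact mul_ne_zero h1 h2

lemma Kiter_succ_zero {n : ℕ} (hn : 1 ≤ n) {α : ℝ} (hα : 0 < α)
    {V : EuclideanSpace ℝ (Fin n) → ℝ} (hV : ¬ AEMeasurable V) (j : ℕ) :
    ∀ x y : EuclideanSpace ℝ (Fin n),
    ∀ᵐ t : ℝ ∂(volume.restrict (Set.Ioi 0)), Kiter n α V (j + 1) t x y = 0 := by
  induction j with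
  | zero => exact fun x y => Kiter_one_zero hn hα hV x y
  | succ j ih =>
    intro x y
    refine Eventually.of_forall fun t => ?_
    rw [Kiter]
    have : ∀ z : EuclideanSpace ℝ (Fin n), ∫ s in Set.Ioo (0 : ℝ) t,
        Kiter n α V (j + 1) (t - s) x z * (V z : ℂ) * K0 n α s (z - y) = 0 := by
      intro z
      rw [← integral_zero ℝ ℂ (μ := volume.restrict (Set.Ioo (0 : ℝ) t))]
      refine integral_congr_ae ?_
      have h1 := ih x z
      rw [ae_restrict_iff' measurableSet_Ioi] at h1
      have hq : Measure.QuasiMeasurePreserving (fun s : ℝ => t - s) volume volume :=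
        (Measure.measurePreserving_sub_left volume t).quasiMeasurePreserving
      filter_upwards [ae_restrict_of_ae (hq.ae h1), ae_restrict_mem measurableSet_Ioo] with s hs hs2
      rw [hs (sub_pos.2 hs2.2), zero_mul, zero_mul]
    simp [this]

lemma Riter_succ_zero {n : ℕ} (hn : 1 ≤ n) {α : ℝ} (hα : 0 < α)
    {V : EuclideanSpace ℝ (Fin n) → ℝ} (hV : ¬ AEMeasurable V) {μ : ℝ} (hμ : 0 < μ) (j : ℕ) :
    ∀ x y : EuclideanSpace ℝ (Fin n), Riter n α V (j + 1) μ x y = 0 := by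
  induction j with
  | zero => exact fun x y => Riter_one_zero hn hα hV hμ x y
  | succ j ih =>
    intro x y
    rw [Riter]
    simp [ih]

/-- the theorem for potentials which are not a.e. measurable -/
lemma main_nonmeasurable {n : ℕ} (hn : 1 ≤ n) {α : ℝ} (hα : 0 < α)
    {V : EuclideanSpace ℝ (Fin n) → ℝ} (hVm : ¬ AEMeasurable V)
    {μ : ℝ} (hμ : 0 < μ) (j : ℕ) {x y : EuclideanSpace ℝ (Fin n)} (hxy : x ≠ y) :
    IntegrableOn (fun t : ℝ => (Real.exp (-μ * t) : ℂ) * Kiter n α V j t x y)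
          (Set.Ioi (0 : ℝ)) ∧
        ∫ t in Set.Ioi (0 : ℝ), (Real.exp (-μ * t) : ℂ) * Kiter n α V j t x y =
          Riter n α V j μ x y := by
  cases j with
  | zero => exact ⟨K0_lap_integrable hn hα hμ (sub_ne_zero.2 hxy), rfl⟩
  | succ j =>
    have h : (fun t : ℝ => (Real.exp (-μ * t) : ℂ) * Kiter n α V (j + 1) t x y)
        =ᵐ[volume.restrict (Set.Ioi 0)] fun _ => (0 : ℂ) := by
      filter_upwards [Kiter_succ_zero hn hα hVm j x y] with t ht
      rw [ht, mul_zero]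
    refine ⟨(integrable_zero _ _ _).congr h.symm, ?_⟩
    rw [integral_congr_ae h, Riter_succ_zero hn hα hVm hμ j x y]
    simp

/-- for non-integer `α > 0` and `V ∈ K_{2α}(ℝⁿ)`, for every `j ≥ 0`, `μ > 0` and
`x ≠ y`, the Laplace transform of the `j`-th Duhamel iterate is absolutely convergent and equals
the `j`-th iterated resolvent kernel: `∫₀^∞ e^{-μ t} K_j(t,x,y) dt = R_j(μ,x,y)`. -/
theorem laplace_transform_duhamel_eq_resolvent (n : ℕ) (hn : 1 ≤ n) (α : ℝ) (hα : 0 < α)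
    (hαnotint : ∀ k : ℕ, α ≠ k) (V : EuclideanSpace ℝ (Fin n) → ℝ) (hV : katoClass n α V) :
    ∀ j : ℕ, ∀ μ : ℝ, 0 < μ → ∀ x y : EuclideanSpace ℝ (Fin n), x ≠ y →
      IntegrableOn (fun t : ℝ => (Real.exp (-μ * t) : ℂ) * Kiter n α V j t x y)
          (Set.Ioi (0 : ℝ)) ∧
        ∫ t in Set.Ioi (0 : ℝ), (Real.exp (-μ * t) : ℂ) * Kiter n α V j t x y =
          Riter n α V j μ x y := by
  intro j μ hμ x y hxy
  by_cases hVm : AEMeasurable V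
  · exact main_aemeasurable hn hα hVm hV hμ j hxy
  · exact main_nonmeasurable hn hα hVm hμ j hxy
end
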